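/- There exist a finite alphabet α, a state B ∈ α, and a cellular automaton Φ : α^ℤ → α^ℤ with quiescent state B such that Φ is not nilpotent, yet for every i ∈ ℤ and every integer k ≥ 1, the cellular automaton σ^i ∘ Φ^k : α^ℤ → α^ℤ is uniquely ergodic. -/

import Mathlib

open MeasureTheory

/-!
The automaton acts on particles which carry a little memory and move at speed at most one. A *block*
of three particles, two controllers around a core, occupies five cells and simulates one particle of
the same automaton: one step takes `43` time steps, and a move of the simulated particle displaces
the block by five cells. A particle whose surroundings do not fit into such a block dies.

Hence in a space-time diagram which extends infinitely far into the past, every particle has always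
belonged to a block, and the particles simulated by the blocks of a common offset form again a
diagram of this kind. Iterating, each worldline has an *address* of any given length `n`, the list
of the successive offsets. Worldlines of different addresses cannot be interleaved, and chains of
touching worldlines of a common address, which cannot be crossed, keep different addresses apart by
distances which grow with `n`. As a particle moves by about `5 ^ n` cells in `43 ^ n` steps, a
stretch of any given line meets only few addresses. Each address admits few points of the line,
because at every level a block leaves part of its space-time cell vacant. So particles have density
zero along every line. Every invariant measure of `σ ^ i ∘ Φ ^ k` is carried by points with an
infinite past, and is therefore the Dirac mass at the blank configuration.

Forwards, replacing each particle of `X` by a block yields a configuration which takes `43` steps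
to simulate one step of `X`, as long as no particle of `X` dies or collides. Starting from one
particle that survives a single step, this gives configurations which survive `43 ^ n` steps.
-/

namespace ParticleCA

/-! ### Unique ergodicity from sparse space-time diagrams -/

section UniqueErgodicity

variable {X : Type*}

/-- Full orbits of `Φ`, indexed by all integer times. -/
def IsFullOrbit (Φ : X → X) (ω : ℤ → X) : Prop := ∀ t, ω (t + 1) = Φ (ω t)

/-- The points having preimages of all orders; on a compact Hausdorff space this is the limit set
of `Φ`. -/
def eternalSet (Φ : X → X) : Set X := ⋂ n : ℕ, Set.range Φ^[n]

/-- Unique ergodicity: a single invariant probability measure. -/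
def UniquelyErgodic [MeasurableSpace X] (T : X → X) : Prop :=
  ∃! μ : Measure X, IsProbabilityMeasure μ ∧ MeasurePreserving T μ μ

section Topology

variable [TopologicalSpace X] [CompactSpace X] [T2Space X] {Φ : X → X}

lemma isClosed_range_iterate (hΦ : Continuous Φ) (n : ℕ) : IsClosed (Set.range Φ^[n]) :=
  (isCompact_range (hΦ.iterate n)).isClosed

lemma surjOn_eternalSet (hΦ : Continuous Φ) :
    Set.SurjOn Φ (eternalSet Φ) (eternalSet Φ) := by
  intro x hx
  have hclosed (n : ℕ) : IsClosed (Φ ⁻¹' {x} ∩ Set.range Φ^[n]) :=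
    (isClosed_singleton.preimage hΦ).inter (isClosed_range_iterate hΦ n)
  have hnested (n : ℕ) :
      Φ ⁻¹' {x} ∩ Set.range Φ^[n + 1] ⊆ Φ ⁻¹' {x} ∩ Set.range Φ^[n] := by
    rintro y ⟨hy, z, rfl⟩
    exact ⟨hy, Φ z, (Function.iterate_succ_apply Φ n z).symm⟩
  have hnonempty (n : ℕ) : (Φ ⁻¹' {x} ∩ Set.range Φ^[n]).Nonempty := by
    obtain ⟨z, rfl⟩ := Set.mem_iInter.1 hx (n + 1)
    exact ⟨Φ^[n] z, (Function.iterate_succ_apply' Φ n z).symm, z, rfl⟩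
  obtain ⟨y, hy⟩ := IsCompact.nonempty_iInter_of_sequence_nonempty_isCompact_isClosed
    _ hnested hnonempty (hclosed 0).isCompact hclosed
  rw [Set.mem_iInter] at hy
  exact ⟨y, Set.mem_iInter.2 fun n => (hy n).2, (hy 0).1⟩

lemma exists_isFullOrbit (hΦ : Continuous Φ) {x : X} (hx : x ∈ eternalSet Φ) :
    ∃ ω, IsFullOrbit Φ ω ∧ ∀ n : ℕ, ω n = Φ^[n] x := by
  choose! g hg_mem hg using surjOn_eternalSet hΦ
  have hg_iter (n : ℕ) : g^[n] x ∈ eternalSet Φ := Set.MapsTo.iterate hg_mem n hx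
  refine ⟨Int.rec (fun n => Φ^[n] x) (fun n => g^[n + 1] x), ?_, fun _ => rfl⟩
  rintro (n | _ | n)
  · exact Function.iterate_succ_apply' Φ n x
  · exact (hg hx).symm
  · change g^[n + 1] x = Φ (g^[n + 1 + 1] x)
    rw [Function.iterate_succ_apply' g (n + 1), hg (hg_iter (n + 1))]

lemma ae_mem_eternalSet [MeasurableSpace X] [OpensMeasurableSpace X] {μ : Measure X}
    [IsProbabilityMeasure μ] (hcont : Continuous Φ) (hΦ : MeasurePreserving Φ μ μ) :
    ∀ᵐ x ∂μ, x ∈ eternalSet Φ := by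
  simp only [eternalSet, Set.mem_iInter, ae_all_iff]
  intro n
  have hmeas := (isClosed_range_iterate hcont n).measurableSet
  refine (prob_compl_eq_zero_iff hmeas).2 ?_
  rw [← (hΦ.iterate n).measure_preimage hmeas.nullMeasurableSet, Set.preimage_range, measure_univ]

end Topology

section Measure

open Filter Topology
open scoped ENNReal

variable [MeasurableSpace X] {T : X → X} {μ : Measure X} [IsProbabilityMeasure μ]

open Classical in
lemma mul_measure_le_of_count_le (hT : MeasurePreserving T μ μ) {S : Set X}
    (hS : MeasurableSet S) {N m : ℕ} (h : ∀ᵐ x ∂μ, Nat.count (fun n => T^[n] x ∈ S) N ≤ m) :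
    (N : ℝ≥0∞) * μ S ≤ m := by
  calc (N : ℝ≥0∞) * μ S
      = ∑ n ∈ Finset.range N, μ (T^[n] ⁻¹' S) := by
        simp [(hT.iterate _).measure_preimage hS.nullMeasurableSet]
    _ = ∑ n ∈ Finset.range N, ∫⁻ x, (T^[n] ⁻¹' S).indicator 1 x ∂μ :=
        Finset.sum_congr rfl fun n _ =>
          (lintegral_indicator_one ((hT.iterate n).measurable hS)).symm
    _ = ∫⁻ x, ∑ n ∈ Finset.range N, (T^[n] ⁻¹' S).indicator 1 x ∂μ :=
        (lintegral_finsetSum _ fun n _ =>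
          measurable_one.indicator ((hT.iterate n).measurable hS)).symm
    _ ≤ ∫⁻ _, m ∂μ := by
        refine lintegral_mono_ae (h.mono fun x hx => ?_)
        refine le_of_eq_of_le ?_ (Nat.cast_le.2 hx)
        rw [Nat.count_eq_card_filter_range, Finset.card_filter, Nat.cast_sum]
        exact Finset.sum_congr rfl fun n _ => by simp [Set.indicator_apply]
    _ = m := by simp

open Classical in
lemma measure_eq_zero_of_count_le (hT : MeasurePreserving T μ μ) {S : Set X}
    (hS : MeasurableSet S) {N m : ℕ → ℕ} (hN : ∀ r, N r ≠ 0)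
    (hlim : Tendsto (fun r => (m r : ℝ≥0∞) / N r) atTop (𝓝 0))
    (h : ∀ r, ∀ᵐ x ∂μ, Nat.count (fun n => T^[n] x ∈ S) (N r) ≤ m r) : μ S = 0 := by
  refine le_antisymm (ge_of_tendsto' hlim fun r => ?_) zero_le
  rw [ENNReal.le_div_iff_mul_le (by simp [hN]) (by simp), mul_comm]
  exact mul_measure_le_of_count_le hT hS (h r)

lemma eq_dirac_of_ae_eq {b : X} (h : ∀ᵐ x ∂μ, x = b) : μ = Measure.dirac b := by
  have hid : (id : X → X) =ᵐ[μ] fun _ => b := h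
  simpa using Measure.map_congr hid

end Measure

lemma uniquelyErgodic_of_count_le {ι : Type*} [Countable ι] [TopologicalSpace X] [CompactSpace X]
    [T2Space X] [MeasurableSpace X] [BorelSpace X] {T : X → X} (hT : Continuous T) {b : X}
    (hb : T b = b) {U : ι → Set X} (hU : ∀ j, MeasurableSet (U j)) (hcover : {b}ᶜ ⊆ ⋃ j, U j)
    {N m : ℕ → ℕ} (hN : ∀ r, N r ≠ 0)
    (hlim : Filter.Tendsto (fun r => (m r : ENNReal) / N r) Filter.atTop (nhds 0))
    (h : ∀ x ∈ eternalSet T, ∀ j r, open Classical in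
      Nat.count (fun n => T^[n] x ∈ U j) (N r) ≤ m r) :
    UniquelyErgodic T := by
  refine ⟨Measure.dirac b, ⟨inferInstance, hT.measurable, ?_⟩, ?_⟩
  · rw [Measure.map_dirac' hT.measurable, hb]
  rintro μ ⟨_, hμ⟩
  have hnull (j : ι) : μ (U j) = 0 :=
    measure_eq_zero_of_count_le hμ (hU j) hN hlim fun r =>
      (ae_mem_eternalSet hT hμ).mono fun x hx => h x hx j r
  exact eq_dirac_of_ae_eq (measure_mono_null hcover (measure_iUnion_null hnull))

end UniqueErgodicity

section Shift

variable {A : Type*}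

/-- The shift `σ^i` on configurations. -/
def shift (i : ℤ) (x : ℤ → A) : ℤ → A := fun j => x (j + i)

lemma shift_comp_shift (i j : ℤ) : (shift i ∘ shift j : (ℤ → A) → ℤ → A) = shift (i + j) := by
  funext x p
  simp [shift, add_assoc]

lemma iterate_shift (i : ℤ) (n : ℕ) : (shift i : (ℤ → A) → ℤ → A)^[n] = shift (i * n) := by
  induction n with
  | zero => funext x p; simp [shift]
  | succ n ih =>
    rw [Function.iterate_succ', ih, shift_comp_shift]
    push_cast
    congr 1
    ring

lemma commute_shift {Φ : (ℤ → A) → ℤ → A} (h : Function.Commute Φ (shift 1)) (i : ℤ) :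
    Function.Commute Φ (shift i) := by
  have hinv (i : ℤ) : Function.RightInverse (shift (A := A) (-i)) (shift i) := fun x => by
    funext p; simp [shift]
  have hnat (n : ℕ) : Function.Commute Φ (shift (n : ℤ)) := by
    simpa [iterate_shift] using h.iterate_right n
  obtain ⟨n, rfl | rfl⟩ := i.eq_nat_or_neg
  · exact hnat n
  · exact Function.Semiconj.inverses_right (hnat n) (hinv n) fun x => by simpa using hinv (-n) x

lemma continuous_shift [TopologicalSpace A] (i : ℤ) :
    Continuous (shift i : (ℤ → A) → ℤ → A) :=
  continuous_pi fun j => continuous_apply (j + i)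

lemma iterate_shift_comp_iterate {Φ : (ℤ → A) → ℤ → A} (h : Function.Commute Φ (shift 1))
    (i : ℤ) (k n : ℕ) : (shift i ∘ Φ^[k])^[n] = shift (i * n) ∘ Φ^[k * n] := by
  rw [((commute_shift h i).symm.iterate_right k).comp_iterate, iterate_shift, Function.iterate_mul]

lemma eternalSet_shift_comp_iterate_subset {Φ : (ℤ → A) → ℤ → A}
    (h : Function.Commute Φ (shift 1)) (i : ℤ) {k : ℕ} (hk : k ≠ 0) :
    eternalSet (shift i ∘ Φ^[k]) ⊆ eternalSet Φ := by
  refine Set.iInter_mono fun n => ?_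
  have hkn : k * n = n + (k * n - n) :=
    (Nat.add_sub_cancel' (Nat.le_mul_of_pos_left n (Nat.pos_of_ne_zero hk))).symm
  rw [iterate_shift_comp_iterate h, ← ((commute_shift h (i * n)).iterate_left (k * n)).comp_eq,
    hkn, Function.iterate_add, Function.comp_assoc]
  exact Set.range_comp_subset_range _ _

theorem uniquelyErgodic_shift_comp_iterate [Finite A] [TopologicalSpace A] [DiscreteTopology A]
    [MeasurableSpace A] [BorelSpace A] {Φ : (ℤ → A) → ℤ → A} (hΦ : Continuous Φ)
    (hshift : Function.Commute Φ (shift 1)) {b : A} (hb : Φ (fun _ => b) = fun _ => b)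
    (i : ℤ) {k : ℕ} (hk : k ≠ 0) {N m : ℕ → ℕ} (hN : ∀ r, N r ≠ 0)
    (hlim : Filter.Tendsto (fun r => (m r : ENNReal) / N r) Filter.atTop (nhds 0))
    (hsparse : ∀ ω, IsFullOrbit Φ ω → ∀ p r, open Classical in
      Nat.count (fun n => ω (k * n) (p + i * n) ≠ b) (N r) ≤ m r) :
    UniquelyErgodic (shift i ∘ Φ^[k]) := by
  have hmeas (p : ℤ) : MeasurableSet {x : ℤ → A | x p ≠ b} :=
    (IsOpen.preimage (f := fun x : ℤ → A => x p) (continuous_apply p)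
      (isOpen_discrete {a | a ≠ b})).measurableSet
  refine uniquelyErgodic_of_count_le ((continuous_shift i).comp (hΦ.iterate k))
    (b := fun _ => b) ?_ hmeas ?_ hN hlim fun x hx p r => ?_
  · rw [Function.comp_apply, Function.iterate_fixed hb]
    rfl
  · intro x hx
    exact Set.mem_iUnion.2 (Function.ne_iff.1 hx)
  · obtain ⟨ω, hω, hωx⟩ :=
      exists_isFullOrbit hΦ (eternalSet_shift_comp_iterate_subset hshift i hk hx)
    convert hsparse ω hω p r using 3 with n
    have hdiag : (shift i ∘ Φ^[k])^[n] x p = ω (k * n) (p + i * n) := by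
      rw [iterate_shift_comp_iterate hshift, Function.comp_apply, ← hωx, Nat.cast_mul]
      rfl
    exact hdiag ▸ Iff.rfl

end Shift

/-! ### The automaton -/

/-- Velocities of particles. -/
inductive Velocity
  | left
  | stay
  | right
  deriving DecidableEq

instance : Fintype Velocity := ⟨{.left, .stay, .right}, fun v => by cases v <;> decide⟩

/-- The displacement of a particle in one time step. -/
def Velocity.toInt : Velocity → ℤ
  | left => -1
  | stay => 0
  | right => 1

/-- The visible part of a particle: its role in its block (`0` and `2` are the left and right
controllers, `1` is the core), the phase of the period `43` computation, and its last velocity. -/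
structure Label where
  role : Fin 3
  phase : Fin 43
  vel : Velocity
  deriving DecidableEq, Fintype

/-- Register contents. `nil` is what is read from an empty cell, `skip` tells the reader to leave
its registers alone, and `code j n` holds the label `j` of a simulated particle together with a
countdown `n` to the operation that particle performs. -/
inductive Datum
  | skip
  | nil
  | vel (v : Velocity)
  | code (j : Label) (n : Fin 14)
  deriving DecidableEq, Fintype

/-- The registers of a particle. Neighbours read `port`; in controllers, `code` holds the label of
the simulated particle; `buffer` is private. -/
structure Registers where
  port : Datum
  code : Datum
  buffer : Datum
  deriving Fintype

/-- States of nonblank cells. -/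
@[ext] structure Particle where
  label : Label
  regs : Registers
  deriving Fintype

instance : Inhabited Particle := ⟨⟨⟨0, 0, .stay⟩, ⟨.skip, .skip, .skip⟩⟩⟩

/-- Configurations, with `none` as the blank state. -/
abbrev Config := ℤ → Option Particle

/-- Space-time diagrams, with time as the first argument. -/
abbrev History := ℤ → Config

/-- Register operations; see `Op.apply`. -/
inductive Op
  | load | publish | showCode | checkLeft | checkRight | initLeft | initRight | countdown
  | clearPort | receive | advance | compare | resetShowCode | idle
  deriving DecidableEq

/-- Where the particle of role `a` sits at phase `τ` among the five cells of its block. -/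
def slot (a : Fin 3) (τ : ℕ) : ℤ :=
  if a = 0 then (if 4 ≤ τ ∧ τ ≤ 10 then 0 else 1)
  else if a = 1 then (if τ = 8 ∨ τ = 9 then 1 else 2)
  else (if 3 ≤ τ ∧ τ ≤ 11 then 4 else 3)

/-- The velocity of the particle of role `a` at phase `τ`, outside of the phases in which the whole
block moves. -/
def schedule (a : Fin 3) (τ : ℕ) : Velocity :=
  if a = 0 then (if τ = 3 then .left else if τ = 10 then .right else .stay)
  else if a = 1 then (if τ = 7 then .left else if τ = 9 then .right else .stay)
  else (if τ = 2 then .right else if τ = 11 then .left else .stay)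

/-- Phases in which a block may move to the right. -/
abbrev RightPhase (τ : ℕ) : Prop := 31 ≤ τ ∧ τ ≤ 35

/-- Phases in which a block may move to the left. -/
abbrev LeftPhase (τ : ℕ) : Prop := 36 ≤ τ ∧ τ ≤ 40

/-- What a particle accepts in a neighbouring cell: nothing, a particle of given role and equal
phase, or either of these. -/
inductive Expectation
  | blank
  | req (a : Fin 3)
  | opt (a : Fin 3)
  deriving DecidableEq

/-- What the particle of role `a` accepts to its left at phase `τ`. -/
def expectLeft (a : Fin 3) (τ : ℕ) : Expectation :=
  if a = 0 then (if 4 ≤ τ ∧ τ ≤ 10 then .opt 2 else .blank)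
  else if a = 1 then (if 4 ≤ τ ∧ τ ≤ 7 ∨ τ = 10 then .blank else .req 0)
  else (if 3 ≤ τ ∧ τ ≤ 11 then .blank else .req 1)

/-- What the particle of role `a` accepts to its right at phase `τ`. -/
def expectRight (a : Fin 3) (τ : ℕ) : Expectation :=
  if a = 0 then (if 4 ≤ τ ∧ τ ≤ 7 ∨ τ = 10 then .blank else .req 1)
  else if a = 1 then (if 3 ≤ τ ∧ τ ≤ 11 then .blank else .req 2)
  else (if 4 ≤ τ ∧ τ ≤ 10 then .opt 0 else .blank)

/-- Whether the observed label `n` meets the expectation `e` of a particle at phase `τ`. -/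
def Expectation.check (e : Expectation) (τ : Fin 43) (n : Option Label) : Bool :=
  match e, n with
  | .blank, none => true
  | .blank, some _ => false
  | .req _, none => false
  | .req a, some l => l.role = a ∧ l.phase = τ
  | .opt _, none => true
  | .opt a, some l => l.role = a ∧ l.phase = τ

/-- Whether a particle labelled `j` accepts a left neighbour labelled `n`. -/
def okLeft (j : Label) (n : Option Label) : Bool :=
  (expectLeft j.role j.phase).check j.phase n

/-- Whether a particle labelled `j` accepts a right neighbour labelled `n`. -/
def okRight (j : Label) (n : Option Label) : Bool :=
  (expectRight j.role j.phase).check j.phase n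

/-- The operation that the core tries at phase `13 + n`, while the left controller's countdown has
advanced by `n` steps. -/
def Op.ofIndex (n : ℕ) : Op :=
  match n with
  | 0 => load | 1 => publish | 2 => showCode | 3 => checkLeft | 4 => checkRight | 5 => initLeft
  | 6 => initRight | 7 => countdown | 8 => clearPort | 9 => receive | 10 => advance
  | 11 => compare | 12 => resetShowCode | _ => idle

/-- The countdown after which an operation is executed; `idle` is never reached. -/
def Op.index : Op → Fin 14
  | load => 0 | publish => 1 | showCode => 2 | checkLeft => 3 | checkRight => 4 | initLeft => 5
  | initRight => 6 | countdown => 7 | clearPort => 8 | receive => 9 | advance => 10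
  | compare => 11 | resetShowCode => 12 | idle => 13

/-- The operation of the particle of role `a` at phase `τ`. -/
def opAt (a : Fin 3) (τ : ℕ) : Op :=
  if a = 1 then
    (if 13 ≤ τ ∧ τ ≤ 25 then Op.ofIndex (τ - 13) else if τ = 28 ∨ τ = 42 then .compare else .idle)
  else if τ = 0 ∨ τ = 4 then .load
  else if τ = 1 then .publish
  else if τ = 5 then .showCode
  else if τ = 25 then .clearPort
  else if τ = 26 then .receive
  else if τ = 27 then .advance
  else if τ = 41 then .resetShowCode
  else if τ = 6 then (if a = 0 then .checkLeft else .checkRight)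
  else if τ = 11 then (if a = 0 then .initLeft else .initRight)
  else if a = 0 ∧ 12 ≤ τ ∧ τ ≤ 24 then .countdown
  else .idle

/-- Whether the particle of role `a` reads its left neighbour at phase `τ`. -/
def looksLeft (a : Fin 3) (τ : ℕ) : Bool :=
  if a = 0 then τ = 4 ∨ τ = 6
  else if a = 1 then 13 ≤ τ ∧ τ ≤ 25 ∨ τ = 28 ∨ τ = 42 ∨ 31 ≤ τ ∧ τ ≤ 40
  else τ = 0 ∨ τ = 26

/-- Whether the particle of role `a` reads its right neighbour at phase `τ`. -/
def looksRight (a : Fin 3) (τ : ℕ) : Bool :=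
  if a = 0 then τ = 0 ∨ τ = 26
  else if a = 1 then 13 ≤ τ ∧ τ ≤ 25 ∨ τ = 28 ∨ τ = 42 ∨ 31 ≤ τ ∧ τ ≤ 40
  else τ = 4 ∨ τ = 6

/-- The first datum unless it is `nil`. -/
def Datum.orElse (x y : Datum) : Datum := if x = .nil then y else x

/-- The next velocity of a particle labelled `j` with port contents `o` which reads `v`. When the
block may move, controllers follow their own port and the core follows what it reads. -/
def nextVel (j : Label) (o v : Datum) : Velocity :=
  if RightPhase j.phase then
    (if (if j.role = 1 then v else o) = .vel .right then .right else .stay)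
  else if LeftPhase j.phase then
    (if (if j.role = 1 then v else o) = .vel .left then .left else .stay)
  else schedule j.role j.phase

/-- The label after a step with velocity `w`. -/
def Label.next (j : Label) (w : Velocity) : Label := ⟨j.role, j.phase + 1, w⟩

/-- The effect of an operation on the registers `g`, given the data `uL` and `uR` read from the left
and the right; `none` destroys the particle. -/
def Op.apply (o : Op) (g : Registers) (uL uR : Datum) : Option Registers :=
  match o with
  | load => some ⟨g.port, g.code, Datum.orElse uL uR⟩
  | publish => some ⟨g.buffer, g.code, .skip⟩
  | clearPort => some ⟨.skip, g.code, g.buffer⟩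
  | receive => some ⟨Datum.orElse uL uR, g.code, g.buffer⟩
  | compare => if uL = uR then some g else none
  | idle => some g
  | showCode => match g.code with
    | .code j n => if n = 0 then some ⟨.code j 0, .code j 0, g.buffer⟩ else none
    | _ => none
  | resetShowCode => match g.code with
    | .code j n => if n = 0 then some ⟨.code j 0, .code j 0, .skip⟩ else none
    | _ => none
  | checkLeft => match g.code with
    | .code j n => match uL with
      | .nil => if okLeft j none then some ⟨g.port, .code j n, .nil⟩ else none
      | .code j' _ => if okLeft j (some j') then some ⟨g.port, .code j n, g.buffer⟩ else none
      | _ => none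
    | _ => none
  | checkRight => match g.code with
    | .code j n => match uR with
      | .nil => if okRight j none then some ⟨g.port, .code j n, .nil⟩ else none
      | .code j' _ => if okRight j (some j') then some ⟨g.port, .code j n, g.buffer⟩ else none
      | _ => none
    | _ => none
  | initLeft => match g.code with
    | .code j _ => some ⟨.skip, .code j (opAt j.role j.phase).index,
        if looksLeft j.role j.phase then g.buffer else .nil⟩
    | _ => none
  | initRight => match g.code with
    | .code j n => some ⟨if looksRight j.role j.phase then g.buffer else .nil, .code j n,
        if looksRight j.role j.phase then g.buffer else .nil⟩
    | _ => none
  | countdown => match g.code with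
    | .code j n => some ⟨if n = 0 then g.buffer else .skip, .code j (n - 1), g.buffer⟩
    | _ => none
  | advance => match g.code with
    | .code j _ => some ⟨.vel (nextVel j g.port g.buffer),
        .code (j.next (nextVel j g.port g.buffer)) 0, .skip⟩
    | _ => none

/-- An operation is skipped when its left input is `skip`; this is how a left controller selects
the one operation that its core executes. -/
def Op.exec (o : Op) (g : Registers) (uL uR : Datum) : Option Registers :=
  if uL = .skip then some g else o.apply g uL uR

/-- What is read from a neighbouring cell, `b` telling whether the cell is looked at. -/
def read (b : Bool) (l : Option Particle) : Datum :=
  if b then l.elim .nil fun s => s.regs.port else .nil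

/-- What the particle `s` reads from its left neighbour `l`. -/
def Particle.readLeft (s : Particle) (l : Option Particle) : Datum :=
  read (looksLeft s.label.role s.label.phase) l

/-- What the particle `s` reads from its right neighbour `r`. -/
def Particle.readRight (s : Particle) (r : Option Particle) : Datum :=
  read (looksRight s.label.role s.label.phase) r

/-- The next state of a particle `s` with neighbours `l` and `r`; the velocity in the new label is
the displacement of `s` during this step. -/
def localStep (l : Option Particle) (s : Particle) (r : Option Particle) : Option Particle :=
  if okLeft s.label (l.map Particle.label) ∧ okRight s.label (r.map Particle.label) ∧
      nextVel s.label s.regs.port (s.readLeft l) = nextVel s.label s.regs.port (s.readRight r) then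
    ((opAt s.label.role s.label.phase).exec s.regs (s.readLeft l) (s.readRight r)).map
      fun g => ⟨s.label.next (nextVel s.label s.regs.port (s.readLeft l)), g⟩
  else none

/-- The next state of the particle at `q`. -/
def stepAt (x : Config) (q : ℤ) : Option Particle :=
  (x q).bind fun s => localStep (x (q - 1)) s (x (q + 1))

/-- The next state of the particle at `q`, provided that it moves with velocity `v`. -/
def arrival (x : Config) (q : ℤ) (v : Velocity) : Option Particle :=
  (stepAt x q).filter fun s => s.label.vel = v

/-- The cellular automaton on the alphabet `Option Particle`. When several particles arrive in the
same cell, one of them survives. -/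
def particleCA (x : Config) : Config := fun p =>
  ((arrival x (p - 1) .right).or (arrival x p .stay)).or (arrival x (p + 1) .left)

/-- Whether a particle labelled `j` can have `w` as its next velocity. -/
def Label.Allows (j : Label) (w : Velocity) : Prop :=
  if RightPhase j.phase then w = .stay ∨ w = .right
  else if LeftPhase j.phase then w = .stay ∨ w = .left
  else w = schedule j.role j.phase

lemma allows_nextVel (j : Label) (o v : Datum) : j.Allows (nextVel j o v) := by
  unfold Label.Allows nextVel
  split_ifs <;> simp

/-- The particle at `q` at time `t` is still alive at time `t + 1`. -/
def Survives (ω : History) (t q : ℤ) : Prop :=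
  ∃ s, ω (t + 1) (q + s.label.vel.toInt) = some s

/-- What may be observed in the cell `q` at time `t`: its contents, or the blank state if the
contents disappear. -/
def Observes (ω : History) (t q : ℤ) (l : Option Particle) : Prop :=
  l = ω t q ∨ (l = none ∧ ¬ Survives ω t q)

/-- The particle `s` at position `q` and time `t` can become `s'`. -/
def Steps (ω : History) (t q : ℤ) (s s' : Particle) : Prop :=
  ∃ l r, Observes ω t (q - 1) l ∧ Observes ω t (q + 1) r ∧ localStep l s r = some s'

/-- Every particle has a predecessor. Unlike being an orbit of `particleCA`, this property passes
from a space-time diagram to the one it simulates: a block that is being destroyed may already look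
like an empty cell to its neighbours. -/
def IsHistory (ω : History) : Prop :=
  ∀ t p s', ω (t + 1) p = some s' →
    ∃ s, ω t (p - s'.label.vel.toInt) = some s ∧ Steps ω t (p - s'.label.vel.toInt) s s'

lemma arrival_eq_some {x : Config} {q : ℤ} {v : Velocity} {s' : Particle} :
    arrival x q v = some s' ↔ s'.label.vel = v ∧
      ∃ s, x q = some s ∧ localStep (x (q - 1)) s (x (q + 1)) = some s' := by
  simp [arrival, stepAt, Option.filter_eq_some_iff, Option.bind_eq_some_iff, and_comm]

lemma isHistory_of_isFullOrbit {ω : History} (h : IsFullOrbit particleCA ω) : IsHistory ω := by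
  have of_arrival {t p q v s'} (hs : arrival (ω t) q v = some s') (hq : p - v.toInt = q) :
      ∃ s, ω t (p - s'.label.vel.toInt) = some s ∧ Steps ω t (p - s'.label.vel.toInt) s s' := by
    obtain ⟨rfl, s, hs, hstep⟩ := arrival_eq_some.1 hs
    subst hq
    exact ⟨s, hs, _, _, Or.inl rfl, Or.inl rfl, hstep⟩
  intro t p s' hs
  rw [h t, particleCA, Option.or_eq_some_iff, Option.or_eq_some_iff] at hs
  rcases hs with (hs | ⟨-, hs⟩) | ⟨-, hs⟩
  · exact of_arrival hs rfl
  · exact of_arrival hs (sub_zero p)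
  · exact of_arrival hs (sub_neg_eq_add p 1)

/-! ### Worldlines and their steps -/

section Worldlines

variable {ω : History} {f g : ℤ → ℤ} {T T₁ t₀ t₁ : ℤ} {a a' : Fin 3}

lemma localStep_eq_some {l r : Option Particle} {s s' : Particle} :
    localStep l s r = some s' ↔
      okLeft s.label (l.map Particle.label) ∧ okRight s.label (r.map Particle.label) ∧
      nextVel s.label s.regs.port (s.readLeft l) = nextVel s.label s.regs.port (s.readRight r) ∧
      (opAt s.label.role s.label.phase).exec s.regs (s.readLeft l) (s.readRight r) = some s'.regs ∧
      s'.label = s.label.next (nextVel s.label s.regs.port (s.readLeft l)) := by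
  unfold localStep
  split_ifs with h
  · obtain ⟨j, e⟩ := s'
    simp only [Option.map_eq_some_iff, Particle.mk.injEq, h, true_and]
    grind
  · simp only [false_iff]
    tauto

lemma Label.phase_next (j : Label) (w : Velocity) :
    ((j.next w).phase : ℕ) = ((j.phase : ℕ) + 1) % 43 := by
  simp [Label.next, Fin.val_add]

lemma Steps.role_eq {t q : ℤ} {s s' : Particle} (h : Steps ω t q s s') :
    s'.label.role = s.label.role := by
  obtain ⟨l, r, -, -, h⟩ := h
  rw [(localStep_eq_some.1 h).2.2.2.2, Label.next]

lemma Steps.phase_eq {t q : ℤ} {s s' : Particle} (h : Steps ω t q s s') :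
    (s'.label.phase : ℕ) = ((s.label.phase : ℕ) + 1) % 43 := by
  obtain ⟨l, r, -, -, h⟩ := h
  rw [(localStep_eq_some.1 h).2.2.2.2, Label.phase_next]

/-- The state of the particle on the path `f` at time `t`. -/
def stateAlong (ω : History) (f : ℤ → ℤ) (t : ℤ) : Particle := (ω t (f t)).getD default

/-- The path `f` follows a particle of role `a` up to time `T`; its phase is zero at time `t₀`,
which may be later than `T`. -/
structure Worldline (ω : History) (f : ℤ → ℤ) (T t₀ : ℤ) (a : Fin 3) : Prop where
  alive : ∀ t ≤ T, ω t (f t) = some (stateAlong ω f t)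
  role_eq : ∀ t ≤ T, (stateAlong ω f t).label.role = a
  phase_eq : ∀ t ≤ T, ((stateAlong ω f t).label.phase : ℤ) = (t - t₀) % 43
  steps : ∀ t, t + 1 ≤ T → Steps ω t (f t) (stateAlong ω f t) (stateAlong ω f (t + 1))
  pos : ∀ t, t + 1 ≤ T → f (t + 1) = f t + (stateAlong ω f (t + 1)).label.vel.toInt

namespace Worldline

lemma mono (h : Worldline ω f T t₀ a) (hT : T₁ ≤ T) : Worldline ω f T₁ t₀ a where
  alive t ht := h.alive t (ht.trans hT)
  role_eq t ht := h.role_eq t (ht.trans hT)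
  phase_eq t ht := h.phase_eq t (ht.trans hT)
  steps t ht := h.steps t (ht.trans hT)
  pos t ht := h.pos t (ht.trans hT)

lemma of_phase_zero (h : Worldline ω f T t₀ a) (ht : (t₁ - t₀) % 43 = 0) :
    Worldline ω f T t₁ a where
  alive := h.alive
  role_eq := h.role_eq
  phase_eq t ht' := by
    have := h.phase_eq t ht'
    omega
  steps := h.steps
  pos := h.pos

end Worldline

/-- The position at time `T - n` of the ancestor of the particle at `p` at time `T`. -/
def ancestorPos (ω : History) (T p : ℤ) : ℕ → ℤ
  | 0 => p
  | n + 1 => ancestorPos ω T p n -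
      ((ω (T - n) (ancestorPos ω T p n)).getD default).label.vel.toInt

lemma exists_worldline (h : IsHistory ω) {p : ℤ} {s : Particle} (hs : ω T p = some s) :
    ∃ f, Worldline ω f T (T - s.label.phase) s.label.role ∧ f T = p ∧ stateAlong ω f T = s := by
  set f : ℤ → ℤ := fun t => ancestorPos ω T p (T - t).toNat with hf
  have hfT : f T = p := by simp [hf, ancestorPos]
  have hsT : stateAlong ω f T = s := by simp [stateAlong, hfT, hs]
  have hpos (t : ℤ) (ht : t + 1 ≤ T) :
      f (t + 1) = f t + (stateAlong ω f (t + 1)).label.vel.toInt := by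
    have hn : (T - t).toNat = (T - (t + 1)).toNat + 1 := by omega
    have ht' : T - ((T - (t + 1)).toNat : ℤ) = t + 1 := by omega
    simp only [stateAlong, hf, hn, ancestorPos, ht', sub_add_cancel]
  have hpred (t : ℤ) (ht : t + 1 ≤ T)
      (halive : ω (t + 1) (f (t + 1)) = some (stateAlong ω f (t + 1))) :
      ω t (f t) = some (stateAlong ω f t) ∧
        Steps ω t (f t) (stateAlong ω f t) (stateAlong ω f (t + 1)) := by
    obtain ⟨s₀, hs₀, hstep⟩ := h _ _ _ halive
    rw [sub_eq_of_eq_add (hpos t ht)] at hs₀ hstep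
    have : stateAlong ω f t = s₀ := by simp [stateAlong, hs₀]
    exact ⟨this ▸ hs₀, this ▸ hstep⟩
  have key (t : ℤ) (ht : t ≤ T) : ω t (f t) = some (stateAlong ω f t) ∧
      (stateAlong ω f t).label.role = s.label.role ∧
      ((stateAlong ω f t).label.phase : ℤ) = (t - (T - s.label.phase)) % 43 := by
    induction t, ht using Int.leInductionDown with
    | base => exact ⟨by rw [hfT, hsT, hs], by rw [hsT], by rw [hsT]; omega⟩
    | pred t ht ih =>
      have hstep := hpred (t - 1) (by omega) (by simpa using ih.1)
      rw [sub_add_cancel] at hstep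
      refine ⟨hstep.1, hstep.2.role_eq.symm.trans ih.2.1, ?_⟩
      have := hstep.2.phase_eq
      omega
  exact ⟨f, ⟨fun t ht => (key t ht).1, fun t ht => (key t ht).2.1, fun t ht => (key t ht).2.2,
    fun t ht => (hpred t ht (key _ ht).1).2, hpos⟩, hfT, hsT⟩

lemma Observes.eq_of_survives {t q : ℤ} {l : Option Particle} (h : Observes ω t q l)
    (hs : Survives ω t q) : l = ω t q :=
  h.resolve_right fun h => h.2 hs

lemma Observes.eq_some {t q : ℤ} {s : Particle} (h : Observes ω t q (some s)) :
    ω t q = some s :=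
  (h.resolve_right fun h => Option.some_ne_none s h.1).symm

lemma Expectation.eq_none_or_of_check_opt {τ : Fin 43} {n : Option Label}
    (h : (Expectation.opt a).check τ n) :
    n = none ∨ ∃ j, n = some j ∧ j.role = a ∧ j.phase = τ := by
  cases n <;> simp_all [Expectation.check]

lemma Expectation.exists_of_check_req {τ : Fin 43} {n : Option Label}
    (h : (Expectation.req a).check τ n) : ∃ j, n = some j ∧ j.role = a ∧ j.phase = τ := by
  cases n <;> simp_all [Expectation.check]

namespace Worldline

lemma eq_of_le (hf : Worldline ω f T t₀ a) (hg : Worldline ω g T₁ t₁ a') {t : ℤ} (hT : t ≤ T)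
    (hT₁ : t ≤ T₁) (hfg : f t = g t) {u : ℤ} (hu : u ≤ t) : f u = g u := by
  induction u, hu using Int.leInductionDown with
  | base => exact hfg
  | pred u hu ih =>
    have hpf := hf.pos (u - 1) (by omega)
    have hpg := hg.pos (u - 1) (by omega)
    rw [sub_add_cancel] at hpf hpg
    have : stateAlong ω f u = stateAlong ω g u := by simp only [stateAlong, ih]
    rw [this] at hpf
    omega

lemma role_phase_unique (hf : Worldline ω f T t₀ a) (hg : Worldline ω g T₁ t₁ a') {t : ℤ}
    (hT : t ≤ T) (hT₁ : t ≤ T₁) (hfg : f t = g t) : a = a' ∧ (t₀ - t₁) % 43 = 0 := by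
  have hs : stateAlong ω f t = stateAlong ω g t := by simp only [stateAlong, hfg]
  have hpf := hf.phase_eq t hT
  have hpg := hg.phase_eq t hT₁
  rw [hs] at hpf
  exact ⟨by rw [← hf.role_eq t hT, hs, hg.role_eq t hT₁], by omega⟩

lemma survives (h : Worldline ω f T t₀ a) {t : ℤ} (ht : t + 1 ≤ T) : Survives ω t (f t) :=
  ⟨stateAlong ω f (t + 1), by rw [← h.pos t ht]; exact h.alive _ ht⟩

end Worldline

/-- The step at time `t` and phase `τ` of a particle of role `a` moving along `f`, whose neighbours
are observed to be `l` and `r`. -/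
structure StepData (ω : History) (f : ℤ → ℤ) (a : Fin 3) (t : ℤ) (τ : ℕ) (l r : Option Particle) :
    Prop where
  observes_left : Observes ω t (f t - 1) l
  observes_right : Observes ω t (f t + 1) r
  role_eq : (stateAlong ω f t).label.role = a
  phase_eq : ((stateAlong ω f t).label.phase : ℕ) = τ
  check_left :
    (expectLeft a τ).check (stateAlong ω f t).label.phase (l.map Particle.label)
  check_right :
    (expectRight a τ).check (stateAlong ω f t).label.phase (r.map Particle.label)
  exec_eq : (opAt a τ).exec (stateAlong ω f t).regs (read (looksLeft a τ) l)
    (read (looksRight a τ) r) = some (stateAlong ω f (t + 1)).regs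
  pos_succ : f (t + 1) = f t + (nextVel (stateAlong ω f t).label (stateAlong ω f t).regs.port
    (read (looksLeft a τ) l)).toInt

namespace Worldline

lemma exists_stepData (h : Worldline ω f T t₀ a) {τ : ℕ} (ht : t₀ + τ + 1 ≤ T) (hτ : τ < 43) :
    ∃ l r, StepData ω f a (t₀ + τ) τ l r := by
  obtain ⟨l, r, hl, hr, hstep⟩ := h.steps _ ht
  have ha := h.role_eq (t₀ + τ) (by omega)
  have hp : ((stateAlong ω f (t₀ + τ)).label.phase : ℕ) = τ := by
    have := h.phase_eq (t₀ + τ) (by omega)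
    omega
  obtain ⟨hokl, hokr, -, hexec, hnext⟩ := localStep_eq_some.1 hstep
  simp only [okLeft, okRight, Particle.readLeft, Particle.readRight, ha, hp]
    at hokl hokr hexec hnext
  exact ⟨l, r, hl, hr, ha, hp, hokl, hokr, hexec, by rw [h.pos _ ht, hnext]; rfl⟩

end Worldline

namespace StepData

variable {t : ℤ} {τ : ℕ} {l r : Option Particle}

lemma exists_left_of_req (h : StepData ω f a t τ l r) (he : expectLeft a τ = .req a') :
    ∃ s, l = some s ∧ ω t (f t - 1) = some s ∧ s.label.role = a' ∧ (s.label.phase : ℕ) = τ := by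
  obtain ⟨j, hj, hrole, hphase⟩ := Expectation.exists_of_check_req (he ▸ h.check_left)
  obtain ⟨s, rfl, rfl⟩ := Option.map_eq_some_iff.1 hj
  exact ⟨s, rfl, h.observes_left.eq_some, hrole, by rw [hphase, h.phase_eq]⟩

lemma exists_right_of_req (h : StepData ω f a t τ l r) (he : expectRight a τ = .req a') :
    ∃ s, r = some s ∧ ω t (f t + 1) = some s ∧ s.label.role = a' ∧ (s.label.phase : ℕ) = τ := by
  obtain ⟨j, hj, hrole, hphase⟩ := Expectation.exists_of_check_req (he ▸ h.check_right)
  obtain ⟨s, rfl, rfl⟩ := Option.map_eq_some_iff.1 hj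
  exact ⟨s, rfl, h.observes_right.eq_some, hrole, by rw [hphase, h.phase_eq]⟩

lemma left_of_opt (h : StepData ω f a t τ l r) (he : expectLeft a τ = .opt a') :
    l = none ∨
      ∃ s, l = some s ∧ ω t (f t - 1) = some s ∧ s.label.role = a' ∧ (s.label.phase : ℕ) = τ := by
  refine (Expectation.eq_none_or_of_check_opt (he ▸ h.check_left)).imp Option.map_eq_none_iff.1 ?_
  rintro ⟨j, hj, hrole, hphase⟩
  obtain ⟨s, rfl, rfl⟩ := Option.map_eq_some_iff.1 hj
  exact ⟨s, rfl, h.observes_left.eq_some, hrole, by rw [hphase, h.phase_eq]⟩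

lemma right_of_opt (h : StepData ω f a t τ l r) (he : expectRight a τ = .opt a') :
    r = none ∨
      ∃ s, r = some s ∧ ω t (f t + 1) = some s ∧ s.label.role = a' ∧ (s.label.phase : ℕ) = τ := by
  refine (Expectation.eq_none_or_of_check_opt (he ▸ h.check_right)).imp Option.map_eq_none_iff.1 ?_
  rintro ⟨j, hj, hrole, hphase⟩
  obtain ⟨s, rfl, rfl⟩ := Option.map_eq_some_iff.1 hj
  exact ⟨s, rfl, h.observes_right.eq_some, hrole, by rw [hphase, h.phase_eq]⟩

end StepData

lemma nextVel_eq_schedule {j : Label} {o v : Datum} (hr : ¬ RightPhase j.phase)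
    (hl : ¬ LeftPhase j.phase) : nextVel j o v = schedule j.role j.phase := by
  rw [nextVel, if_neg hr, if_neg hl]

lemma nextVel_of_rightPhase {j : Label} {o v : Datum} (h : RightPhase j.phase) :
    nextVel j o v = .stay ∨ nextVel j o v = .right := by
  simpa only [Label.Allows, if_pos h] using allows_nextVel j o v

lemma nextVel_of_leftPhase {j : Label} {o v : Datum} (h : LeftPhase j.phase) :
    nextVel j o v = .stay ∨ nextVel j o v = .left := by
  have hr : ¬ RightPhase j.phase := fun hr => by omega
  simpa only [Label.Allows, if_neg hr, if_pos h] using allows_nextVel j o v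

lemma StepData.pos_succ_of_rightPhase {t : ℤ} {τ : ℕ} {l r : Option Particle}
    (h : StepData ω f a t τ l r) (hτ : RightPhase τ) : f (t + 1) = f t ∨ f (t + 1) = f t + 1 := by
  rw [h.pos_succ]
  rcases nextVel_of_rightPhase (h.phase_eq ▸ hτ) with hv | hv
  · exact Or.inl (by rw [hv, Velocity.toInt, add_zero])
  · exact Or.inr (by rw [hv, Velocity.toInt])

lemma StepData.pos_succ_of_leftPhase {t : ℤ} {τ : ℕ} {l r : Option Particle}
    (h : StepData ω f a t τ l r) (hτ : LeftPhase τ) : f (t + 1) = f t ∨ f (t + 1) = f t - 1 := by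
  rw [h.pos_succ]
  rcases nextVel_of_leftPhase (h.phase_eq ▸ hτ) with hv | hv
  · exact Or.inl (by rw [hv, Velocity.toInt, add_zero])
  · exact Or.inr (by rw [hv, Velocity.toInt, sub_eq_add_neg])

lemma slot_succ (a : Fin 3) {τ : ℕ} (hτ : τ < 44) :
    slot a (τ + 1) = slot a τ + (schedule a τ).toInt := by
  revert a τ
  decide

namespace Worldline

lemma sub_slot_succ (h : Worldline ω f T t₀ a) {τ : ℕ} (ht : t₀ + τ + 1 ≤ T) (hτ : τ < 43)
    (hmove : ¬ (31 ≤ τ ∧ τ ≤ 40)) :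
    f (t₀ + τ + 1) - slot a (τ + 1) = f (t₀ + τ) - slot a τ := by
  obtain ⟨l, r, hstep⟩ := h.exists_stepData ht hτ
  have hpos := hstep.pos_succ
  have hphase := hstep.phase_eq
  rw [nextVel_eq_schedule (by omega) (by omega), hstep.role_eq, hphase] at hpos
  have := slot_succ a (τ := τ) (by omega)
  omega

lemma sub_slot_eq (h : Worldline ω f T t₀ a) (τ : ℕ) (hτ : τ ≤ 31) (ht : t₀ + τ ≤ T) :
    f (t₀ + τ) - slot a τ = f t₀ - slot a 0 := by
  induction τ with
  | zero => simp
  | succ n ih =>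
    push_cast at ht ⊢
    rw [← add_assoc, h.sub_slot_succ (by omega) (by omega) (by omega)]
    exact ih (by omega) (by omega)

lemma exists_right_of_req (hR : IsHistory ω) (h : Worldline ω f T t₀ a) {τ : ℕ}
    (ht : t₀ + τ + 1 ≤ T) (hτ : τ < 43) (he : expectRight a τ = .req a') :
    ∃ g, Worldline ω g (t₀ + τ) t₀ a' ∧ g (t₀ + τ) = f (t₀ + τ) + 1 := by
  obtain ⟨l, r, hstep⟩ := h.exists_stepData ht hτ
  obtain ⟨s, -, hs, hrole, hphase⟩ := hstep.exists_right_of_req he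
  obtain ⟨g, hg, hgpos, -⟩ := exists_worldline hR hs
  rw [hrole, hphase, add_sub_cancel_right] at hg
  exact ⟨g, hg, hgpos⟩

lemma exists_left_of_req (hR : IsHistory ω) (h : Worldline ω f T t₀ a) {τ : ℕ}
    (ht : t₀ + τ + 1 ≤ T) (hτ : τ < 43) (he : expectLeft a τ = .req a') :
    ∃ g, Worldline ω g (t₀ + τ) t₀ a' ∧ g (t₀ + τ) = f (t₀ + τ) - 1 := by
  obtain ⟨l, r, hstep⟩ := h.exists_stepData ht hτ
  obtain ⟨s, -, hs, hrole, hphase⟩ := hstep.exists_left_of_req he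
  obtain ⟨g, hg, hgpos, -⟩ := exists_worldline hR hs
  rw [hrole, hphase, add_sub_cancel_right] at hg
  exact ⟨g, hg, hgpos⟩

end Worldline

section Adjacent

lemma slot_eq_slot_add_one (ha : a = 0 ∧ a' = 1 ∨ a = 1 ∧ a' = 2) {n : ℕ} (hn : 12 ≤ n) :
    slot a' n = slot a n + 1 := by
  have h₀ : ¬ (4 ≤ n ∧ n ≤ 10) := by omega
  have h₁ : ¬ (n = 8 ∨ n = 9) := by omega
  have h₂ : ¬ (3 ≤ n ∧ n ≤ 11) := by omega
  rcases ha with ⟨rfl, rfl⟩ | ⟨rfl, rfl⟩ <;> simp [slot, h₀, h₁, h₂]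

/-- If the particles cross between the two times, or leave a gap, one of the required neighbours is
missing. -/
lemma Worldline.adjacent_of_adjacent_succ (hR : IsHistory ω) (hf : Worldline ω f T t₀ a)
    (hg : Worldline ω g T t₀ a') (ha : a = 0 ∧ a' = 1 ∨ a = 1 ∧ a' = 2) {n : ℕ}
    (hn : 31 ≤ n ∧ n ≤ 40) (ht : t₀ + n + 1 ≤ T) (hfg : g (t₀ + n + 1) = f (t₀ + n + 1) + 1) :
    g (t₀ + n) = f (t₀ + n) + 1 := by
  obtain ⟨l, r, hf'⟩ := hf.exists_stepData ht (by omega)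
  obtain ⟨l', r', hg'⟩ := hg.exists_stepData ht (by omega)
  have hne : a ≠ a' := by rcases ha with ⟨rfl, rfl⟩ | ⟨rfl, rfl⟩ <;> decide
  have hclose : g (t₀ + n) = f (t₀ + n) + 1 ∨ g (t₀ + n) = f (t₀ + n) ∨
      g (t₀ + n) = f (t₀ + n) + 2 := by
    by_cases hright : n ≤ 35
    · have := hf'.pos_succ_of_rightPhase ⟨hn.1, hright⟩
      have := hg'.pos_succ_of_rightPhase ⟨hn.1, hright⟩
      omega
    · have := hf'.pos_succ_of_leftPhase ⟨by omega, hn.2⟩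
      have := hg'.pos_succ_of_leftPhase ⟨by omega, hn.2⟩
      omega
  rcases hclose with h | h | h
  · exact h
  · exact absurd (hf.role_phase_unique hg (by omega) (by omega) h.symm).1 hne
  · have hexR : expectRight a n = .req a' := by
      rcases ha with ⟨rfl, rfl⟩ | ⟨rfl, rfl⟩ <;> simp [expectRight] <;> omega
    have hexL : expectLeft a' n = .req a := by
      rcases ha with ⟨rfl, rfl⟩ | ⟨rfl, rfl⟩ <;> simp [expectLeft] <;> omega
    obtain ⟨u, hu, hupos⟩ := hf.exists_right_of_req hR ht (by omega) hexR
    obtain ⟨v, hv, hvpos⟩ := hg.exists_left_of_req hR ht (by omega) hexL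
    exact absurd (hv.role_phase_unique hu le_rfl le_rfl (by omega)).1 hne

lemma Worldline.aligned_of_aligned_succ (hR : IsHistory ω) (hf : Worldline ω f T t₀ a)
    (hg : Worldline ω g T t₀ a') (ha : a = 0 ∧ a' = 1 ∨ a = 1 ∧ a' = 2) {n : ℕ} (hn : n < 43)
    (ht : t₀ + n + 1 ≤ T)
    (hfg : f (t₀ + n + 1) - slot a (n + 1) = g (t₀ + n + 1) - slot a' (n + 1)) :
    f (t₀ + n) - slot a n = g (t₀ + n) - slot a' n := by
  by_cases hmove : 31 ≤ n ∧ n ≤ 40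
  · have hslot := slot_eq_slot_add_one ha (n := n) (by omega)
    have hslot' := slot_eq_slot_add_one ha (n := n + 1) (by omega)
    have := hf.adjacent_of_adjacent_succ hR hg ha hmove ht (by omega)
    omega
  · have := hf.sub_slot_succ ht hn hmove
    have := hg.sub_slot_succ ht hn hmove
    omega

lemma Worldline.aligned_of_le (hR : IsHistory ω) (hf : Worldline ω f T t₀ a)
    (hg : Worldline ω g T t₀ a') (ha : a = 0 ∧ a' = 1 ∨ a = 1 ∧ a' = 2) {τ : ℕ} (hτ : τ ≤ 43)
    (ht : t₀ + τ ≤ T) (hfg : f (t₀ + τ) - slot a τ = g (t₀ + τ) - slot a' τ) {n : ℕ} (hn : n ≤ τ) :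
    f (t₀ + n) - slot a n = g (t₀ + n) - slot a' n := by
  induction hn using Nat.decreasingInduction with
  | self => exact hfg
  | of_succ n hn ih =>
    push_cast [← add_assoc] at ih
    exact hf.aligned_of_aligned_succ hR hg ha (by omega) (by omega) ih

end Adjacent

end Worldlines

/-! ### The cycle of a block -/

section Controllers

variable {ω : History} {f g : ℤ → ℤ} {T t₀ : ℤ} {a : Fin 3} {j : Label} {w : Velocity}

/-- The displacement at phase `τ` of a block which simulates a particle of new velocity `w`. -/
def blockShift (w : Velocity) (τ : ℕ) : ℤ :=
  match w with
  | .stay => 0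
  | .right => if τ ≤ 31 then 0 else if τ ≤ 36 then τ - 31 else 5
  | .left => if τ ≤ 36 then 0 else if τ ≤ 41 then 36 - τ else -5

lemma blockShift_eq_zero (w : Velocity) {τ : ℕ} (h : τ ≤ 31) : blockShift w τ = 0 := by
  cases w <;> grind [blockShift]

lemma blockShift_forty_three (w : Velocity) : blockShift w 43 = 5 * w.toInt := by
  cases w <;> rfl

lemma slot_eq_slot_zero (a : Fin 3) {τ : ℕ} (h : 31 ≤ τ) : slot a τ = slot a 0 := by
  grind [slot]

lemma blockShift_succ_of_rightPhase {τ : ℕ} (h : RightPhase τ) (w : Velocity) :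
    blockShift w (τ + 1) =
      blockShift w τ + (if w = .right then Velocity.right else .stay).toInt := by
  cases w <;> grind [blockShift, Velocity.toInt]

lemma blockShift_succ_of_leftPhase {τ : ℕ} (h : LeftPhase τ) (w : Velocity) :
    blockShift w (τ + 1) = blockShift w τ + (if w = .left then Velocity.left else .stay).toInt := by
  cases w <;> grind [blockShift, Velocity.toInt]

lemma blockShift_succ_of_not_move {τ : ℕ} (hr : ¬ RightPhase τ) (hl : ¬ LeftPhase τ)
    (w : Velocity) : blockShift w (τ + 1) = blockShift w τ := by
  cases w <;> grind [blockShift]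

lemma slot_add_blockShift_succ {o v : Datum}
    (hw : RightPhase j.phase ∨ LeftPhase j.phase → (if j.role = 1 then v else o) = .vel w) :
    slot j.role (j.phase + 1) + blockShift w (j.phase + 1) =
      slot j.role j.phase + blockShift w j.phase + (nextVel j o v).toInt := by
  by_cases hr : RightPhase j.phase
  · rw [slot_eq_slot_zero (τ := j.phase) _ hr.1,
      slot_eq_slot_zero (τ := j.phase + 1) _ (by omega), nextVel, if_pos hr, hw (.inl hr),
      blockShift_succ_of_rightPhase hr, add_assoc]
    simp only [Datum.vel.injEq]
  by_cases hl : LeftPhase j.phase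
  · rw [slot_eq_slot_zero (τ := j.phase) _ (by omega),
      slot_eq_slot_zero (τ := j.phase + 1) _ (by omega), nextVel, if_neg hr, if_pos hl,
      hw (.inr hl), blockShift_succ_of_leftPhase hl, add_assoc]
    simp only [Datum.vel.injEq]
  · rw [nextVel_eq_schedule hr hl, slot_succ _ (by omega), blockShift_succ_of_not_move hr hl]
    ring

lemma StepData.pos_succ_eq {t : ℤ} {τ : ℕ} {l r : Option Particle} (h : StepData ω f a t τ l r)
    (hw : RightPhase τ ∨ LeftPhase τ →
      (if a = 1 then read (looksLeft a τ) l else (stateAlong ω f t).regs.port) = .vel w) :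
    f (t + 1) = f t + (slot a (τ + 1) + blockShift w (τ + 1)) - (slot a τ + blockShift w τ) := by
  have hstep := h.pos_succ
  obtain ⟨ha, hp⟩ := And.intro h.role_eq h.phase_eq
  have := slot_add_blockShift_succ (j := (stateAlong ω f t).label) (w := w)
    (o := (stateAlong ω f t).regs.port) (v := read (looksLeft a τ) l) (by rwa [ha, hp])
  rw [ha, hp] at this
  omega

/-- The registers at phase zero of the controllers of a block simulating a particle
labelled `j`. -/
def controllerRegs (j : Label) : Registers := ⟨.code j 0, .code j 0, .skip⟩

/-- The registers at phase zero of the particle of role `a` in a block simulating `s`. -/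
def blockRegs (s : Particle) (a : Fin 3) : Registers :=
  if a = 1 then s.regs else controllerRegs s.label

/-- At time `t`, the cells `x, …, x + 4` contain a block at phase zero simulating `s`. -/
def IsBlock (ω : History) (t x : ℤ) (s : Particle) : Prop :=
  ∀ a, ω t (x + slot a 0) = some ⟨⟨a, 0, .stay⟩, blockRegs s a⟩

lemma read_false (l : Option Particle) : read false l = .nil := rfl

lemma Op.exec_idle (g : Registers) (x y : Datum) : Op.idle.exec g x y = some g := by
  simp [Op.exec, Op.apply]

lemma Op.exists_code_of_exec {o : Op} {g g' : Registers} {x y : Datum} {n : Fin 14}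
    (ho : o ≠ .advance) (h : o.exec g x y = some g') (hg : g.code = .code j n) :
    ∃ n', g'.code = .code j n' := by
  cases o <;> grind [Op.exec, Op.apply]

lemma Op.code_eq_of_exec_resetShowCode {g g' : Registers} {y : Datum}
    (h : Op.resetShowCode.exec g .nil y = some g') :
    ∃ j, g.code = .code j 0 ∧ g' = controllerRegs j := by
  grind [Op.exec, Op.apply, controllerRegs]

lemma Op.eq_of_exec_advance {g g' : Registers} {y : Datum} {n : Fin 14}
    (h : Op.advance.exec g .nil y = some g') (hg : g.code = .code j n) :
    g' = ⟨.vel (nextVel j g.port g.buffer), .code (j.next (nextVel j g.port g.buffer)) 0,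
      .skip⟩ := by
  simpa [Op.exec, Op.apply, hg, eq_comm] using h

lemma opAt_ne_advance : ∀ a : Fin 3, a ≠ 1 → ∀ τ < 27, opAt a τ ≠ .advance := by
  decide

lemma opAt_eq_idle : ∀ a : Fin 3, a ≠ 1 → ∀ τ < 43, 28 ≤ τ → τ ≠ 41 → opAt a τ = .idle := by
  decide

lemma opAt_twenty_seven : ∀ a : Fin 3, a ≠ 1 → opAt a 27 = .advance ∧ looksLeft a 27 = false := by
  decide

lemma opAt_forty_one :
    ∀ a : Fin 3, a ≠ 1 → opAt a 41 = .resetShowCode ∧ looksLeft a 41 = false := by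
  decide

namespace Worldline

lemma regs_succ_of_idle (h : Worldline ω f T t₀ a) {τ : ℕ} (ht : t₀ + τ + 1 ≤ T) (hτ : τ < 43)
    (ho : opAt a τ = .idle) :
    (stateAlong ω f (t₀ + τ + 1)).regs = (stateAlong ω f (t₀ + τ)).regs := by
  obtain ⟨l, r, hstep⟩ := h.exists_stepData ht hτ
  have := hstep.exec_eq
  rw [ho, Op.exec_idle] at this
  exact (Option.some.inj this).symm

lemma pos_sub_one (h : Worldline ω f T t₀ a) (ht : t₀ ≤ T) : f (t₀ - 1) = f t₀ := by
  have h' := h.of_phase_zero (t₁ := t₀ - 43) (by omega)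
  have := h'.sub_slot_succ (τ := 42) (by omega) (by omega) (by omega)
  rw [slot_eq_slot_zero (τ := 42) a (by omega), slot_eq_slot_zero (τ := 42 + 1) a (by omega)]
    at this
  ring_nf at this ⊢
  omega

lemma label_eq (h : Worldline ω f T t₀ a) (ht : t₀ ≤ T) :
    (stateAlong ω f t₀).label = ⟨a, 0, .stay⟩ := by
  have hpos := h.pos (t₀ - 1) (by omega)
  rw [sub_add_cancel, h.pos_sub_one ht] at hpos
  have hphase := h.phase_eq t₀ ht
  have hrole := h.role_eq t₀ ht
  generalize (stateAlong ω f t₀).label = j at hpos hphase hrole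
  obtain ⟨role, phase, vel⟩ := j
  obtain rfl : vel = .stay := by cases vel <;> simp_all [Velocity.toInt]
  obtain rfl : phase = 0 := Fin.ext (by simpa using hphase)
  rw [← hrole]

lemma exists_controllerRegs_forty_two (h : Worldline ω f T t₀ a) (ha : a ≠ 1) (ht : t₀ + 42 ≤ T) :
    ∃ j, (stateAlong ω f (t₀ + 41)).regs.code = .code j 0 ∧
      (stateAlong ω f (t₀ + 42)).regs = controllerRegs j := by
  obtain ⟨l, r, hstep⟩ := h.exists_stepData (τ := 41) (by omega) (by omega)
  have := hstep.exec_eq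
  rw [(opAt_forty_one a ha).1, (opAt_forty_one a ha).2, read_false] at this
  simpa only [Nat.cast_ofNat, add_assoc, Int.reduceAdd] using Op.code_eq_of_exec_resetShowCode this

lemma regs_forty_three (h : Worldline ω f T t₀ a) (ha : a ≠ 1) (ht : t₀ + 43 ≤ T) :
    (stateAlong ω f (t₀ + 43)).regs = (stateAlong ω f (t₀ + 42)).regs := by
  simpa only [Nat.cast_ofNat, add_assoc, Int.reduceAdd] using
    h.regs_succ_of_idle (τ := 42) (by omega) (by omega) (opAt_eq_idle a ha 42 (by omega)
      (by omega) (by omega))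

lemma exists_controllerRegs (h : Worldline ω f T t₀ a) (ha : a ≠ 1) (ht : t₀ ≤ T) :
    ∃ j, (stateAlong ω f (t₀ - 1)).regs = controllerRegs j ∧
      (stateAlong ω f t₀).regs = controllerRegs j := by
  have h' := h.of_phase_zero (t₁ := t₀ - 43) (by omega)
  obtain ⟨j, -, hj⟩ := h'.exists_controllerRegs_forty_two ha (by omega)
  have hj' := h'.regs_forty_three ha (by omega)
  rw [hj, sub_add_cancel] at hj'
  rw [show t₀ - 43 + 42 = t₀ - 1 by ring] at hj
  exact ⟨j, hj, hj'⟩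

lemma exists_code (h : Worldline ω f T t₀ a) (ha : a ≠ 1)
    (hj : (stateAlong ω f t₀).regs = controllerRegs j) (τ : ℕ) (hτ : τ ≤ 27) (ht : t₀ + τ ≤ T) :
    ∃ n, (stateAlong ω f (t₀ + τ)).regs.code = .code j n := by
  induction τ with
  | zero => exact ⟨0, by simp [hj, controllerRegs]⟩
  | succ n ih =>
    obtain ⟨m, hm⟩ := ih (by omega) (by omega)
    obtain ⟨l, r, hstep⟩ := h.exists_stepData (τ := n) (by omega) (by omega)
    push_cast [← add_assoc]
    exact Op.exists_code_of_exec (opAt_ne_advance a ha n (by omega)) hstep.exec_eq hm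

lemma exists_regs_of_advance (h : Worldline ω f T t₀ a) (ha : a ≠ 1)
    (hj : (stateAlong ω f t₀).regs = controllerRegs j) (hT : t₀ + 28 ≤ T) :
    ∃ w, j.Allows w ∧ ∀ τ : ℕ, 28 ≤ τ → τ ≤ 41 → t₀ + τ ≤ T →
      (stateAlong ω f (t₀ + τ)).regs = ⟨.vel w, .code (j.next w) 0, .skip⟩ := by
  obtain ⟨n, hn⟩ := h.exists_code ha hj 27 le_rfl (by omega)
  obtain ⟨l, r, hstep⟩ := h.exists_stepData (τ := 27) (by omega) (by omega)
  have hexec := hstep.exec_eq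
  rw [(opAt_twenty_seven a ha).1, (opAt_twenty_seven a ha).2, read_false] at hexec
  have hregs := Op.eq_of_exec_advance hexec hn
  set w := nextVel j (stateAlong ω f (t₀ + (27 : ℕ))).regs.port
    (stateAlong ω f (t₀ + (27 : ℕ))).regs.buffer
  refine ⟨w, allows_nextVel _ _ _, fun τ h28 h41 ht => ?_⟩
  induction τ, h28 using Nat.le_induction with
  | base => rwa [add_assoc] at hregs
  | succ n hn ih =>
    push_cast [← add_assoc]
    rw [h.regs_succ_of_idle (by omega) (by omega)
      (opAt_eq_idle a ha n (by omega) (by omega) (by omega)), ih (by omega) (by omega)]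

end Worldline

/-- A cycle, starting at time `t₀`, of a controller in a block simulating a particle labelled `j`,
where `w` is the next velocity of that particle. -/
structure ControllerCycle (ω : History) (f : ℤ → ℤ) (T t₀ : ℤ) (a : Fin 3) (j : Label)
    (w : Velocity) : Prop where
  allows : j.Allows w
  port_eq : ∀ τ : ℕ, 28 ≤ τ → τ ≤ 41 → t₀ + τ ≤ T → (stateAlong ω f (t₀ + τ)).regs.port = .vel w
  pos : ∀ τ : ℕ, τ ≤ 43 → t₀ + τ ≤ T →
    f (t₀ + τ) = f t₀ - slot a 0 + slot a τ + blockShift w τ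
  code_eq : t₀ + 43 ≤ T → (stateAlong ω f (t₀ + 43)).regs.code = .code (j.next w) 0

namespace Worldline

lemma pos_of_port_eq (h : Worldline ω f T t₀ a) (ha : a ≠ 1)
    (hw : ∀ τ : ℕ, 28 ≤ τ → τ ≤ 41 → t₀ + τ ≤ T → (stateAlong ω f (t₀ + τ)).regs.port = .vel w)
    (τ : ℕ) (hτ : τ ≤ 43) (ht : t₀ + τ ≤ T) :
    f (t₀ + τ) = f t₀ - slot a 0 + slot a τ + blockShift w τ := by
  induction τ with
  | zero => simp [blockShift_eq_zero w (Nat.zero_le 31)]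
  | succ n ih =>
    obtain ⟨l, r, hstep⟩ := h.exists_stepData (τ := n) (by omega) (by omega)
    have hpos := hstep.pos_succ_eq (w := w) fun hmove => by
      rw [if_neg ha]
      exact hw n (by omega) (by omega) (by omega)
    have := ih (by omega) (by omega)
    push_cast [← add_assoc]
    omega

lemma exists_controllerCycle (h : Worldline ω f T t₀ a) (ha : a ≠ 1)
    (hj : (stateAlong ω f t₀).regs = controllerRegs j) :
    ∃ w, ControllerCycle ω f T t₀ a j w := by
  rcases lt_or_ge T (t₀ + 28) with hT | hT
  · refine ⟨nextVel j .skip .skip, allows_nextVel _ _ _, by omega, fun τ _ ht => ?_, by omega⟩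
    have := h.sub_slot_eq τ (by omega) ht
    rw [blockShift_eq_zero _ (by omega)]
    omega
  obtain ⟨w, hw, hregs⟩ := h.exists_regs_of_advance ha hj hT
  have hport (τ : ℕ) (h28 : 28 ≤ τ) (h41 : τ ≤ 41) (ht : t₀ + τ ≤ T) :
      (stateAlong ω f (t₀ + τ)).regs.port = .vel w := by
    rw [hregs τ h28 h41 ht]
  refine ⟨w, hw, hport, h.pos_of_port_eq ha hport, fun ht => ?_⟩
  obtain ⟨j', hj', h42⟩ := h.exists_controllerRegs_forty_two ha (by omega)
  have h41 := hregs 41 (by omega) le_rfl (by omega)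
  rw [Nat.cast_ofNat] at h41
  rw [h41] at hj'
  rw [h.regs_forty_three ha ht, h42]
  exact hj'.symm

end Worldline

end Controllers

section Blocks

variable {ω : History} {f g g₀ g₂ : ℤ → ℤ} {T t₀ : ℤ} {a : Fin 3} {j j₀ j₂ : Label}
  {w : Velocity} {s : Particle}

lemma Op.eq_of_exec_compare {g g' : Registers} {x y : Datum} (hx : x ≠ .skip)
    (h : Op.compare.exec g x y = some g') : x = y := by
  grind [Op.exec, Op.apply]

namespace Worldline

lemma controllers_eq (h : Worldline ω f T t₀ 1) (ht : t₀ ≤ T) (h₀ : Worldline ω g₀ t₀ t₀ 0)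
    (h₂ : Worldline ω g₂ t₀ t₀ 2) (hpos₀ : g₀ t₀ = f t₀ - 1) (hpos₂ : g₂ t₀ = f t₀ + 1)
    (hj₀ : (stateAlong ω g₀ (t₀ - 1)).regs = controllerRegs j₀)
    (hj₂ : (stateAlong ω g₂ (t₀ - 1)).regs = controllerRegs j₂) : j₀ = j₂ := by
  obtain ⟨l, r, hstep⟩ := (h.of_phase_zero (t₁ := t₀ - 43) (by omega)).exists_stepData
    (τ := 42) (by omega) (by omega)
  rw [show t₀ - 43 + (42 : ℕ) = t₀ - 1 by omega] at hstep
  obtain ⟨sl, rfl, hsl, -⟩ := hstep.exists_left_of_req (a' := 0) (by decide)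
  obtain ⟨sr, rfl, hsr, -⟩ := hstep.exists_right_of_req (a' := 2) (by decide)
  rw [h.pos_sub_one ht, ← hpos₀, ← h₀.pos_sub_one le_rfl, h₀.alive _ (by omega),
    Option.some_inj] at hsl
  rw [h.pos_sub_one ht, ← hpos₂, ← h₂.pos_sub_one le_rfl, h₂.alive _ (by omega),
    Option.some_inj] at hsr
  subst hsl hsr
  have hcompare : Op.compare.exec _ (stateAlong ω g₀ (t₀ - 1)).regs.port
      (stateAlong ω g₂ (t₀ - 1)).regs.port = some _ := hstep.exec_eq
  rw [hj₀, hj₂] at hcompare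
  simpa [controllerRegs] using Op.eq_of_exec_compare (by simp [controllerRegs]) hcompare

lemma alive_zero (h : Worldline ω f T t₀ a) (ht : t₀ ≤ T) :
    ω t₀ (f t₀) = some ⟨⟨a, 0, .stay⟩, (stateAlong ω f t₀).regs⟩ := by
  rw [h.alive _ ht, ← h.label_eq ht]

lemma exists_isBlock_of_core (hR : IsHistory ω) (h : Worldline ω f T t₀ 1) (ht : t₀ + 1 ≤ T) :
    ∃ s, IsBlock ω t₀ (f t₀ - slot 1 0) s := by
  obtain ⟨g₀, h₀, hpos₀⟩ := h.exists_left_of_req hR (τ := 0) (a' := 0) (by omega) (by omega)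
    (by decide)
  obtain ⟨g₂, h₂, hpos₂⟩ := h.exists_right_of_req hR (τ := 0) (a' := 2) (by omega) (by omega)
    (by decide)
  simp only [Nat.cast_zero, add_zero] at h₀ hpos₀ h₂ hpos₂
  obtain ⟨j₀, hj₀, hregs₀⟩ := h₀.exists_controllerRegs (by decide) le_rfl
  obtain ⟨j₂, hj₂, hregs₂⟩ := h₂.exists_controllerRegs (by decide) le_rfl
  obtain rfl := h.controllers_eq (by omega) h₀ h₂ hpos₀ hpos₂ hj₀ hj₂
  refine ⟨⟨j₀, (stateAlong ω f t₀).regs⟩, fun a => ?_⟩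
  match a with
  | 0 => rw [show f t₀ - slot 1 0 + slot 0 0 = g₀ t₀ by rw [hpos₀]; simp [slot]; ring,
      h₀.alive_zero le_rfl, hregs₀, blockRegs, if_neg (by decide)]
  | 1 => rw [sub_add_cancel, h.alive_zero (by omega), blockRegs, if_pos rfl]
  | 2 => rw [show f t₀ - slot 1 0 + slot 2 0 = g₂ t₀ by rw [hpos₂]; simp [slot]; ring,
      h₂.alive_zero le_rfl, hregs₂, blockRegs, if_neg (by decide)]

lemma exists_core (hR : IsHistory ω) (h : Worldline ω f T t₀ a) (ht : t₀ + 2 ≤ T) :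
    ∃ g, Worldline ω g (t₀ + 1) t₀ 1 ∧ g t₀ - slot 1 0 = f t₀ - slot a 0 := by
  match a with
  | 0 =>
    obtain ⟨g, hg, hpos⟩ := h.exists_right_of_req hR (τ := 1) (a' := 1) (by omega) (by omega)
      (by decide)
    have := (h.mono (by omega)).aligned_of_le hR hg (by simp) (n := 0) (by omega) le_rfl
      (by rw [hpos]; simp [slot]; ring) (by omega)
    exact ⟨g, hg, by simpa using this.symm⟩
  | 1 => exact ⟨f, h.mono (by omega), rfl⟩
  | 2 =>
    obtain ⟨g, hg, hpos⟩ := h.exists_left_of_req hR (τ := 1) (a' := 1) (by omega) (by omega)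
      (by decide)
    have := hg.aligned_of_le hR (h.mono (by omega)) (by simp) (n := 0) (by omega) le_rfl
      (by rw [hpos]; simp [slot]; ring) (by omega)
    exact ⟨g, hg, by simpa using this⟩

lemma exists_isBlock (hR : IsHistory ω) (h : Worldline ω f T t₀ a) (ht : t₀ + 2 ≤ T) :
    ∃ s, IsBlock ω t₀ (f t₀ - slot a 0) s := by
  obtain ⟨g, hg, hpos⟩ := h.exists_core hR ht
  exact hpos ▸ hg.exists_isBlock_of_core hR le_rfl

end Worldline

lemma IsBlock.regs_eq (hb : IsBlock ω t₀ (f t₀ - slot a 0) s) (h : Worldline ω f T t₀ a)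
    (ht : t₀ ≤ T) : (stateAlong ω f t₀).regs = blockRegs s a := by
  have := hb a
  rw [sub_add_cancel, h.alive t₀ ht, Option.some_inj] at this
  rw [this]

namespace Worldline

lemma pos_of_left_controller (hR : IsHistory ω) {m : ℕ} (hm : 31 ≤ m ∧ m ≤ 42)
    (h : Worldline ω f T t₀ 1) (ht : t₀ + m + 1 ≤ T) (hg : Worldline ω g (t₀ + m) t₀ 0)
    (hpos : g (t₀ + m) = f (t₀ + m) - 1) (hw : ControllerCycle ω g (t₀ + m) t₀ 0 j w)
    (τ : ℕ) (hτ : τ ≤ m + 1) : f (t₀ + τ) = f t₀ - slot 1 0 + slot 1 τ + blockShift w τ := by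
  have hupto (τ : ℕ) (hτ : τ ≤ m) :
      f (t₀ + τ) = f t₀ - slot 1 0 + slot 1 τ + blockShift w τ := by
    have haligned {n : ℕ} (hn : n ≤ m) :=
      hg.aligned_of_le hR (h.mono (T₁ := t₀ + m) (by omega)) (by simp) (by omega) le_rfl
        (by rw [slot_eq_slot_zero (τ := m) 0 hm.1, slot_eq_slot_zero (τ := m) 1 hm.1, hpos]
            simp [slot]; ring) hn
    have hτ' := haligned hτ
    have h0 := haligned (Nat.zero_le m)
    have := hw.pos τ (by omega) (by omega)
    simp only [Nat.cast_zero, add_zero] at h0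
    omega
  rcases hτ.lt_or_eq with hτ | rfl
  · exact hupto τ (by omega)
  obtain ⟨l, r, hstep⟩ := h.exists_stepData ht (by omega)
  obtain ⟨sl, rfl, hsl, -⟩ := hstep.exists_left_of_req (a' := 0) (by simp [expectLeft]; omega)
  rw [← hpos, hg.alive _ le_rfl, Option.some_inj] at hsl
  have := hstep.pos_succ_eq (w := w) fun hmove => by
    rw [if_pos rfl, ← hsl, ← hw.port_eq m (by omega) (by omega) le_rfl, read, if_pos]
    · rfl
    · simp [looksLeft]; omega
  have := hupto m le_rfl
  push_cast [← add_assoc]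
  omega

lemma exists_pos_of_core (hR : IsHistory ω) (h : Worldline ω f T t₀ 1)
    (hb : IsBlock ω t₀ (f t₀ - slot 1 0) s) :
    ∃ w, s.label.Allows w ∧ ∀ τ : ℕ, τ ≤ 43 → t₀ + τ ≤ T →
      f (t₀ + τ) = f t₀ - slot 1 0 + slot 1 τ + blockShift w τ := by
  by_cases hT : T ≤ t₀ + 31
  · refine ⟨nextVel s.label .skip .skip, allows_nextVel _ _ _, fun τ _ ht => ?_⟩
    have := h.sub_slot_eq τ (by omega) ht
    rw [blockShift_eq_zero _ (by omega)]
    omega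
  obtain ⟨m, hm, ht, hmax⟩ : ∃ m : ℕ, (31 ≤ m ∧ m ≤ 42) ∧ t₀ + m + 1 ≤ T ∧
      ∀ τ : ℕ, τ ≤ 43 → t₀ + τ ≤ T → τ ≤ m + 1 :=
    ⟨min 42 (T - t₀ - 1).toNat, by omega, by omega, by omega⟩
  obtain ⟨g, hg, hpos⟩ := h.exists_left_of_req hR (a' := 0) ht (by omega)
    (by simp [expectLeft]; omega)
  have haligned := hg.aligned_of_le hR (h.mono (by omega)) (by simp) (n := 0) (by omega) le_rfl
    (by rw [slot_eq_slot_zero 0 hm.1, slot_eq_slot_zero 1 hm.1, hpos]; simp [slot]; ring)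
    (by omega)
  simp only [Nat.cast_zero, add_zero] at haligned
  have hregs := (haligned ▸ hb).regs_eq hg (by omega)
  obtain ⟨w, hw⟩ := hg.exists_controllerCycle (by decide) (hregs.trans (if_neg (by decide)))
  exact ⟨w, hw.allows, fun τ hτ hτT =>
    h.pos_of_left_controller hR hm ht hg hpos hw τ (hmax τ hτ hτT)⟩

lemma exists_isBlock_pos (hR : IsHistory ω) (h : Worldline ω f T t₀ a) (ht : t₀ + 2 ≤ T) :
    ∃ s, IsBlock ω t₀ (f t₀ - slot a 0) s ∧ ∃ w, s.label.Allows w ∧ ∀ τ : ℕ, τ ≤ 44 → t₀ + τ ≤ T →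
      f (t₀ + τ) = f t₀ - slot a 0 + slot a τ + blockShift w τ := by
  obtain ⟨s, hb⟩ := h.exists_isBlock hR ht
  obtain ⟨w, hw, hpos⟩ : ∃ w, s.label.Allows w ∧ ∀ τ : ℕ, τ ≤ 43 → t₀ + τ ≤ T →
      f (t₀ + τ) = f t₀ - slot a 0 + slot a τ + blockShift w τ := by
    by_cases ha : a = 1
    · subst ha
      exact h.exists_pos_of_core hR hb
    · obtain ⟨w, hw⟩ := h.exists_controllerCycle ha
        ((hb.regs_eq h (by omega)).trans (if_neg ha))
      exact ⟨w, hw.allows, hw.pos⟩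
  refine ⟨s, hb, w, hw, fun τ hτ hτT => ?_⟩
  rcases hτ.lt_or_eq with hτ | rfl
  · exact hpos τ (by omega) hτT
  have hnext := (h.of_phase_zero (t₁ := t₀ + 43) (by omega)).sub_slot_eq 1 (by omega) (by omega)
  have h43 := hpos 43 le_rfl (by omega)
  have hshift : blockShift w 44 = blockShift w 43 := by cases w <;> rfl
  have hslot : slot a 44 = slot a 43 + (slot a 1 - slot a 0) :=
    (by decide : ∀ a : Fin 3, slot a 44 = slot a 43 + (slot a 1 - slot a 0)) a
  push_cast at h43 hnext ⊢
  rw [add_assoc] at hnext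
  norm_num at hnext
  omega

end Worldline

end Blocks

section Computation

/-- One step at phase `τ` of the registers of a block, where the left controller reads `x` from
outside of the block, and the right controller reads `y`. -/
def blockStep (τ : ℕ) (x y : Datum) (G : Fin 3 → Registers) : Option (Fin 3 → Registers) :=
  ((opAt 0 τ).exec (G 0) x (if looksRight 0 τ then (G 1).port else .nil)).bind fun g₀ =>
  ((opAt 1 τ).exec (G 1) (if looksLeft 1 τ then (G 0).port else .nil)
    (if looksRight 1 τ then (G 2).port else .nil)).bind fun e =>
  ((opAt 2 τ).exec (G 2) (if looksLeft 2 τ then (G 1).port else .nil) y).map fun g₂ => ![g₀, e, g₂]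

/-- The registers of a block after the phases `0, …, n - 1`, where `xL` and `xR` list the data read
from outside of the block. -/
def blockRun (xL xR : ℕ → Datum) (G : Fin 3 → Registers) : ℕ → Option (Fin 3 → Registers)
  | 0 => some G
  | n + 1 => (blockRun xL xR G n).bind (blockStep n (xL n) (xR n))

/-- The data `x` are those which a block reads during a cycle on a side where the neighbouring block
simulates `o`, with `none` if there is no such block. -/
structure Presents (o : Option Particle) (x : ℕ → Datum) : Prop where
  eq_nil : ∀ n, n ≠ 4 → n ≠ 6 → x n = .nil
  code : x 6 = o.elim .nil fun s => .code s.label 0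
  port : ∀ s, o = some s → x 4 = s.regs.port

lemma blockRegs_eq (s : Particle) :
    blockRegs s = ![controllerRegs s.label, s.regs, controllerRegs s.label] := by
  funext a
  fin_cases a <;> rfl

lemma blockStep_of_idle {τ : ℕ} (h : ∀ a, opAt a τ = .idle) (x y : Datum)
    (G : Fin 3 → Registers) : blockStep τ x y G = some G := by
  simp only [blockStep, h, Op.exec_idle, Option.bind_some, Option.map_some, Option.some_inj]
  funext a
  fin_cases a <;> rfl

@[simp] lemma Datum.orElse_nil (x : Datum) : x.orElse .nil = x := by
  rw [Datum.orElse]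
  split_ifs with h <;> simp [h]

@[simp] lemma Datum.nil_orElse (x : Datum) : Datum.orElse .nil x = x := if_pos rfl

section Prologue

variable (j : Label) (e : Registers)

lemma blockStep_zero :
    blockStep 0 .nil .nil ![controllerRegs j, e, controllerRegs j] =
      some ![⟨.code j 0, .code j 0, e.port⟩, e, ⟨.code j 0, .code j 0, e.port⟩] := by
  by_cases h : e.port = .skip <;>
    simp [blockStep, opAt, looksLeft, looksRight, Op.exec, Op.apply, controllerRegs, h]

lemma blockStep_one :
    blockStep 1 .nil .nil ![⟨.code j 0, .code j 0, e.port⟩, e, ⟨.code j 0, .code j 0, e.port⟩] =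
      some ![⟨e.port, .code j 0, .skip⟩, e, ⟨e.port, .code j 0, .skip⟩] := by
  simp [blockStep, opAt, looksLeft, Op.exec, Op.apply]

lemma blockStep_four (x y : Datum) :
    blockStep 4 x y ![⟨e.port, .code j 0, .skip⟩, e, ⟨e.port, .code j 0, .skip⟩] =
      some ![⟨e.port, .code j 0, x⟩, e, ⟨e.port, .code j 0, y⟩] := by
  by_cases h : x = .skip <;>
    simp [blockStep, opAt, looksLeft, looksRight, Op.exec, Op.apply, h]

lemma blockStep_five (x y : Datum) :
    blockStep 5 .nil .nil ![⟨e.port, .code j 0, x⟩, e, ⟨e.port, .code j 0, y⟩] =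
      some ![⟨.code j 0, .code j 0, x⟩, e, ⟨.code j 0, .code j 0, y⟩] := by
  simp [blockStep, opAt, looksLeft, Op.exec, Op.apply]

end Prologue

lemma Presents.exec_checkLeft {o : Option Particle} {x : ℕ → Datum} (h : Presents o x) (j : Label)
    (y : Datum) :
    Op.checkLeft.exec ⟨.code j 0, .code j 0, x 4⟩ (x 6) y =
      if okLeft j (o.map Particle.label) then some ⟨.code j 0, .code j 0, read true o⟩
      else none := by
  cases o with
  | none => simp [h.code, Op.exec, Op.apply, read]
  | some s => simp [h.code, h.port s rfl, Op.exec, Op.apply, read]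

lemma Presents.exec_checkRight {o : Option Particle} {x : ℕ → Datum} (h : Presents o x)
    (j : Label) :
    Op.checkRight.exec ⟨.code j 0, .code j 0, x 4⟩ .nil (x 6) =
      if okRight j (o.map Particle.label) then some ⟨.code j 0, .code j 0, read true o⟩
      else none := by
  cases o with
  | none => simp [h.code, Op.exec, Op.apply, read]
  | some s => simp [h.code, h.port s rfl, Op.exec, Op.apply, read]

variable {lo ro : Option Particle} {xL xR : ℕ → Datum}

lemma blockStep_six (hl : Presents lo xL) (hr : Presents ro xR) (j : Label) (e : Registers) :
    blockStep 6 (xL 6) (xR 6) ![⟨.code j 0, .code j 0, xL 4⟩, e, ⟨.code j 0, .code j 0, xR 4⟩] =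
      if okLeft j (lo.map Particle.label) ∧ okRight j (ro.map Particle.label) then
        some ![⟨.code j 0, .code j 0, read true lo⟩, e, ⟨.code j 0, .code j 0, read true ro⟩]
      else none := by
  have hcheckL := hl.exec_checkLeft j .nil
  have hcheckR := hr.exec_checkRight j
  simp only [blockStep, opAt, looksLeft, looksRight]
  by_cases h₁ : okLeft j (lo.map Particle.label) <;>
    by_cases h₂ : okRight j (ro.map Particle.label) <;>
    simp [hcheckL, hcheckR, h₁, h₂, Op.exec_idle]

lemma blockStep_eleven (s : Particle) (lo ro : Option Particle) :
    blockStep 11 .nil .nil ![⟨.code s.label 0, .code s.label 0, read true lo⟩, s.regs,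
        ⟨.code s.label 0, .code s.label 0, read true ro⟩] =
      some ![⟨.skip, .code s.label (opAt s.label.role s.label.phase).index, s.readLeft lo⟩, s.regs,
        ⟨s.readRight ro, .code s.label 0, s.readRight ro⟩] := by
  rw [blockStep, show opAt 0 11 = .initLeft by decide, show opAt 1 11 = .idle by decide,
    show opAt 2 11 = .initRight by decide, show looksLeft 2 11 = false by decide]
  cases h₁ : looksLeft s.label.role s.label.phase <;>
    cases h₂ : looksRight s.label.role s.label.phase <;>
    simp [Op.exec, Op.apply, Particle.readLeft, Particle.readRight, read, h₁, h₂]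

lemma blockRun_twelve (hl : Presents lo xL) (hr : Presents ro xR) (s : Particle) :
    blockRun xL xR (blockRegs s) 12 =
      if okLeft s.label (lo.map Particle.label) ∧ okRight s.label (ro.map Particle.label) then
        some ![⟨.skip, .code s.label (opAt s.label.role s.label.phase).index, s.readLeft lo⟩,
          s.regs, ⟨s.readRight ro, .code s.label 0, s.readRight ro⟩]
      else none := by
  have idle (τ : ℕ) (h : ∀ a, opAt a τ = .idle) := blockStep_of_idle h (xL τ) (xR τ)
  have nilL (τ : ℕ) (h : τ ≠ 4 ∧ τ ≠ 6) := hl.eq_nil τ h.1 h.2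
  have nilR (τ : ℕ) (h : τ ≠ 4 ∧ τ ≠ 6) := hr.eq_nil τ h.1 h.2
  simp only [blockRun, Option.bind_some, blockRegs_eq, nilL 0 (by decide), nilR 0 (by decide),
    blockStep_zero, nilL 1 (by decide), nilR 1 (by decide), blockStep_one, idle 2 (by decide),
    idle 3 (by decide), blockStep_four, nilL 5 (by decide), nilR 5 (by decide), blockStep_five,
    blockStep_six hl hr]
  split_ifs
  · simp only [Option.bind_some, idle 7 (by decide), idle 8 (by decide), idle 9 (by decide),
      idle 10 (by decide), nilL 11 (by decide), nilR 11 (by decide), blockStep_eleven]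
  · rfl

section Scan

variable (j : Label) (o : Op) (u v : Datum) (e : Registers)

lemma Op.ofIndex_index (o : Op) : Op.ofIndex o.index = o := by
  cases o <;> rfl

/-- The registers of a block at phase `13 + m`, when it simulates a particle labelled `j` which
performs the operation `o` on the data `u` and `v`. The left controller presents `u` in the only
phase in which the core tries `o`. -/
def scanRegs (m : ℕ) (e : Registers) : Fin 3 → Registers :=
  ![⟨if (o.index : ℕ) = m then u else .skip, .code j (o.index - Fin.ofNat 14 (m + 1)), u⟩, e,
    ⟨v, .code j 0, v⟩]

lemma exec_countdown_scanRegs {m : ℕ} (hm : m < 12) :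
    Op.countdown.exec (scanRegs j o u v m e 0) .nil .nil = some (scanRegs j o u v (m + 1) e 0) := by
  have hzero : o.index - Fin.ofNat 14 (m + 1) = 0 ↔ (o.index : ℕ) = m + 1 :=
    (by decide : ∀ n : Fin 14, ∀ m < 12, n - Fin.ofNat 14 (m + 1) = 0 ↔ (n : ℕ) = m + 1) _ m hm
  have hsub : o.index - Fin.ofNat 14 (m + 1) - 1 = o.index - Fin.ofNat 14 (m + 1 + 1) :=
    (by decide : ∀ n : Fin 14, ∀ m < 12,
      n - Fin.ofNat 14 (m + 1) - 1 = n - Fin.ofNat 14 (m + 1 + 1)) _ m hm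
  simp [scanRegs, Op.exec, Op.apply, hzero, hsub, -Fin.ofNat_eq_cast]

lemma exec_core_scanRegs (m : ℕ) :
    (Op.ofIndex m).exec e (scanRegs j o u v m e 0).port v =
      if (o.index : ℕ) = m then o.exec e u v else some e := by
  by_cases h : (o.index : ℕ) = m
  · simp [scanRegs, ← h, Op.ofIndex_index]
  · simp [scanRegs, h, Op.exec]

lemma blockStep_twelve :
    blockStep 12 .nil .nil ![⟨.skip, .code j o.index, u⟩, e, ⟨v, .code j 0, v⟩] =
      some (scanRegs j o u v 0 e) := by
  simp [blockStep, opAt, Op.exec, Op.apply, scanRegs]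
  rfl

lemma blockStep_scan {m : ℕ} (hm : m < 12) :
    blockStep (13 + m) .nil .nil (scanRegs j o u v m e) =
      (if (o.index : ℕ) = m then o.exec e u v else some e).map (scanRegs j o u v (m + 1)) := by
  obtain ⟨h₀, h₁, h₂, hl, hr, hr₀⟩ :=
    (by decide : ∀ m < 12, opAt 0 (13 + m) = .countdown ∧ opAt 1 (13 + m) = Op.ofIndex m ∧
      opAt 2 (13 + m) = .idle ∧ looksLeft 1 (13 + m) = true ∧ looksRight 1 (13 + m) = true ∧
      looksRight 0 (13 + m) = false) m hm
  rw [blockStep, h₀, h₁, h₂, hl, hr, hr₀, if_neg Bool.false_ne_true,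
    exec_countdown_scanRegs j o u v e hm, ← exec_core_scanRegs j o u v e m]
  simp only [Op.exec_idle, Option.bind_some, Option.map_some]
  change Option.bind ((Op.ofIndex m).exec e (scanRegs j o u v m e 0).port v) _ = _
  cases (Op.ofIndex m).exec e (scanRegs j o u v m e 0).port v <;> rfl

lemma blockStep_twenty_five :
    blockStep 25 .nil .nil (scanRegs j o u v 12 e) =
      (if (o.index : ℕ) = 12 then o.exec e u v else some e).map fun e' =>
        ![⟨.skip, .code j (o.index - 13), u⟩, e', ⟨.skip, .code j 0, v⟩] := by
  rw [← exec_core_scanRegs j o u v e 12, blockStep, show opAt 0 25 = .clearPort by decide,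
    show opAt 1 25 = Op.ofIndex 12 by decide, show opAt 2 25 = .clearPort by decide,
    show looksRight 0 25 = false by decide, show looksLeft 2 25 = false by decide]
  change Option.bind ((Op.ofIndex 12).exec e (scanRegs j o u v 12 e 0).port v) _ = _
  cases (Op.ofIndex 12).exec e (scanRegs j o u v 12 e 0).port v <;> rfl

variable {j o u v e} {G : Fin 3 → Registers}

lemma blockRun_scan (hl : Presents lo xL) (hr : Presents ro xR)
    (h : blockRun xL xR G 12 = some ![⟨.skip, .code j o.index, u⟩, e, ⟨v, .code j 0, v⟩]) {m : ℕ}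
    (hm : m ≤ 12) :
    blockRun xL xR G (13 + m) =
      (if m ≤ (o.index : ℕ) then some e else o.exec e u v).map (scanRegs j o u v m) := by
  induction m with
  | zero =>
    rw [blockRun, h, Option.bind_some, hl.eq_nil 12 (by decide) (by decide),
      hr.eq_nil 12 (by decide) (by decide), blockStep_twelve]
    simp
  | succ m ih =>
    rw [← add_assoc, blockRun, ih (by lia), hl.eq_nil _ (by lia) (by lia),
      hr.eq_nil _ (by lia) (by lia)]
    have hstep e' := blockStep_scan j o u v e' (show m < 12 by lia)
    rcases lt_trichotomy (o.index : ℕ) m with hlt | heq | hgt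
    · rw [if_neg (by lia), if_neg (by lia)]
      cases o.exec e u v <;> simp [hstep, hlt.ne]
    · rw [if_pos (by lia), if_neg (by lia)]
      simp [hstep, heq]
    · rw [if_pos (by lia), if_pos (by lia)]
      simp [hstep, hgt.ne']

lemma blockRun_twenty_six (hl : Presents lo xL) (hr : Presents ro xR)
    (h : blockRun xL xR G 12 = some ![⟨.skip, .code j o.index, u⟩, e, ⟨v, .code j 0, v⟩]) :
    blockRun xL xR G 26 = (o.exec e u v).map fun e' =>
      ![⟨.skip, .code j (o.index - 13), u⟩, e', ⟨.skip, .code j 0, v⟩] := by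
  rw [blockRun, blockRun_scan hl hr h (m := 12) le_rfl, hl.eq_nil 25 (by decide) (by decide),
    hr.eq_nil 25 (by decide) (by decide)]
  rcases lt_trichotomy (o.index : ℕ) 12 with hlt | heq | hgt
  · rw [if_neg (by lia)]
    cases o.exec e u v <;> simp [blockStep_twenty_five, hlt.ne]
  · rw [if_pos (by lia)]
    simp [blockStep_twenty_five, heq]
  · have ho : o = .idle := by
      rw [← Op.ofIndex_index o, show (o.index : ℕ) = 13 by lia]
      rfl
    rw [if_pos hgt.le, Option.map_some, Option.bind_some, blockStep_twenty_five, if_neg hgt.ne',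
      ho, Op.exec_idle]

end Scan

section Motion

variable {j : Label} {e e' : Registers} {u v : Datum} {G : Fin 3 → Registers}

lemma nextVel_port_eq_of_exec (h : (opAt j.role j.phase).exec e u v = some e') (d : Datum) :
    nextVel j e'.port d = nextVel j e.port d := by
  by_cases hmove : (RightPhase j.phase ∨ LeftPhase j.phase) ∧ j.role ≠ 1
  · have hidle := (by decide : ∀ a : Fin 3, ∀ τ : Fin 43,
      (RightPhase τ ∨ LeftPhase τ) ∧ a ≠ 1 → opAt a τ = .idle) _ _ hmove
    rw [hidle, Op.exec_idle, Option.some_inj] at h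
    rw [h]
  · unfold nextVel
    split_ifs <;> first | rfl | grind

/-- The registers of a block at the phases `28, …, 41`, when it simulates a particle which is
labelled `j` at the beginning of the cycle, and for which the left and the right controller have
computed the velocities `w` and `w'`. -/
def movingRegs (j : Label) (w w' : Velocity) (e : Registers) : Fin 3 → Registers :=
  ![⟨.vel w, .code (j.next w) 0, .skip⟩, e, ⟨.vel w', .code (j.next w') 0, .skip⟩]

lemma blockStep_twenty_six (j : Label) (n : Fin 14) (e : Registers) (u v : Datum) :
    blockStep 26 .nil .nil ![⟨.skip, .code j n, u⟩, e, ⟨.skip, .code j 0, v⟩] =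
      some ![⟨e.port, .code j n, u⟩, e, ⟨e.port, .code j 0, v⟩] := by
  by_cases h : e.port = .skip <;>
    simp [blockStep, opAt, looksLeft, looksRight, Op.exec, Op.apply, h]

lemma blockStep_twenty_seven (j : Label) (n : Fin 14) (e : Registers) (u v : Datum) :
    blockStep 27 .nil .nil ![⟨e.port, .code j n, u⟩, e, ⟨e.port, .code j 0, v⟩] =
      some (movingRegs j (nextVel j e.port u) (nextVel j e.port v) e) := by
  simp [blockStep, opAt, looksLeft, Op.exec, Op.apply, movingRegs]

lemma blockStep_twenty_eight (j : Label) (w w' : Velocity) (e : Registers) :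
    blockStep 28 .nil .nil (movingRegs j w w' e) =
      if w = w' then some (movingRegs j w w' e) else none := by
  by_cases h : w = w' <;>
    simp [blockStep, opAt, looksLeft, looksRight, Op.exec, Op.apply, movingRegs, h]

lemma blockRun_eq_none {m n : ℕ} (h : blockRun xL xR G m = none) (hmn : m ≤ n) :
    blockRun xL xR G n = none := by
  induction n, hmn using Nat.le_induction with
  | base => exact h
  | succ n _ ih => rw [blockRun, ih, Option.bind_none]

lemma blockRun_twenty_nine (hl : Presents lo xL) (hr : Presents ro xR) (s : Particle) :
    blockRun xL xR (blockRegs s) 29 =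
      (localStep lo s ro).map fun s' => movingRegs s.label s'.label.vel s'.label.vel s'.regs := by
  have h₁₂ := blockRun_twelve hl hr s
  by_cases hok : okLeft s.label (lo.map Particle.label) ∧ okRight s.label (ro.map Particle.label)
  · rw [if_pos hok] at h₁₂
    simp only [blockRun.eq_2 _ _ _ 28, blockRun.eq_2 _ _ _ 27, blockRun.eq_2 _ _ _ 26,
      blockRun_twenty_six hl hr h₁₂, hl.eq_nil 26 (by decide) (by decide),
      hr.eq_nil 26 (by decide) (by decide), hl.eq_nil 27 (by decide) (by decide),
      hr.eq_nil 27 (by decide) (by decide), hl.eq_nil 28 (by decide) (by decide),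
      hr.eq_nil 28 (by decide) (by decide)]
    cases he : (opAt s.label.role s.label.phase).exec s.regs (s.readLeft lo) (s.readRight ro) with
    | none => simp [localStep, he]
    | some e =>
      simp only [Option.map_some, Option.bind_some, blockStep_twenty_six, blockStep_twenty_seven,
        blockStep_twenty_eight, nextVel_port_eq_of_exec he]
      by_cases hv : nextVel s.label s.regs.port (s.readLeft lo) =
          nextVel s.label s.regs.port (s.readRight ro) <;>
        simp [localStep, he, hok, hv, Label.next]
  · rw [if_neg hok] at h₁₂
    rw [blockRun_eq_none h₁₂ (by decide), localStep, if_neg fun h => hok ⟨h.1, h.2.1⟩,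
      Option.map_none]

lemma blockRun_moving (hl : Presents lo xL) (hr : Presents ro xR) (s : Particle) {n : ℕ}
    (hn : n ≤ 12) :
    blockRun xL xR (blockRegs s) (29 + n) =
      (localStep lo s ro).map fun s' => movingRegs s.label s'.label.vel s'.label.vel s'.regs := by
  induction n with
  | zero => exact blockRun_twenty_nine hl hr s
  | succ n ih =>
    have hidle : ∀ a, opAt a (29 + n) = .idle := fun a =>
      (by decide : ∀ n < 12, ∀ a, opAt a (29 + n) = .idle) n (by lia) a
    rw [← add_assoc, blockRun, ih (by lia), funext (blockStep_of_idle hidle _ _),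
      Option.bind_fun_some]

lemma label_of_localStep_eq_some {l s r s'} (h : localStep l s r = some s') :
    s'.label = s.label.next s'.label.vel := by
  obtain ⟨-, g, -, rfl⟩ : _ ∧ ∃ g, _ ∧ _ = s' := by
    simpa [localStep, Option.map_eq_some_iff] using h
  rfl

lemma blockRun_forty_three (hl : Presents lo xL) (hr : Presents ro xR) (s : Particle) :
    blockRun xL xR (blockRegs s) 43 = (localStep lo s ro).map blockRegs := by
  simp only [blockRun.eq_2 _ _ _ 42, blockRun.eq_2 _ _ _ 41,
    blockRun_moving hl hr s (n := 12) le_rfl, hl.eq_nil 41 (by decide) (by decide),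
    hr.eq_nil 41 (by decide) (by decide), hl.eq_nil 42 (by decide) (by decide),
    hr.eq_nil 42 (by decide) (by decide)]
  cases h : localStep lo s ro with
  | none => rfl
  | some s' =>
    simp [blockStep, opAt, looksLeft, looksRight, Op.exec, Op.apply, movingRegs, blockRegs_eq,
      controllerRegs, ← label_of_localStep_eq_some h]

end Motion

end Computation

section BlockCycles

variable {ω : History} {f : ℤ → ℤ} {T t₀ x : ℤ} {a : Fin 3} {s : Particle} {w : Velocity}
  {lo : Option Particle}

section Port

lemma opAt_zero : ∀ a : Fin 3, a ≠ 1 → opAt a 0 = .load := by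
  decide

lemma opAt_one : ∀ a : Fin 3, a ≠ 1 → opAt a 1 = .publish ∧ looksLeft a 1 = false := by
  decide

lemma opAt_five : ∀ a : Fin 3, a ≠ 1 → opAt a 5 = .showCode ∧ looksLeft a 5 = false := by
  decide

lemma Op.regs_eq_of_exec_load_left {g g' : Registers} {x : Datum}
    (h : Op.load.exec ⟨g.port, g.code, .skip⟩ x .nil = some g') : g' = ⟨g.port, g.code, x⟩ := by
  grind [Op.exec, Op.apply, Datum.orElse_nil]

lemma Op.regs_eq_of_exec_load_right {g g' : Registers} {y : Datum}
    (h : Op.load.exec g .nil y = some g') : g' = ⟨g.port, g.code, y⟩ := by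
  grind [Op.exec, Op.apply, Datum.nil_orElse]

lemma Op.port_eq_of_exec_showCode {g g' : Registers} {y : Datum} {j : Label} {n : Fin 14}
    (h : Op.showCode.exec g .nil y = some g') (hg : g.code = .code j n) : g'.port = .code j 0 := by
  grind [Op.exec, Op.apply]

namespace Worldline

lemma regs_one (h : Worldline ω f T t₀ a) (ha : a ≠ 1) (hb : IsBlock ω t₀ (f t₀ - slot a 0) s)
    (ht : t₀ + 1 ≤ T) :
    (stateAlong ω f (t₀ + 1)).regs = ⟨.code s.label 0, .code s.label 0, s.regs.port⟩ := by
  have hregs := hb.regs_eq h (by omega)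
  obtain ⟨l, r, hstep⟩ := h.exists_stepData (τ := 0) (by omega) (by omega)
  have hexec := hstep.exec_eq
  have hcore := hb 1
  rw [blockRegs, if_neg ha] at hregs
  simp only [Nat.cast_zero, add_zero] at hexec hstep
  rw [opAt_zero a ha, hregs] at hexec
  match a, ha with
  | 0, _ =>
    obtain ⟨c, rfl, hc, -⟩ := hstep.exists_right_of_req (a' := 1) (by decide)
    rw [show f t₀ - slot 0 0 + slot 1 0 = f t₀ + 1 by simp [slot]; ring, hc] at hcore
    rw [Option.some.inj hcore] at hexec
    exact Op.regs_eq_of_exec_load_right hexec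
  | 2, _ =>
    obtain ⟨c, rfl, hc, -⟩ := hstep.exists_left_of_req (a' := 1) (by decide)
    rw [show f t₀ - slot 2 0 + slot 1 0 = f t₀ - 1 by simp [slot]; ring, hc] at hcore
    rw [Option.some.inj hcore] at hexec
    exact Op.regs_eq_of_exec_load_left (g := controllerRegs s.label) hexec

lemma port_four (h : Worldline ω f T t₀ a) (ha : a ≠ 1) (hb : IsBlock ω t₀ (f t₀ - slot a 0) s)
    (ht : t₀ + 4 ≤ T) : (stateAlong ω f (t₀ + 4)).regs.port = s.regs.port := by
  obtain ⟨l, r, hstep⟩ := h.exists_stepData (τ := 1) (by omega) (by omega)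
  have hexec := hstep.exec_eq
  rw [(opAt_one a ha).1, (opAt_one a ha).2, read_false, Nat.cast_one,
    h.regs_one ha hb (by omega)] at hexec
  have hidle : ∀ τ, τ = 2 ∨ τ = 3 → opAt a τ = .idle := by
    rintro τ (rfl | rfl)
    · exact (by decide : ∀ a : Fin 3, opAt a 2 = .idle) a
    · exact (by decide : ∀ a : Fin 3, opAt a 3 = .idle) a
  have h3 := h.regs_succ_of_idle (τ := 2) (by omega) (by omega) (hidle 2 (.inl rfl))
  have h4 := h.regs_succ_of_idle (τ := 3) (by omega) (by omega) (hidle 3 (.inr rfl))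
  simp only [Nat.cast_ofNat, add_assoc, Int.reduceAdd] at h3 h4 hexec
  rw [h4, h3, ← Option.some.inj hexec]

lemma port_six (h : Worldline ω f T t₀ a) (ha : a ≠ 1) (hb : IsBlock ω t₀ (f t₀ - slot a 0) s)
    (ht : t₀ + 6 ≤ T) : (stateAlong ω f (t₀ + 6)).regs.port = .code s.label 0 := by
  have hregs := (hb.regs_eq h (by omega)).trans (if_neg ha)
  obtain ⟨l, r, hstep⟩ := h.exists_stepData (τ := 5) (by omega) (by omega)
  have hexec := hstep.exec_eq
  rw [(opAt_five a ha).1, (opAt_five a ha).2, read_false] at hexec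
  obtain ⟨n, hn⟩ := h.exists_code ha hregs 5 (by omega) (by omega)
  have := Op.port_eq_of_exec_showCode hexec hn
  simpa only [Nat.cast_ofNat, add_assoc, Int.reduceAdd] using this

end Worldline

end Port

lemma IsBlock.unique {s' : Particle} (h : IsBlock ω t₀ x s) (h' : IsBlock ω t₀ x s') : s = s' := by
  have h₀ := (h 0).symm.trans (h' 0)
  have h₁ := (h 1).symm.trans (h' 1)
  simp only [blockRegs, if_pos, Option.some.injEq, Particle.mk.injEq, true_and] at h₁
  have hlabel : s.label = s'.label := by simpa [blockRegs, controllerRegs] using h₀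
  exact Particle.ext hlabel h₁

/-- The worldlines, during the cycle starting at time `t₀`, of the particles of a block which is at
`x` and simulates `s`, where `w` is the next velocity of `s`. -/
structure BlockCycle (ω : History) (t₀ x : ℤ) (s : Particle) (w : Velocity) (f : Fin 3 → ℤ → ℤ) :
    Prop where
  isBlock : IsBlock ω t₀ x s
  worldline : ∀ a, Worldline ω (f a) (t₀ + 43) t₀ a
  pos : ∀ a, ∀ τ : ℕ, τ ≤ 43 → f a (t₀ + τ) = x + slot a τ + blockShift w τ

lemma IsBlock.exists_worldline (hR : IsHistory ω) (h : IsBlock ω (t₀ + 43) x s) (a : Fin 3) :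
    ∃ f, Worldline ω f (t₀ + 43) t₀ a ∧ f (t₀ + 43) = x + slot a 0 := by
  obtain ⟨f, hf, hpos, -⟩ := ParticleCA.exists_worldline hR (h a)
  exact ⟨f, hf.of_phase_zero (by simp), hpos⟩

lemma IsBlock.exists_blockCycle (hR : IsHistory ω) (h : IsBlock ω (t₀ + 43) x s) :
    ∃ s₀ f, BlockCycle ω t₀ (x - 5 * s.label.vel.toInt) s₀ s.label.vel f := by
  choose f hf hpos using h.exists_worldline hR
  have haligned (a b : Fin 3) (hab : a = 0 ∧ b = 1 ∨ a = 1 ∧ b = 2) (n : ℕ) (hn : n ≤ 43) :=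
    (hf a).aligned_of_le hR (hf b) hab le_rfl (by simp)
      (by push_cast; rw [hpos, hpos, slot_eq_slot_zero (τ := 43) a (by omega),
            slot_eq_slot_zero (τ := 43) b (by omega)]; ring) hn
  have h01 := haligned 0 1 (by simp)
  have h12 := haligned 1 2 (by simp)
  obtain ⟨s₀, hb⟩ := (hf 0).exists_isBlock hR (by omega)
  obtain ⟨w, hw⟩ := (hf 0).exists_controllerCycle (by decide)
    ((hb.regs_eq (hf 0) (by omega)).trans (if_neg (by decide)))
  have hvel : s.label.vel = w := by
    have hcode := hw.code_eq le_rfl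
    have hregs := (h 0).symm.trans ((hpos 0) ▸ (hf 0).alive (t₀ + 43) le_rfl)
    rw [← Option.some.inj hregs] at hcode
    have : s.label = s₀.label.next w := by simpa [blockRegs, controllerRegs] using hcode
    rw [this, Label.next]
  have h43 := hw.pos 43 le_rfl (by simp)
  rw [Nat.cast_ofNat, hpos, slot_eq_slot_zero (τ := 43) 0 (by omega), blockShift_forty_three]
    at h43
  have hx : f 0 t₀ - slot 0 0 = x - 5 * w.toInt := by omega
  rw [hvel]
  refine ⟨s₀, f, hx ▸ hb, hf, fun a τ hτ => ?_⟩
  have h₀ := hw.pos τ hτ (by omega)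
  have h₁ := h01 τ hτ
  have h₂ := h12 τ hτ
  match a with
  | 0 => omega
  | 1 => omega
  | 2 => omega

/-- What a neighbouring block may find out about the cells `x, …, x + 4` at time `t₀`: the particle
simulated there, or nothing if no block there survives its cycle. -/
def ObservesBlock (ω : History) (t₀ x : ℤ) (lo : Option Particle) : Prop :=
  (∃ s, lo = some s ∧ IsBlock ω t₀ x s) ∨
    (lo = none ∧ ∀ x' s', IsBlock ω (t₀ + 43) x' s' → x' - 5 * s'.label.vel.toInt ≠ x)

lemma observesBlock_none (hR : IsHistory ω) (h : Observes ω (t₀ + 6) (x + slot a 6) none) :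
    ObservesBlock ω t₀ x none := by
  refine .inr ⟨rfl, ?_⟩
  rintro x' s' hb rfl
  obtain ⟨s, f, hf⟩ := hb.exists_blockCycle hR
  have hpos := hf.pos a 6 (by omega)
  rw [blockShift_eq_zero _ (by omega), add_zero, Nat.cast_ofNat] at hpos
  rw [← hpos] at h
  have := h.eq_of_survives ((hf.worldline a).survives (by omega))
  rw [(hf.worldline a).alive _ (by omega)] at this
  exact Option.some_ne_none _ this.symm

lemma exists_observesBlock (hR : IsHistory ω) (ha : a ≠ 1) {l : ℕ → Option Particle}
    (h₄ : Observes ω (t₀ + 4) (x + slot a 6) (l 4)) (h₆ : Observes ω (t₀ + 6) (x + slot a 6) (l 6))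
    (hopt : ∀ s, l 6 = some s → s.label.role = a ∧ (s.label.phase : ℕ) = 6) :
    ∃ lo, ObservesBlock ω t₀ x lo ∧
      Presents lo fun τ => read (decide (τ = 4 ∨ τ = 6)) (l τ) := by
  have hnil (n : ℕ) (hn₄ : n ≠ 4) (hn₆ : n ≠ 6) : read (decide (n = 4 ∨ n = 6)) (l n) = .nil := by
    simp [read, hn₄, hn₆]
  cases hl : l 6 with
  | none => exact ⟨none, observesBlock_none hR (hl ▸ h₆), hnil, by simp [read, hl], by simp⟩
  | some c =>
    obtain ⟨f, hf, hpos, hstate⟩ := exists_worldline hR (hl ▸ h₆).eq_some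
    obtain ⟨hrole, hphase⟩ := hopt c hl
    rw [hrole, hphase, Nat.cast_ofNat, add_sub_cancel_right] at hf
    obtain ⟨s, hb⟩ := hf.exists_isBlock hR (by omega)
    have hpos₆ := hf.sub_slot_eq 6 (by omega) (by push_cast; omega)
    have hpos₄ := hf.sub_slot_eq 4 (by omega) (by push_cast; omega)
    have hslot : slot a 4 = slot a 6 := (by decide : ∀ a : Fin 3, slot a 4 = slot a 6) a
    push_cast at hpos₄ hpos₆
    refine ⟨some s, .inl ⟨s, rfl, ?_⟩, hnil, ?_, ?_⟩
    · rwa [show x = f t₀ - slot a 0 by omega]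
    · have hport := hf.port_six ha hb le_rfl
      rw [hstate] at hport
      simpa [read, hl] using hport
    · rintro _ ⟨rfl⟩
      have hport := hf.port_four ha hb (by omega)
      rw [show x + slot a 6 = f (t₀ + 4) by omega] at h₄
      rw [h₄.eq_of_survives (hf.survives (by omega)), hf.alive _ (by omega)]
      simpa [read] using hport

lemma looksRight_zero : ∀ τ < 43, looksRight 0 τ →
    expectRight 0 τ = .req 1 ∧ slot 1 τ = slot 0 τ + 1 := by
  decide

lemma looksLeft_one : ∀ τ < 43, looksLeft 1 τ →
    expectLeft 1 τ = .req 0 ∧ slot 1 τ = slot 0 τ + 1 := by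
  decide

lemma looksRight_one : ∀ τ < 43, looksRight 1 τ →
    expectRight 1 τ = .req 2 ∧ slot 2 τ = slot 1 τ + 1 := by
  decide

lemma looksLeft_two : ∀ τ < 43, looksLeft 2 τ →
    expectLeft 2 τ = .req 1 ∧ slot 2 τ = slot 1 τ + 1 := by
  decide

namespace BlockCycle

variable {f : Fin 3 → ℤ → ℤ} {l r : Option Particle} {τ : ℕ} {b : Fin 3}

lemma read_left_eq (hf : BlockCycle ω t₀ x s w f) (hτ : τ < 43)
    (h : StepData ω (f a) a (t₀ + τ) τ l r)
    (hlook : looksLeft a τ → expectLeft a τ = .req b ∧ slot a τ = slot b τ + 1) :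
    read (looksLeft a τ) l =
      if looksLeft a τ then (stateAlong ω (f b) (t₀ + τ)).regs.port else .nil := by
  by_cases hl : looksLeft a τ
  · obtain ⟨he, hslot⟩ := hlook hl
    obtain ⟨c, rfl, hc, -⟩ := h.exists_left_of_req he
    rw [show f a (t₀ + τ) - 1 = f b (t₀ + τ) by
      rw [hf.pos a τ hτ.le, hf.pos b τ hτ.le, hslot]; ring,
      (hf.worldline b).alive _ (by omega), Option.some_inj] at hc
    simp [read, hl, hc]
  · simp [read, hl]

lemma read_right_eq (hf : BlockCycle ω t₀ x s w f) (hτ : τ < 43)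
    (h : StepData ω (f a) a (t₀ + τ) τ l r)
    (hlook : looksRight a τ → expectRight a τ = .req b ∧ slot b τ = slot a τ + 1) :
    read (looksRight a τ) r =
      if looksRight a τ then (stateAlong ω (f b) (t₀ + τ)).regs.port else .nil := by
  by_cases hr : looksRight a τ
  · obtain ⟨he, hslot⟩ := hlook hr
    obtain ⟨c, rfl, hc, -⟩ := h.exists_right_of_req he
    rw [show f a (t₀ + τ) + 1 = f b (t₀ + τ) by
      rw [hf.pos a τ hτ.le, hf.pos b τ hτ.le, hslot]; ring,
      (hf.worldline b).alive _ (by omega), Option.some_inj] at hc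
    simp [read, hr, hc]
  · simp [read, hr]

lemma blockRegs_eq (hf : BlockCycle ω t₀ x s w f) :
    blockRegs s = fun a => (stateAlong ω (f a) t₀).regs := by
  funext a
  have hpos := hf.pos a 0 (by omega)
  rw [blockShift_eq_zero _ (by omega), Nat.cast_zero, add_zero, add_zero] at hpos
  refine (IsBlock.regs_eq ?_ (hf.worldline a) (by omega)).symm
  rw [hpos, add_sub_cancel_right]
  exact hf.isBlock

lemma blockRun_eq (hf : BlockCycle ω t₀ x s w f) {l r : Fin 3 → ℕ → Option Particle}
    (h : ∀ a, ∀ τ : ℕ, τ < 43 → StepData ω (f a) a (t₀ + τ) τ (l a τ) (r a τ)) (n : ℕ)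
    (hn : n ≤ 43) :
    blockRun (fun τ => read (looksLeft 0 τ) (l 0 τ)) (fun τ => read (looksRight 2 τ) (r 2 τ))
      (blockRegs s) n = some fun a => (stateAlong ω (f a) (t₀ + n)).regs := by
  induction n with
  | zero => simp [blockRun, hf.blockRegs_eq]
  | succ n ih =>
    have h₀ := (h 0 n hn).exec_eq
    have h₁ := (h 1 n hn).exec_eq
    have h₂ := (h 2 n hn).exec_eq
    rw [hf.read_right_eq hn (h 0 n hn) (looksRight_zero n hn)] at h₀
    rw [hf.read_left_eq hn (h 1 n hn) (looksLeft_one n hn),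
      hf.read_right_eq hn (h 1 n hn) (looksRight_one n hn)] at h₁
    rw [hf.read_left_eq hn (h 2 n hn) (looksLeft_two n hn)] at h₂
    rw [blockRun, ih (by omega), Option.bind_some, blockStep, h₀, Option.bind_some, h₁,
      Option.bind_some, h₂, Option.map_some, Option.some_inj]
    push_cast [← add_assoc]
    funext a
    fin_cases a <;> rfl

lemma exists_left (hR : IsHistory ω) (hf : BlockCycle ω t₀ x s w f)
    {l r : ℕ → Option Particle}
    (h : ∀ τ : ℕ, τ < 43 → StepData ω (f 0) 0 (t₀ + τ) τ (l τ) (r τ)) :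
    ∃ lo, ObservesBlock ω t₀ (x - 5) lo ∧ Presents lo fun τ => read (looksLeft 0 τ) (l τ) := by
  have hobs (τ : ℕ) (hτ : τ = 4 ∨ τ = 6) : Observes ω (t₀ + τ) (x - 5 + slot 2 6) (l τ) := by
    have := (h τ (by omega)).observes_left
    rwa [hf.pos 0 τ (by omega), blockShift_eq_zero _ (by omega),
      show x + slot 0 τ + 0 - 1 = x - 5 + slot 2 6 by
        rcases hτ with rfl | rfl <;> simp [slot] <;> ring] at this
  refine exists_observesBlock hR (a := 2) (by decide) (hobs 4 (.inl rfl)) (hobs 6 (.inr rfl)) ?_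
  intro c hc
  rcases (h 6 (by omega)).left_of_opt (a' := 2) (by decide) with hl | ⟨c', hl, -, hc'⟩
  · simp [hc] at hl
  · rw [hc, Option.some_inj] at hl
    exact hl ▸ hc'

lemma exists_right (hR : IsHistory ω) (hf : BlockCycle ω t₀ x s w f)
    {l r : ℕ → Option Particle}
    (h : ∀ τ : ℕ, τ < 43 → StepData ω (f 2) 2 (t₀ + τ) τ (l τ) (r τ)) :
    ∃ ro, ObservesBlock ω t₀ (x + 5) ro ∧ Presents ro fun τ => read (looksRight 2 τ) (r τ) := by
  have hobs (τ : ℕ) (hτ : τ = 4 ∨ τ = 6) : Observes ω (t₀ + τ) (x + 5 + slot 0 6) (r τ) := by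
    have := (h τ (by omega)).observes_right
    rwa [hf.pos 2 τ (by omega), blockShift_eq_zero _ (by omega),
      show x + slot 2 τ + 0 + 1 = x + 5 + slot 0 6 by
        rcases hτ with rfl | rfl <;> simp [slot] <;> ring] at this
  refine exists_observesBlock hR (a := 0) (by decide) (hobs 4 (.inl rfl)) (hobs 6 (.inr rfl)) ?_
  intro c hc
  rcases (h 6 (by omega)).right_of_opt (a' := 0) (by decide) with hr | ⟨c', hr, -, hc'⟩
  · simp [hc] at hr
  · rw [hc, Option.some_inj] at hr
    exact hr ▸ hc'

end BlockCycle

lemma blockRegs_injective : Function.Injective blockRegs := by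
  intro s s' h
  refine Particle.ext ?_ (congrFun h 1)
  simpa [blockRegs, controllerRegs] using congrFun h 0

lemma IsBlock.exists_localStep {s' : Particle} (hR : IsHistory ω) (h : IsBlock ω (t₀ + 43) x s') :
    ∃ s lo ro, IsBlock ω t₀ (x - 5 * s'.label.vel.toInt) s ∧
      ObservesBlock ω t₀ (x - 5 * s'.label.vel.toInt - 5) lo ∧
      ObservesBlock ω t₀ (x - 5 * s'.label.vel.toInt + 5) ro ∧ localStep lo s ro = some s' := by
  obtain ⟨s, f, hf⟩ := h.exists_blockCycle hR
  choose! l r hstep using fun a τ (hτ : τ < 43) =>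
    (hf.worldline a).exists_stepData (τ := τ) (by omega) hτ
  obtain ⟨lo, hlo, hl⟩ := hf.exists_left hR (l := l 0) (hstep 0)
  obtain ⟨ro, hro, hr⟩ := hf.exists_right hR (r := r 2) (hstep 2)
  refine ⟨s, lo, ro, hf.isBlock, hlo, hro, ?_⟩
  have hrun := hf.blockRun_eq hstep 43 le_rfl
  rw [blockRun_forty_three hl hr, Option.map_eq_some_iff] at hrun
  obtain ⟨s'', hs'', hregs⟩ := hrun
  rw [hs'', Option.some_inj]
  refine blockRegs_injective (hregs.trans (funext fun a => ?_))
  refine IsBlock.regs_eq ?_ ((hf.worldline a).of_phase_zero (by simp)) le_rfl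
  have hpos := hf.pos a 43 le_rfl
  rw [blockShift_forty_three, slot_eq_slot_zero (τ := 43) a (by omega)] at hpos
  rw [show f a (t₀ + (43 : ℕ)) - slot a 0 = x by omega]
  exact h

/-- The space-time diagram simulated by the blocks which start at positions congruent to `b` modulo
`5` and at times congruent to `s` modulo `43`. -/
@[irreducible] noncomputable def decode (ω : History) (b s : ℤ) : History := fun t p =>
  open Classical in
  if h : ∃ c, IsBlock ω (s + 43 * t) (b + 5 * p) c then some h.choose else none

lemma decode_eq_some {b s t p : ℤ} {c : Particle} :
    decode ω b s t p = some c ↔ IsBlock ω (s + 43 * t) (b + 5 * p) c := by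
  unfold decode
  split_ifs with h
  · rw [Option.some_inj]
    exact ⟨fun hc => hc ▸ h.choose_spec, h.choose_spec.unique⟩
  · exact iff_of_false nofun fun hc => h ⟨c, hc⟩

lemma ObservesBlock.observes_decode {b s t p : ℤ}
    (h : ObservesBlock ω (s + 43 * t) (b + 5 * p) lo) : Observes (decode ω b s) t p lo := by
  rcases h with ⟨c, rfl, hc⟩ | ⟨rfl, hnone⟩
  · exact .inl (decode_eq_some.2 hc).symm
  · refine .inr ⟨rfl, ?_⟩
    rintro ⟨c, hc⟩
    rw [decode_eq_some, mul_add, mul_one, ← add_assoc] at hc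
    exact hnone _ _ hc (by ring)

theorem isHistory_decode (hR : IsHistory ω) (b s : ℤ) : IsHistory (decode ω b s) := by
  intro t p c h
  rw [decode_eq_some, mul_add, mul_one, ← add_assoc] at h
  obtain ⟨c₀, lo, ro, hb, hlo, hro, hstep⟩ := h.exists_localStep hR
  rw [show b + 5 * p - 5 * c.label.vel.toInt = b + 5 * (p - c.label.vel.toInt) by ring]
    at hb hlo hro
  rw [add_sub_assoc, show 5 * (p - c.label.vel.toInt) - 5 = 5 * (p - c.label.vel.toInt - 1) by ring]
    at hlo
  rw [add_assoc, show 5 * (p - c.label.vel.toInt) + 5 = 5 * (p - c.label.vel.toInt + 1) by ring]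
    at hro
  exact ⟨c₀, decode_eq_some.2 hb, lo, ro, hlo.observes_decode, hro.observes_decode, hstep⟩

end BlockCycles

/-! ### Hulls and addresses -/

section Components

variable {ω : History} {f g γ : ℤ → ℤ} {T T₁ t₀ t₁ b s : ℤ} {a a' : Fin 3}

lemma Velocity.abs_toInt_le (v : Velocity) : |v.toInt| ≤ 1 := by
  cases v <;> decide

lemma Label.not_allows_left {j j' : Label} (h : j'.phase = j.phase) (hj : j.Allows .right) :
    ¬ j'.Allows .left := by
  have key : ∀ a a' : Fin 3, ∀ τ : Fin 43, Label.Allows ⟨a, τ, .stay⟩ .right →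
      ¬ Label.Allows ⟨a', τ, .stay⟩ .left := by
    unfold Label.Allows
    decide
  have := key j.role j'.role j.phase hj
  rwa [← h] at this

lemma Steps.allows {t q : ℤ} {c c' : Particle} (h : Steps ω t q c c') :
    c.label.Allows c'.label.vel := by
  obtain ⟨l, r, -, -, h⟩ := h
  rw [(localStep_eq_some.1 h).2.2.2.2]
  exact allows_nextVel _ _ _

lemma Expectation.phase_eq_of_check {e : Expectation} {τ : Fin 43} {j : Label}
    (h : e.check τ (some j)) : j.phase = τ := by
  cases e <;> simp_all [Expectation.check]

lemma Steps.phase_right_eq {t q : ℤ} {c c' d : Particle} (h : Steps ω t q c c')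
    (hd : ω t (q + 1) = some d) (hs : Survives ω t (q + 1)) : d.label.phase = c.label.phase := by
  obtain ⟨l, r, -, hr, h⟩ := h
  rw [hr.eq_of_survives hs, hd] at h
  exact Expectation.phase_eq_of_check (localStep_eq_some.1 h).2.1

namespace Worldline

lemma abs_succ_sub_le (h : Worldline ω f T t₀ a) {t : ℤ} (ht : t + 1 ≤ T) :
    |f (t + 1) - f t| ≤ 1 := by
  rw [h.pos t ht, add_sub_cancel_left]
  exact Velocity.abs_toInt_le _

lemma abs_sub_le (h : Worldline ω f T t₀ a) {u t : ℤ} (hut : u ≤ t) (ht : t ≤ T) :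
    |f t - f u| ≤ t - u := by
  induction t, hut using Int.leInduction with
  | base => simp
  | succ t _ ih =>
    have := h.abs_succ_sub_le ht
    have := ih (by omega)
    rw [abs_le] at *
    omega

lemma le_succ_of_lt (hf : Worldline ω f T t₀ a) (hg : Worldline ω g T₁ t₁ a') {t : ℤ}
    (hT : t + 1 ≤ T) (hT₁ : t + 1 ≤ T₁) (hfg : f t < g t) : f (t + 1) ≤ g (t + 1) := by
  by_contra! hlt
  have hf_speed := abs_le.1 (hf.abs_succ_sub_le hT)
  have hg_speed := abs_le.1 (hg.abs_succ_sub_le hT₁)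
  have hnext : g t = f t + 1 := by omega
  have hright : (stateAlong ω f (t + 1)).label.vel = .right := by
    have := hf.pos t hT
    cases h : (stateAlong ω f (t + 1)).label.vel <;> simp only [h, Velocity.toInt] at this <;>
      first | rfl | omega
  have hleft : (stateAlong ω g (t + 1)).label.vel = .left := by
    have := hg.pos t hT₁
    cases h : (stateAlong ω g (t + 1)).label.vel <;> simp only [h, Velocity.toInt] at this <;>
      first | rfl | omega
  have hphase := (hf.steps t hT).phase_right_eq (hnext ▸ hg.alive t (by omega))
    (hnext ▸ hg.survives hT₁)
  exact Label.not_allows_left hphase (hright ▸ (hf.steps t hT).allows)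
    (hleft ▸ (hg.steps t hT₁).allows)

lemma le_of_lt (hf : Worldline ω f T t₀ a) (hg : Worldline ω g T₁ t₁ a') {u t : ℤ} (hut : u ≤ t)
    (hT : t ≤ T) (hT₁ : t ≤ T₁) (hu : f u < g u) : f t ≤ g t := by
  induction t, hut using Int.leInduction with
  | base => exact hu.le
  | succ t hut ih =>
    rcases (ih (by omega) (by omega)).lt_or_eq with h | h
    · exact hf.le_succ_of_lt hg hT hT₁ h
    · exact absurd (hf.eq_of_le hg (by omega) (by omega) h hut) hu.ne

end Worldline

/-- `f` is the worldline, up to time `s + 43 * T`, of the particle of role `a` in the block which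
simulates the particle with worldline `γ` in `decode ω b s`. -/
structure IsComponent (ω : History) (b s : ℤ) (γ : ℤ → ℤ) (a : Fin 3) (f : ℤ → ℤ) (T : ℤ) :
    Prop where
  offset : 0 ≤ b ∧ b < 5
  phase : 0 ≤ s ∧ s < 43
  worldline : Worldline ω f (s + 43 * T) s a
  exists_worldline : ∃ t₀ a', Worldline (decode ω b s) γ T t₀ a'
  pos_start : ∀ t ≤ T, f (s + 43 * t) = b + 5 * γ t + slot a 0
  pos : ∀ t, t + 1 ≤ T → ∃ w : Velocity, γ (t + 1) = γ t + w.toInt ∧ ∀ τ : ℕ, τ ≤ 43 →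
    f (s + 43 * t + τ) = b + 5 * γ t + slot a τ + blockShift w τ

lemma Worldline.pos_cycle (hR : IsHistory ω) (hγ : Worldline (decode ω b s) γ T t₀ a')
    (hf : Worldline ω f (s + 43 * T) s a) {t : ℤ} (ht : t + 1 ≤ T)
    (hpos : f (s + 43 * (t + 1)) = b + 5 * γ (t + 1) + slot a 0) {τ : ℕ} (hτ : τ ≤ 43) :
    f (s + 43 * t + τ) = b + 5 * γ t + slot a τ +
      blockShift (stateAlong (decode ω b s) γ (t + 1)).label.vel τ := by
  have hblock := decode_eq_some.1 (hγ.alive (t + 1) ht)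
  rw [show s + 43 * (t + 1) = s + 43 * t + 43 by ring] at hblock hpos
  obtain ⟨c, g, hg⟩ := hblock.exists_blockCycle hR
  have hend := hg.pos a 43 le_rfl
  rw [blockShift_forty_three, slot_eq_slot_zero (τ := 43) a (by omega)] at hend
  have hmeet : f (s + 43 * t + 43) = g a (s + 43 * t + 43) := by
    refine hpos.trans (Eq.trans ?_ hend.symm)
    ring
  rw [hf.eq_of_le (hg.worldline a) (by omega) le_rfl hmeet (by omega), hg.pos a τ hτ, hγ.pos t ht]
  ring

lemma Worldline.isComponent (hR : IsHistory ω) (hb : 0 ≤ b ∧ b < 5) (hs : 0 ≤ s ∧ s < 43)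
    (hγ : Worldline (decode ω b s) γ T t₀ a') (hf : Worldline ω f (s + 43 * T) s a)
    (hpos : f (s + 43 * T) = b + 5 * γ T + slot a 0) : IsComponent ω b s γ a f T := by
  have hstart (t : ℤ) (ht : t ≤ T) : f (s + 43 * t) = b + 5 * γ t + slot a 0 := by
    induction t, ht using Int.leInductionDown with
    | base => exact hpos
    | pred t ht ih =>
      have := hγ.pos_cycle hR hf (t := t - 1) (by omega) (by simpa using ih) (Nat.zero_le 43)
      simpa [blockShift_eq_zero] using this
  exact ⟨hb, hs, hf, ⟨t₀, a', hγ⟩, hstart, fun t ht =>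
    ⟨_, hγ.pos t ht, fun τ hτ => hγ.pos_cycle hR hf ht (hstart _ ht) hτ⟩⟩

lemma Worldline.exists_component (hR : IsHistory ω) (hb : 0 ≤ b ∧ b < 5) (hs : 0 ≤ s ∧ s < 43)
    (hγ : Worldline (decode ω b s) γ T t₀ a') (a : Fin 3) : ∃ f, IsComponent ω b s γ a f T := by
  have hblock := decode_eq_some.1 (hγ.alive T le_rfl)
  obtain ⟨f, hf, hpos, -⟩ := exists_worldline hR (hblock a)
  exact ⟨f, hγ.isComponent hR hb hs (hf.of_phase_zero (by simp)) hpos⟩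

lemma Worldline.exists_isComponent (hR : IsHistory ω) (hs : 0 ≤ s ∧ s < 43)
    (hf : Worldline ω f T s a) (hT : s + 43 * T₁ + 2 ≤ T) :
    ∃ b γ w, IsComponent ω b s γ a f T₁ ∧
      (stateAlong (decode ω b s) γ T₁).label.Allows w ∧
      ∀ τ : ℕ, τ ≤ 44 → s + 43 * T₁ + τ ≤ T →
        f (s + 43 * T₁ + τ) = b + 5 * γ T₁ + slot a τ + blockShift w τ := by
  obtain ⟨c, hblock, w, hw, hpos⟩ :=
    (hf.of_phase_zero (t₁ := s + 43 * T₁) (by omega)).exists_isBlock_pos hR hT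
  set x := f (s + 43 * T₁) - slot a 0
  have hx_mod : x % 5 + 5 * (x / 5) = x := Int.emod_add_mul_ediv x 5
  have hdecode : decode ω (x % 5) s T₁ (x / 5) = some c := by rwa [decode_eq_some, hx_mod]
  obtain ⟨γ, hγ, hγ_pos, hγ_state⟩ := exists_worldline (isHistory_decode hR _ _) hdecode
  refine ⟨x % 5, γ, w, hγ.isComponent hR (by omega) hs (hf.mono (by omega)) (by omega),
    hγ_state ▸ hw, fun τ hτ ht => ?_⟩
  rw [hpos τ hτ ht, hγ_pos, hx_mod]

/-- The position `p` is one which the particle on the path `f` occupies at time `T` or may move to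
in the next step. -/
def MayReach (ω : History) (f : ℤ → ℤ) (T p : ℤ) : Prop :=
  p = f T ∨ ∃ w, (stateAlong ω f T).label.Allows w ∧ p = f T + w.toInt

/-- The positions `x` modulo `5` and times `y` modulo `43`, relative to the start of a block cycle,
which no particle of a block occupies or is about to occupy. -/
def Vacant (x y : ℤ) : Prop :=
  (y = 0 ∧ (x = 0 ∨ x = 4)) ∨ (y = 4 ∧ (x = 1 ∨ x = 3)) ∨ (y = 8 ∧ x = 2)

instance (x y : ℤ) : Decidable (Vacant x y) := by unfold Vacant; infer_instance

instance (j : Label) (w : Velocity) : Decidable (j.Allows w) := by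
  unfold Label.Allows; infer_instance

lemma not_vacant_slot (w : Velocity) : ∀ a : Fin 3, ∀ τ : ℕ, τ < 45 → 2 ≤ τ →
    ((slot a τ + blockShift w τ) / 5 = 0 ∨ (slot a τ + blockShift w τ) / 5 = w.toInt) ∧
      ¬ Vacant ((slot a τ + blockShift w τ) % 5) (τ % 43 : ℤ) := by
  cases w <;> decide

lemma not_vacant_slot_add (w w' : Velocity) : ∀ a : Fin 3, ∀ τ : ℕ, τ < 45 → 2 ≤ τ →
    Label.Allows ⟨a, Fin.ofNat 43 τ, .stay⟩ w' →
    ((slot a τ + blockShift w τ + w'.toInt) / 5 = 0 ∨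
      (slot a τ + blockShift w τ + w'.toInt) / 5 = w.toInt) ∧
      ¬ Vacant ((slot a τ + blockShift w τ + w'.toInt) % 5) (τ % 43 : ℤ) := by
  cases w <;> cases w' <;> decide

lemma MayReach.coarse {p : ℤ} {w : Velocity} {τ : ℕ} (hf : Worldline ω f T s a)
    (hT : T = s + 43 * T₁ + τ) (hτ : 2 ≤ τ) (hτ' : τ < 45)
    (hw : (stateAlong (decode ω b s) γ T₁).label.Allows w)
    (hpos : f T = b + 5 * γ T₁ + slot a τ + blockShift w τ) (hp : MayReach ω f T p) :
    MayReach (decode ω b s) γ T₁ ((p - b) / 5) ∧ ¬ Vacant ((p - b) % 5) ((T - s) % 43) := by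
  obtain ⟨d, hd, hquot, hmod⟩ : ∃ d, p - b = 5 * γ T₁ + d ∧ (d / 5 = 0 ∨ d / 5 = w.toInt) ∧
      ¬ Vacant (d % 5) (τ % 43 : ℤ) := by
    obtain h | ⟨w', hw', h⟩ := hp
    · exact ⟨slot a τ + blockShift w τ, by omega, not_vacant_slot w a τ hτ' hτ⟩
    · refine ⟨slot a τ + blockShift w τ + w'.toInt, by omega,
        not_vacant_slot_add w w' a τ hτ' hτ ?_⟩
      have hphase : (stateAlong ω f T).label.phase = Fin.ofNat 43 τ := by
        have := hf.phase_eq T le_rfl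
        apply Fin.ext
        simp only [Fin.ofNat]
        omega
      simp only [Label.Allows, hphase, hf.role_eq T le_rfl] at hw' ⊢
      exact hw'
  rw [show (T - s) % 43 = τ % 43 by omega, show (p - b) % 5 = d % 5 by omega]
  refine ⟨?_, hmod⟩
  rw [hd, Int.add_ediv_of_dvd_left (dvd_mul_right _ _), Int.mul_ediv_cancel_left _ (by decide)]
  rcases hquot with h | h
  · exact Or.inl (by rw [h, add_zero])
  · exact Or.inr ⟨w, hw, by rw [h]⟩

end Components

section Hulls

open Filter

variable {ω : History} {f g h γ γ' L R L' R' : ℤ → ℤ} {T T₁ t₀ t₁ b s : ℤ} {a a' : Fin 3}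
  {l l' : List (ℤ × ℤ)}

/-- The path `f` is, in the past, the worldline of a particle of `ω` which lies in a block of
`decode ω b s` simulating a particle which lies in a block of the next level, and so on; the address
lists the offsets `(b, s)` of the successive levels. -/
def HasAddress : List (ℤ × ℤ) → History → (ℤ → ℤ) → Prop
  | [], ω, f => ∃ T t₀ a, Worldline ω f T t₀ a
  | (b, s) :: l, ω, f => ∃ γ a T, IsComponent ω b s γ a f T ∧ HasAddress l (decode ω b s) γ

lemma HasAddress.exists_worldline (hf : HasAddress l ω f) : ∃ T t₀ a, Worldline ω f T t₀ a := by
  match l, hf with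
  | [], hf => exact hf
  | (_, _) :: _, ⟨_, _, _, hf, _⟩ => exact ⟨_, _, _, hf.worldline⟩

lemma IsComponent.hasAddress_cons (hf : IsComponent ω b s γ a f T)
    (hγ : HasAddress l (decode ω b s) γ) : HasAddress ((b, s) :: l) ω f :=
  ⟨γ, a, T, hf, hγ⟩

lemma IsComponent.offsets_unique {b' s' : ℤ} (hf : IsComponent ω b s γ a f T)
    (hg : IsComponent ω b' s' γ' a' g T₁) (hfg : f =ᶠ[atBot] g) :
    b = b' ∧ s = s' ∧ γ =ᶠ[atBot] γ' := by
  obtain ⟨U, hU⟩ := eventually_atBot.1 hfg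
  have ⟨hb₀, hb₅⟩ := hf.offset
  have ⟨hb₀', hb₅'⟩ := hg.offset
  have ⟨hs₀, hs₄₃⟩ := hf.phase
  have ⟨hs₀', hs₄₃'⟩ := hg.phase
  obtain ⟨rfl, hphase⟩ := hf.worldline.role_phase_unique hg.worldline
    (t := min U (min (s + 43 * T) (s' + 43 * T₁))) (by simp) (by simp) (hU _ (by simp))
  obtain rfl : s = s' := by omega
  have hγ (t : ℤ) (ht : t ≤ min T (min T₁ ((U - s) / 43))) : b + 5 * γ t = b' + 5 * γ' t := by
    have hf_pos := hf.pos_start t (by omega)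
    have hg_pos := hg.pos_start t (by omega)
    have := hU (s + 43 * t) (by omega)
    omega
  obtain rfl : b = b' := by
    have := hγ _ le_rfl
    omega
  refine ⟨rfl, rfl, ?_⟩
  filter_upwards [eventually_le_atBot (min T (min T₁ ((U - s) / 43)))] with t ht
  have := hγ t ht
  omega

lemma HasAddress.eq_of_eventuallyEq (hlen : l.length = l'.length) (hf : HasAddress l ω f)
    (hg : HasAddress l' ω g) (hfg : f =ᶠ[atBot] g) : l = l' := by
  induction l generalizing l' ω f g with
  | nil => exact (List.length_eq_zero_iff.1 hlen.symm).symm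
  | cons x l ih =>
    match l', hg with
    | (_, _) :: l', ⟨γ', a', T', hg, hγ'⟩ =>
      obtain ⟨γ, a, T, hf, hγ⟩ := hf
      obtain ⟨rfl, rfl, hγγ'⟩ := hf.offsets_unique hg hfg
      rw [ih (by simpa using hlen) hγ hγ' hγγ']

lemma Worldline.lt_or_lt (hf : Worldline ω f T t₀ a) (hg : Worldline ω g T₁ t₁ a')
    (hne : ¬ f =ᶠ[atBot] g) {t : ℤ} (hT : t ≤ T) (hT₁ : t ≤ T₁) :
    (∀ u ≤ t, f u < g u) ∨ ∀ u ≤ t, g u < f u := by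
  have hne' (u : ℤ) (hu : u ≤ t) : f u ≠ g u := fun hfg =>
    hne (eventually_atBot.2 ⟨u, fun _ => hf.eq_of_le hg (hu.trans hT) (hu.trans hT₁) hfg⟩)
  rcases (hne' t le_rfl).lt_or_gt with hlt | hlt
  · refine .inl fun u hu => (hne' u hu).lt_of_le (not_lt.1 fun hlt' => ?_)
    exact hlt.not_ge (hg.le_of_lt hf hu hT₁ hT hlt')
  · refine .inr fun u hu => (hne' u hu).symm.lt_of_le (not_lt.1 fun hlt' => ?_)
    exact hlt.not_ge (hf.le_of_lt hg hu hT hT₁ hlt')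

/-- The paths `f` and `g` have the address `l`, and `g` is immediately to the right of `f`
arbitrarily far in the past. -/
def Touching (l : List (ℤ × ℤ)) (ω : History) (f g : ℤ → ℤ) : Prop :=
  HasAddress l ω f ∧ HasAddress l ω g ∧ ∃ᶠ t in atBot, g t = f t + 1

lemma eventually_lt_of_chain (hchain : Relation.ReflTransGen (Touching l ω) L R)
    (hh : Worldline ω h T t₀ a) (hne : ∀ f, HasAddress l ω f → ¬ f =ᶠ[atBot] h)
    (hlt : ∀ᶠ t in atBot, L t < h t) : ∀ᶠ t in atBot, R t < h t := by
  induction hchain with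
  | refl => exact hlt
  | @tail f g _ htouch ih =>
    obtain ⟨-, hg, htouch⟩ := htouch
    obtain ⟨T₁, t₁, a₁, hg'⟩ := hg.exists_worldline
    rcases hg'.lt_or_lt hh (hne g hg) (min_le_left T₁ T) (min_le_right T₁ T) with hgh | hgh
    · exact eventually_atBot.2 ⟨_, hgh⟩
    · obtain ⟨t, htouch, hfh, hgh⟩ := (htouch.and_eventually
        (ih.and (eventually_atBot.2 ⟨_, hgh⟩))).exists
      omega

/-- The paths `L` and `R` are worldlines up to time `T`, and are joined by a chain of touching
worldlines of address `l`, so that no other worldline can pass between them. -/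
structure IsHull (l : List (ℤ × ℤ)) (ω : History) (L R : ℤ → ℤ) (T : ℤ) : Prop where
  hasAddress_left : HasAddress l ω L
  hasAddress_right : HasAddress l ω R
  chain : Relation.ReflTransGen (Touching l ω) L R
  worldline_left : ∃ t₀ a, Worldline ω L T t₀ a
  worldline_right : ∃ t₀ a, Worldline ω R T t₀ a

lemma IsHull.mono (hl : IsHull l ω L R T) (hT : T₁ ≤ T) : IsHull l ω L R T₁ := by
  obtain ⟨_, _, hL⟩ := hl.worldline_left
  obtain ⟨_, _, hR⟩ := hl.worldline_right
  exact ⟨hl.hasAddress_left, hl.hasAddress_right, hl.chain, ⟨_, _, hL.mono hT⟩, ⟨_, _, hR.mono hT⟩⟩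

lemma IsHull.lt_or_lt (hl : IsHull l ω L R T) (hh : Worldline ω h T₁ t₀ a)
    (hne : ∀ f, HasAddress l ω f → ¬ f =ᶠ[atBot] h) {t : ℤ} (hT : t ≤ T) (hT₁ : t ≤ T₁) :
    h t < L t ∨ R t < h t := by
  obtain ⟨_, _, hL⟩ := hl.worldline_left
  obtain ⟨_, _, hR⟩ := hl.worldline_right
  rcases hL.lt_or_lt hh (hne _ hl.hasAddress_left) hT hT₁ with hLh | hLh
  · have hRh := eventually_lt_of_chain hl.chain hh hne (eventually_atBot.2 ⟨t, hLh⟩)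
    rcases hR.lt_or_lt hh (hne _ hl.hasAddress_right) hT hT₁ with hRh' | hRh'
    · exact .inr (hRh' t le_rfl)
    · obtain ⟨u, hu, hu'⟩ := (hRh.and (eventually_atBot.2 ⟨t, hRh'⟩)).exists
      exact absurd hu hu'.not_gt
  · exact .inl (hLh t le_rfl)

lemma IsHull.disjoint (hl : IsHull l ω L R T) (hl' : IsHull l' ω L' R' T₁)
    (hlen : l.length = l'.length) (hne : l ≠ l') {t : ℤ} (hT : t ≤ T) (hT₁ : t ≤ T₁) :
    R t < L' t ∨ R' t < L t := by
  have hne' {f g} (hf : HasAddress l ω f) (hg : HasAddress l' ω g) : ¬ f =ᶠ[atBot] g :=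
    fun hfg => hne (hf.eq_of_eventuallyEq hlen hg hfg)
  obtain ⟨_, _, hL⟩ := hl.worldline_left
  obtain ⟨_, _, hL'⟩ := hl'.worldline_left
  rcases hl.lt_or_lt hL' (fun f hf => hne' hf hl'.hasAddress_left) hT hT₁ with hlt | hlt
  · rcases hl'.lt_or_lt hL (fun f hf hfL => hne' hl.hasAddress_left hf hfL.symm) hT₁ hT with
      hlt' | hlt'
    · exact absurd hlt hlt'.not_gt
    · exact .inr hlt'
  · exact .inl hlt

lemma IsComponent.frequently_eq_add_one (hf : IsComponent ω b s γ a f T)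
    (hg : IsComponent ω b s γ' a' g T₁) {τ : ℕ} (hτ : τ ≤ 31)
    (hslot : ∃ᶠ t in atBot, 5 * γ' t + slot a' τ = 5 * γ t + slot a τ + 1) :
    ∃ᶠ t in atBot, g t = f t + 1 := by
  rw [frequently_atBot] at hslot ⊢
  intro t
  obtain ⟨u, hu, hslot⟩ := hslot (min (T - 1) (min (T₁ - 1) ((t - s - 43) / 43)))
  obtain ⟨w, -, hf_pos⟩ := hf.pos u (by omega)
  obtain ⟨w', -, hg_pos⟩ := hg.pos u (by omega)
  refine ⟨s + 43 * u + τ, by omega, ?_⟩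
  rw [hf_pos τ (by omega), hg_pos τ (by omega), blockShift_eq_zero w hτ, blockShift_eq_zero w' hτ]
  omega

lemma IsComponent.chain_left_right (hR : IsHistory ω) (hγ : HasAddress l (decode ω b s) γ)
    (hf : IsComponent ω b s γ 0 f T) (hg : IsComponent ω b s γ 2 g T₁) :
    Relation.ReflTransGen (Touching ((b, s) :: l) ω) f g := by
  obtain ⟨T', t₀, a, hγ'⟩ := hγ.exists_worldline
  obtain ⟨h, hh⟩ := hγ'.exists_component hR hf.offset hf.phase 1
  refine .tail (.single (b := h) ⟨hf.hasAddress_cons hγ, hh.hasAddress_cons hγ, ?_⟩)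
    ⟨hh.hasAddress_cons hγ, hg.hasAddress_cons hγ, ?_⟩
  · exact hf.frequently_eq_add_one hh (Nat.zero_le 31) (.of_forall fun t => by simp [slot]; ring)
  · exact hh.frequently_eq_add_one hg (Nat.zero_le 31) (.of_forall fun t => by simp [slot]; ring)

lemma IsComponent.chain (hR : IsHistory ω) (hγ : HasAddress l (decode ω b s) γ)
    (hchain : Relation.ReflTransGen (Touching l (decode ω b s)) γ γ')
    (hf : IsComponent ω b s γ 0 f T) (hg : IsComponent ω b s γ' 2 g T₁) :
    Relation.ReflTransGen (Touching ((b, s) :: l) ω) f g := by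
  induction hchain generalizing g T₁ with
  | refl => exact hf.chain_left_right hR hγ hg
  | tail _ htouch ih =>
    obtain ⟨hc, hd, htouch⟩ := htouch
    obtain ⟨_, _, _, hc'⟩ := hc.exists_worldline
    obtain ⟨_, _, _, hd'⟩ := hd.exists_worldline
    obtain ⟨e, he⟩ := hc'.exists_component hR hf.offset hf.phase 2
    obtain ⟨e', he'⟩ := hd'.exists_component hR hf.offset hf.phase 0
    refine ((ih he).tail ⟨he.hasAddress_cons hc, he'.hasAddress_cons hd, ?_⟩).trans
      (he'.chain_left_right hR hd hg)
    -- At phase `4` a block fills its cell of width `5`, so that neighbouring blocks touch.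
    refine he.frequently_eq_add_one he' (τ := 4) (by omega) (htouch.mono fun t ht => ?_)
    rw [ht, show slot 0 4 = 0 from rfl, show slot 2 4 = 4 from rfl]
    ring

lemma IsHull.cons (hR : IsHistory ω) (hl : IsHull l (decode ω b s) L R T)
    (hf : IsComponent ω b s L 0 f T) (hg : IsComponent ω b s R 2 g T) :
    IsHull ((b, s) :: l) ω f g (s + 43 * T) :=
  ⟨hf.hasAddress_cons hl.hasAddress_left, hg.hasAddress_cons hl.hasAddress_right,
    hf.chain hR hl.hasAddress_left hl.chain hg, ⟨_, _, hf.worldline⟩, ⟨_, _, hg.worldline⟩⟩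

/-- At every level of the address `l`, the place of the block cycle which contains the position `p`
at time `t` is not vacant. -/
def Inhabitable : List (ℤ × ℤ) → ℤ → ℤ → Prop
  | [], _, _ => True
  | (b, s) :: l, p, t => ¬ Vacant ((p - b) % 5) ((t - s) % 43) ∧
      Inhabitable l ((p - b) / 5) ((t - 2 - s) / 43)

lemma min_le_blockShift_sub (w w' : Velocity) : ∀ τ : ℕ, τ ≤ 43 →
    min 0 (5 * (w'.toInt - w.toInt)) ≤ blockShift w' τ - blockShift w τ := by
  cases w <;> cases w' <;> decide

lemma slot_bounds : ∀ a : Fin 3, ∀ τ : ℕ, τ ≤ 43 →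
    slot 0 τ ≤ slot a τ ∧ slot a τ ≤ slot 2 τ ∧ 2 ≤ slot 2 τ - slot 0 τ := by
  decide

lemma IsComponent.exists_le_sub {d U t : ℤ} (hf : IsComponent ω b s γ a f T)
    (hg : IsComponent ω b s γ' a' g T₁) (hT : U ≤ T) (hT₁ : U ≤ T₁)
    (hd : ∀ u ≤ U, d ≤ γ' u - γ u) (ht : t ≤ s + 43 * U) :
    ∃ τ : ℕ, τ ≤ 43 ∧ 5 * d + slot a' τ - slot a τ ≤ g t - f t := by
  rcases ht.lt_or_eq with hlt | rfl
  · obtain ⟨u, τ, hτ, rfl⟩ : ∃ (u : ℤ) (τ : ℕ), τ < 43 ∧ t = s + 43 * u + τ :=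
      ⟨(t - s) / 43, ((t - s) % 43).toNat, by omega, by omega⟩
    obtain ⟨w, hw, hf_pos⟩ := hf.pos u (by omega)
    obtain ⟨w', hw', hg_pos⟩ := hg.pos u (by omega)
    have hd₀ := hd u (by omega)
    have hd₁ := hd (u + 1) (by omega)
    have := min_le_blockShift_sub w w' τ hτ.le
    rw [hf_pos τ hτ.le, hg_pos τ hτ.le]
    exact ⟨τ, hτ.le, by omega⟩
  · refine ⟨0, by omega, ?_⟩
    rw [hf.pos_start U hT, hg.pos_start U hT₁]
    have := hd U le_rfl
    omega

lemma IsComponent.left_le {t : ℤ} (hf : IsComponent ω b s γ 0 f T)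
    (hg : IsComponent ω b s γ' a' g T₁) (hT : T ≤ T₁) (hle : ∀ u ≤ T, γ u ≤ γ' u)
    (ht : t ≤ s + 43 * T) : f t ≤ g t := by
  obtain ⟨τ, hτ, hsub⟩ := hf.exists_le_sub hg le_rfl hT (d := 0)
    (fun u hu => sub_nonneg.2 (hle u hu)) ht
  have := slot_bounds a' τ hτ
  omega

lemma IsComponent.le_right {t : ℤ} (hf : IsComponent ω b s γ a f T)
    (hg : IsComponent ω b s γ' 2 g T₁) (hT₁ : T₁ ≤ T) (hle : ∀ u ≤ T₁, γ u ≤ γ' u)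
    (ht : t ≤ s + 43 * T₁) : f t ≤ g t := by
  obtain ⟨τ, hτ, hsub⟩ := hf.exists_le_sub hg hT₁ le_rfl (d := 0)
    (fun u hu => sub_nonneg.2 (hle u hu)) ht
  have := slot_bounds a τ hτ
  omega

lemma IsComponent.le_right_sub_left {d t : ℤ} (hf : IsComponent ω b s γ 0 f T)
    (hg : IsComponent ω b s γ' 2 g T) (hd : ∀ u ≤ T, d ≤ γ' u - γ u) (ht : t ≤ s + 43 * T) :
    5 * d + 2 ≤ g t - f t := by
  obtain ⟨τ, hτ, hsub⟩ := hf.exists_le_sub hg le_rfl le_rfl hd ht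
  have := slot_bounds 0 τ hτ
  omega

theorem Worldline.exists_isHull (n : ℕ) {p : ℤ} (hR : IsHistory ω) (hf : Worldline ω f T t₀ a)
    (hp : MayReach ω f T p) :
    ∃ l, l.length = n ∧ Inhabitable l p T ∧ ∃ L R, IsHull l ω L R (T - 2 * 43 ^ n + 2) ∧
      ∀ t ≤ T - 2 * 43 ^ n + 2, L t ≤ f t ∧ f t ≤ R t ∧ 5 ^ n - 1 ≤ 2 * (R t - L t) := by
  induction n generalizing ω f T t₀ a p with
  | zero =>
    have hf' := hf.mono (T₁ := T - 2 * 43 ^ 0 + 2) (by simp)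
    exact ⟨[], rfl, trivial, f, f, ⟨⟨_, _, _, hf⟩, ⟨_, _, _, hf⟩, .refl, ⟨_, _, hf'⟩, ⟨_, _, hf'⟩⟩,
      fun t _ => by simp⟩
  | succ n ih =>
    set s := t₀ % 43
    set T₁ := (T - 2 - s) / 43
    replace hf : Worldline ω f T s a := hf.of_phase_zero (by omega)
    obtain ⟨b, γ, w, hcomp, hw, hpos⟩ := hf.exists_isComponent hR (T₁ := T₁) (by omega) (by omega)
    obtain ⟨τ, hτ⟩ : ∃ τ : ℕ, T = s + 43 * T₁ + τ := ⟨(T - (s + 43 * T₁)).toNat, by omega⟩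
    obtain ⟨hreach, hvacant⟩ := hp.coarse hf hτ (by omega) (by omega) hw
      (by have := hpos τ (by omega) hτ.ge; rwa [← hτ] at this)
    obtain ⟨t₁, a₁, hγ⟩ := hcomp.exists_worldline
    obtain ⟨l, hlen, hinhabitable, L, R, hhull, hbounds⟩ := ih (isHistory_decode hR b s) hγ hreach
    set U := T₁ - 2 * 43 ^ n + 2
    have ⟨_, _, hL⟩ := hhull.worldline_left
    have ⟨_, _, hR'⟩ := hhull.worldline_right
    obtain ⟨f₀, h₀⟩ := hL.exists_component hR hcomp.offset hcomp.phase 0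
    obtain ⟨f₂, h₂⟩ := hR'.exists_component hR hcomp.offset hcomp.phase 2
    have hpow : (1 : ℤ) ≤ 43 ^ n := one_le_pow₀ (by norm_num)
    have hU : T - 2 * 43 ^ (n + 1) + 2 ≤ s + 43 * U := by omega
    refine ⟨(b, s) :: l, by simp [hlen], ⟨hvacant, hinhabitable⟩, f₀, f₂,
      (hhull.cons hR h₀ h₂).mono hU, fun t ht => ?_⟩
    obtain ⟨c, hc⟩ : ∃ c : ℤ, (5 : ℤ) ^ n = 2 * c + 1 := Odd.pow (by decide)
    have hwidth := h₀.le_right_sub_left h₂ (d := c)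
      (fun u hu => by have := (hbounds u hu).2.2; omega) (ht.trans hU)
    exact ⟨h₀.left_le hcomp (by omega) (fun u hu => (hbounds u hu).1) (ht.trans hU),
      hcomp.le_right h₂ (by omega) (fun u hu => (hbounds u hu).2.1) (ht.trans hU), by omega⟩

lemma abs_blockShift_le (w : Velocity) (τ : ℕ) : |blockShift w τ| ≤ 5 := by
  cases w with
  | stay => simp [blockShift]
  | left | right => simp only [blockShift, abs_le]; split_ifs <;> omega

lemma slot_mem_Icc (a : Fin 3) (τ : ℕ) : slot a τ ∈ Set.Icc 0 4 := by
  unfold slot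
  split_ifs <;> simp

theorem Worldline.abs_sub_le_pow (n : ℕ) (hR : IsHistory ω) (hf : Worldline ω f T t₀ a) {t : ℤ}
    (ht : t ≤ T) (hn : T - t ≤ 3 * 43 ^ n + 2) : |f T - f t| ≤ 15 * 5 ^ n - 10 := by
  induction n generalizing ω f T t₀ a t with
  | zero =>
    have := hf.abs_sub_le ht le_rfl
    omega
  | succ n ih =>
    have hspeed := hf.abs_sub_le ht le_rfl
    set s := t₀ % 43
    set T₁ := (T - 2 - s) / 43
    replace hf : Worldline ω f T s a := hf.of_phase_zero (by omega)
    obtain ⟨b, γ, w, hcomp, -, hpos⟩ := hf.exists_isComponent hR (T₁ := T₁) (by omega) (by omega)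
    obtain ⟨u, τ, hτ, rfl⟩ : ∃ (u : ℤ) (τ : ℕ), τ < 43 ∧ t = s + 43 * u + τ :=
      ⟨(t - s) / 43, ((t - s) % 43).toNat, by omega, by omega⟩
    have hpow : (1 : ℤ) ≤ 5 ^ n := one_le_pow₀ (by norm_num)
    by_cases hu : u + 1 ≤ T₁
    · obtain ⟨t₁, a₁, hγ⟩ := hcomp.exists_worldline
      have hcoarse := ih (isHistory_decode hR b s) hγ (t := u) (by omega) (by omega)
      obtain ⟨σ, hσ⟩ : ∃ σ : ℕ, T = s + 43 * T₁ + σ := ⟨(T - (s + 43 * T₁)).toNat, by omega⟩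
      obtain ⟨w', -, hpos'⟩ := hcomp.pos u hu
      have hT := hpos σ (by omega) hσ.ge
      have ht := hpos' τ hτ.le
      rw [← hσ] at hT
      have := abs_le.1 (abs_blockShift_le w σ)
      have := abs_le.1 (abs_blockShift_le w' τ)
      obtain ⟨_, _⟩ := slot_mem_Icc a σ
      obtain ⟨_, _⟩ := slot_mem_Icc a τ
      rw [abs_le] at *
      omega
    · omega

end Hulls

/-! ### Sparsity -/

section Sparsity

variable {ω : History} {b s i i' k k' p t : ℤ} {l : List (ℤ × ℤ)} {m M N : ℕ}

lemma count_mul (a b : ℕ) (P : ℕ → Prop) [DecidablePred P] :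
    Nat.count P (a * b) = ∑ ρ ∈ Finset.range a, Nat.count (fun n => P (ρ + a * n)) b := by
  induction b with
  | zero => simp
  | succ b ih =>
    rw [Nat.mul_succ, Nat.count_add, ih, Nat.count_eq_card_filter_range _ a, Finset.card_filter,
      ← Finset.sum_add_distrib]
    simp_rw [Nat.count_succ, add_comm (a * b)]

instance decidableInhabitable : ∀ (l : List (ℤ × ℤ)) (p t : ℤ), Decidable (Inhabitable l p t)
  | [], _, _ => inferInstanceAs (Decidable True)
  | (b, s) :: l, p, t =>
    have := decidableInhabitable l ((p - b) / 5) ((t - 2 - s) / 43)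
    inferInstanceAs (Decidable (¬ Vacant ((p - b) % 5) ((t - s) % 43) ∧ _))

lemma count_inhabitable_cons_le (hi : i * m = 5 * i') (hk : k * m = 43 * k')
    (hM : ∀ p t, Nat.count (fun n => Inhabitable l (p + i' * n) (t + k' * n)) N ≤ M) (ρ : ℕ) :
    Nat.count (fun n => Inhabitable ((b, s) :: l) (p + i * ↑(ρ + m * n)) (t + k * ↑(ρ + m * n))) N ≤
      M := by
  refine (Nat.count_mono_left fun n _ hn => ?_).trans
    (hM ((p + i * ρ - b) / 5) ((t + k * ρ - 2 - s) / 43))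
  have hp : p + i * ↑(ρ + m * n) - b = p + i * ρ - b + 5 * (i' * n) := by
    push_cast
    linear_combination n * hi
  have ht : t + k * ↑(ρ + m * n) - 2 - s = t + k * ρ - 2 - s + 43 * (k' * n) := by
    push_cast
    linear_combination n * hk
  have htail := hn.2
  rwa [hp, ht, Int.add_mul_ediv_left _ _ (by norm_num),
    Int.add_mul_ediv_left _ _ (by norm_num)] at htail

lemma exists_vacant_phase (x : ℤ) : ∃ y, 0 ≤ y ∧ y < 43 ∧ Vacant (x % 5) y := by
  obtain h | h | h | h | h : x % 5 = 0 ∨ x % 5 = 1 ∨ x % 5 = 2 ∨ x % 5 = 3 ∨ x % 5 = 4 := by omega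
  · exact ⟨0, by rw [h]; decide⟩
  · exact ⟨4, by rw [h]; decide⟩
  · exact ⟨8, by rw [h]; decide⟩
  · exact ⟨4, by rw [h]; decide⟩
  · exact ⟨0, by rw [h]; decide⟩

lemma exists_vacant (p t i : ℤ) (hk : ¬ (43 : ℤ) ∣ k) :
    ∃ ρ < 215, Vacant ((p + i * (ρ : ℕ)) % 5) ((t + k * ρ) % 43) := by
  obtain ⟨y, hy₀, hy₄₃, hy⟩ := exists_vacant_phase p
  have h43 : Prime (43 : ℤ) := Int.prime_iff_natAbs_prime.2 (by norm_num)
  obtain ⟨u, v, huv⟩ : IsCoprime (5 * k) 43 :=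
    (h43.coprime_iff_not_dvd.2 fun h => hk (by omega)).symm
  -- A multiple of `5` does not change the place in the cell.
  obtain ⟨z, hz⟩ : ∃ z : ℕ, (z : ℤ) = (y - t) * u % 43 := ⟨((y - t) * u % 43).toNat, by omega⟩
  refine ⟨5 * z, by omega, ?_⟩
  have hp : (p + i * ↑(5 * z)) % 5 = p % 5 := by
    rw [Nat.cast_mul, Nat.cast_ofNat, mul_left_comm, Int.add_mul_emod_self_left]
  have ht : (t + k * ↑(5 * z)) % 43 = y := by
    have hmod : t + k * ↑(5 * z) ≡ y [ZMOD 43] := calc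
      t + k * ↑(5 * z) = t + 5 * k * ((y - t) * u % 43) := by rw [← hz]; push_cast; ring
      _ ≡ t + 5 * k * ((y - t) * u) [ZMOD 43] := ((Int.mod_modEq _ _).mul_left _).add_left _
      _ = y + 43 * (-((y - t) * v)) := by linear_combination (y - t) * huv
      _ ≡ y [ZMOD 43] := Int.modEq_iff_dvd.2 ⟨(y - t) * v, by ring⟩
    rw [hmod, Int.emod_eq_of_lt hy₀ hy₄₃]
  rwa [hp, ht]

lemma count_inhabitable_le (r : ℕ) (hr : r ≤ l.length) (hk : ¬ (43 : ℤ) ∣ k) :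
    Nat.count (fun n => Inhabitable l (p + i * n) (t + k * n)) (215 ^ r) ≤ 214 ^ r := by
  induction r generalizing l i k p t with
  | zero => exact Nat.count_le _
  | succ r ih =>
    match l, hr with
    | (b, s) :: l, hr =>
      obtain ⟨ρ₀, hρ₀, hvacant⟩ := exists_vacant (p - b) (t - s) i hk
      have hzero : Nat.count (fun n => Inhabitable ((b, s) :: l) (p + i * ↑(ρ₀ + 215 * n))
          (t + k * ↑(ρ₀ + 215 * n))) (215 ^ r) = 0 := by
        refine Nat.count_iff_forall_not.2 fun n _ hn => hn.1 ?_
        have hp : p + i * ↑(ρ₀ + 215 * n) - b = p - b + i * ρ₀ + 5 * (43 * i * n) := by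
          push_cast
          ring
        have ht : t + k * ↑(ρ₀ + 215 * n) - s = t - s + k * ρ₀ + 43 * (5 * k * n) := by
          push_cast
          ring
        rwa [hp, ht, Int.add_mul_emod_self_left, Int.add_mul_emod_self_left]
      have hle (ρ : ℕ) : Nat.count (fun n => Inhabitable ((b, s) :: l) (p + i * ↑(ρ + 215 * n))
          (t + k * ↑(ρ + 215 * n))) (215 ^ r) ≤ 214 ^ r :=
        count_inhabitable_cons_le (i' := 43 * i) (k' := 5 * k) (by push_cast; ring)
          (by push_cast; ring) (fun p t => ih (by simpa using hr) (by omega)) ρ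
      rw [pow_succ', count_mul, ← Finset.add_sum_erase _ _ (Finset.mem_range.2 hρ₀), hzero,
        zero_add]
      refine (Finset.sum_le_card_nsmul _ _ _ fun ρ _ => hle ρ).trans ?_
      rw [Finset.card_erase_of_mem (Finset.mem_range.2 hρ₀), Finset.card_range, smul_eq_mul,
        pow_succ']

lemma count_inhabitable_pow_mul_le (e r : ℕ) (hr : e + r ≤ l.length) (hk : ¬ (43 : ℤ) ∣ k) :
    Nat.count (fun n => Inhabitable l (p + i * n) (t + 43 ^ e * k * n)) (5 ^ e * 215 ^ r) ≤
      5 ^ e * 214 ^ r := by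
  induction e generalizing l k p t with
  | zero => simpa using count_inhabitable_le r (by omega) hk
  | succ e ih =>
    match l, hr with
    | [], hr => simp at hr
    | (b, s) :: l, hr =>
      have hle (ρ : ℕ) : Nat.count (fun n => Inhabitable ((b, s) :: l) (p + i * ↑(ρ + 5 * n))
          (t + 43 ^ (e + 1) * k * ↑(ρ + 5 * n))) (5 ^ e * 215 ^ r) ≤ 5 ^ e * 214 ^ r :=
        count_inhabitable_cons_le (i' := i) (k' := 43 ^ e * (5 * k)) (by push_cast; ring)
          (by push_cast; ring) (fun p t => ih (by simp at hr; omega) (by omega)) ρ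
      rw [pow_succ' 5, mul_assoc, count_mul, mul_assoc]
      exact (Finset.sum_le_card_nsmul _ _ _ fun ρ _ => hle ρ).trans (by simp)

lemma IsHistory.exists_isHull (hR : IsHistory ω) (hp : ω t p ≠ none) (n : ℕ) {u : ℤ}
    (hu : u ≤ t - 2 * 43 ^ n + 2) (hut : t - u ≤ 3 * 43 ^ n + 2) :
    ∃ l, l.length = n ∧ Inhabitable l p t ∧ ∃ L R, IsHull l ω L R u ∧
      ∃ x, L u ≤ x ∧ 5 ^ n ≤ 2 * (R u + 1 - x) ∧ |x - p| ≤ 16 * 5 ^ n := by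
  obtain ⟨σ, hσ⟩ := Option.ne_none_iff_exists'.1 hp
  obtain ⟨f, hf, hfp, -⟩ := exists_worldline hR hσ
  obtain ⟨l, hlen, hinhabitable, L, R, hhull, hbounds⟩ := hf.exists_isHull n hR (.inl hfp.symm)
  obtain ⟨hL, hR', hwidth⟩ := hbounds u hu
  have hpow : (1 : ℤ) ≤ 43 ^ n := one_le_pow₀ (by norm_num)
  have hslow := hf.abs_sub_le_pow n hR (t := u) (by omega) hut
  refine ⟨l, hlen, hinhabitable, L, R, hhull.mono hu, max (L u) (f u - (5 ^ n - 1) / 2), by omega,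
    ?_, ?_⟩
  · omega
  · rw [hfp] at hslow
    rw [abs_le] at *
    omega

lemma IsHistory.exists_isHull_on_line (hR : IsHistory ω) {v : ℤ} (hv : 0 < v) {n j : ℕ}
    (hN : (|i| + v) * N ≤ 5 ^ n) (hj : j < N) (hp : ω (t + v * j) (p + i * j) ≠ none) :
    ∃ l, l.length = n ∧ Inhabitable l (p + i * j) (t + v * j) ∧
      ∃ L R, IsHull l ω L R (t - 2 * 43 ^ n + 2) ∧ ∃ x, L (t - 2 * 43 ^ n + 2) ≤ x ∧
        5 ^ n ≤ 2 * (R (t - 2 * 43 ^ n + 2) + 1 - x) ∧ |x - p| ≤ 17 * 5 ^ n := by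
  have hjN : (j : ℤ) ≤ N := by exact_mod_cast hj.le
  have htime : v * j ≤ 5 ^ n := by nlinarith [abs_nonneg i, hjN]
  have hplace : |i * j| ≤ 5 ^ n := by
    rw [abs_mul, Nat.abs_cast]
    nlinarith [abs_nonneg i, hjN]
  have hpow : (5 : ℤ) ^ n ≤ 43 ^ n := pow_le_pow_left₀ (by norm_num) (by norm_num) _
  have : 0 ≤ v * j := by positivity
  obtain ⟨l, hlen, hinhabitable, L, R, hhull, x, hL, hR, hx⟩ :=
    hR.exists_isHull hp n (u := t - 2 * 43 ^ n + 2) (by omega) (by omega)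
  refine ⟨l, hlen, hinhabitable, L, R, hhull, x, hL, hR, ?_⟩
  rw [abs_le] at *
  omega

lemma card_le_mul_of_card_near_le {S : Finset ℕ} {x : ℕ → ℤ} {w : ℤ} {c D : ℕ} (hw : 0 < w)
    (hx : ∀ n ∈ S, |x n - p| ≤ c * w) (hD : ∀ m ∈ S, {n ∈ S | |x n - x m| < w}.card ≤ D) :
    S.card ≤ D * (2 * c + 1) := by
  have hcard : (Finset.Icc (-c : ℤ) c).card = 2 * c + 1 := by
    rw [Int.card_Icc]
    omega
  rw [← hcard]
  refine Finset.card_le_mul_card_image_of_maps_to (f := fun n => (x n - p) / w) (fun n hn => ?_) _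
    fun y _ => ?_
  · obtain ⟨hlo, hhi⟩ := abs_le.1 (hx n hn)
    exact Finset.mem_Icc.2 ⟨(Int.le_ediv_iff_mul_le hw).2 (by linarith),
      Int.lt_add_one_iff.1 ((Int.ediv_lt_iff_lt_mul hw).2 (by linarith))⟩
  · obtain hempty | ⟨m, hm⟩ := {n ∈ S | (x n - p) / w = y}.eq_empty_or_nonempty
    · simp [hempty]
    · obtain ⟨hmS, rfl⟩ := Finset.mem_filter.1 hm
      refine (Finset.card_le_card fun n hn => ?_).trans (hD m hmS)
      obtain ⟨hnS, hnm⟩ := Finset.mem_filter.1 hn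
      refine Finset.mem_filter.2 ⟨hnS, abs_lt.2 ?_⟩
      have := Int.mul_ediv_add_emod (x n - p) w
      have := Int.mul_ediv_add_emod (x m - p) w
      have := Int.emod_nonneg (x n - p) hw.ne'
      have := Int.emod_lt_of_pos (x n - p) hw
      have := Int.emod_nonneg (x m - p) hw.ne'
      have := Int.emod_lt_of_pos (x m - p) hw
      rw [hnm] at *
      constructor <;> linarith

/-- A stretch of length `N` of a line is looked at from level `n`, at which blocks are far larger
than the stretch, so that few addresses occur on it; each of them admits few points. -/
theorem IsHistory.count_ne_none_le (hR : IsHistory ω) (e r : ℕ) (hk : ¬ (43 : ℤ) ∣ k)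
    (hk₀ : 0 < k) :
    Nat.count (fun n => ω (t + 43 ^ e * k * n) (p + i * n) ≠ none) (5 ^ e * 215 ^ r) ≤
      5 ^ e * 214 ^ r * 69 := by
  set N := 5 ^ e * 215 ^ r
  have hspeed : 0 < 43 ^ e * k := by positivity
  obtain ⟨n₀, hn₀⟩ := pow_unbounded_of_one_lt ((|i| + 43 ^ e * k) * N) (by norm_num : (1 : ℤ) < 5)
  set n := n₀ + (e + r)
  have hN : (|i| + 43 ^ e * k) * N ≤ 5 ^ n :=
    hn₀.le.trans (pow_le_pow_right₀ (by norm_num) (by omega))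
  choose! l hlen hinhabitable L R hhull x hL hR hx using
    fun (j : ℕ) (hj : j < N ∧ ω (t + 43 ^ e * k * j) (p + i * j) ≠ none) =>
      hR.exists_isHull_on_line hspeed hN hj.1 hj.2
  rw [Nat.count_eq_card_filter_range]
  refine card_le_mul_of_card_near_le (x := x) (p := p) (w := (5 ^ n + 1) / 2) (c := 34) ?_ ?_ ?_
  · have : (1 : ℤ) ≤ 5 ^ n := one_le_pow₀ (by norm_num)
    omega
  · intro j hj
    have := hx j (by simpa using hj)
    omega
  · intro m hm
    have hm' : m < N ∧ ω (t + 43 ^ e * k * m) (p + i * m) ≠ none := by simpa using hm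
    refine le_trans ?_ (count_inhabitable_pow_mul_le (l := l m) (p := p) (t := t) (i := i) e r
      (by rw [hlen m hm']; omega) hk)
    rw [Nat.count_eq_card_filter_range]
    refine Finset.card_le_card fun j hj => ?_
    simp only [Finset.mem_filter, Finset.mem_range] at hj ⊢
    obtain ⟨hj, hjm⟩ := hj
    suffices l j = l m from ⟨hj.1, this ▸ hinhabitable j hj⟩
    by_contra hne
    have := (hhull j hj).disjoint (hhull m hm') ((hlen j hj).trans (hlen m hm').symm) hne le_rfl
      le_rfl
    have := hL j hj
    have := hL m hm'
    have := hR j hj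
    have := hR m hm'
    rw [abs_lt] at hjm
    omega

end Sparsity

/-! ### Unique ergodicity -/

section Recoding

open Filter Topology
open scoped ENNReal

variable {A B : Type*}

lemma measurePreserving_iff_measure_preimage [MeasurableSpace A] {T : A → A} {μ : Measure A}
    (hT : Measurable T) :
    MeasurePreserving T μ μ ↔ ∀ S, MeasurableSet S → μ (T ⁻¹' S) = μ S := by
  refine ⟨fun h S hS => h.measure_preimage hS.nullMeasurableSet, fun h => ⟨hT, ?_⟩⟩
  ext S hS
  rw [Measure.map_apply hT hS, h S hS]

lemma continuous_of_finite_window [TopologicalSpace A] [DiscreteTopology A] [TopologicalSpace B]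
    {Φ : (ℤ → A) → ℤ → B} {W : ℤ → Set ℤ} (hW : ∀ p, (W p).Finite)
    (h : ∀ p x y, Set.EqOn x y (W p) → Φ x p = Φ y p) : Continuous Φ := by
  refine continuous_pi fun p => IsLocallyConstant.continuous ?_
  refine (IsLocallyConstant.iff_eventually_eq _).2 fun x => ?_
  have hnhds : (W p).pi (fun q => {x q}) ∈ 𝓝 x :=
    set_pi_mem_nhds (hW p) fun q _ => (isOpen_discrete _).mem_nhds rfl
  exact mem_of_superset hnhds fun y hy => h p y x hy

/-- The map `Φ` on configurations, with the states renamed along `e`. -/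
def recode (e : A ≃ B) (Φ : (ℤ → A) → ℤ → A) (x : ℤ → B) : ℤ → B := e ∘ Φ (e.symm ∘ x)

lemma semiconj_recode (e : A ≃ B) (Φ : (ℤ → A) → ℤ → A) :
    Function.Semiconj (fun x : ℤ → A => e ∘ x) Φ (recode e Φ) := fun x => by
  simp [recode, ← Function.comp_assoc]

lemma IsFullOrbit.of_recode {e : A ≃ B} {Φ : (ℤ → A) → ℤ → A} {ω : ℤ → ℤ → B}
    (hω : IsFullOrbit (recode e Φ) ω) : IsFullOrbit Φ fun t => e.symm ∘ ω t := fun t => by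
  simp [hω t, recode, ← Function.comp_assoc]

lemma commute_shift_recode {Φ : (ℤ → A) → ℤ → A} (h : Function.Commute Φ (shift 1)) (e : A ≃ B) :
    Function.Commute (recode e Φ) (shift 1) := fun x => by
  have hx := congrArg (e ∘ ·) (h (e.symm ∘ x))
  exact hx

lemma particleCA_congr {x y : Config} {p : ℤ} (h : Set.EqOn x y (Set.Icc (p - 2) (p + 2))) :
    particleCA x p = particleCA y p := by
  have hstep (q : ℤ) (hq : p - 1 ≤ q ∧ q ≤ p + 1) : stepAt x q = stepAt y q := by
    rw [stepAt, stepAt, h (show q ∈ _ from ⟨by omega, by omega⟩),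
      h (show q - 1 ∈ _ from ⟨by omega, by omega⟩), h (show q + 1 ∈ _ from ⟨by omega, by omega⟩)]
  simp only [particleCA, arrival, hstep (p - 1) (by omega), hstep p (by omega),
    hstep (p + 1) (by omega)]

lemma commute_particleCA_shift : Function.Commute particleCA (shift 1) := fun x => by
  funext p
  simp only [particleCA, arrival, stepAt, shift, sub_add_cancel, add_sub_cancel_right]

lemma continuous_recode_particleCA [TopologicalSpace B] [DiscreteTopology B]
    (e : Option Particle ≃ B) : Continuous (recode e particleCA) :=
  continuous_of_finite_window (fun p => Set.finite_Icc (p - 2) (p + 2)) fun _ _ _ hxy =>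
    congrArg e (particleCA_congr fun _ hq => congrArg e.symm (hxy hq))

lemma recode_particleCA_none (e : Option Particle ≃ B) :
    recode e particleCA (fun _ => e none) = fun _ => e none :=
  (semiconj_recode e particleCA fun _ => none).symm

lemma tendsto_sparse_density (e : ℕ) :
    Tendsto (fun r : ℕ => ((5 ^ e * 214 ^ r * 69 : ℕ) : ℝ≥0∞) / (5 ^ e * 215 ^ r : ℕ)) atTop
      (𝓝 0) := by
  have hratio (r : ℕ) : ((5 ^ e * 214 ^ r * 69 : ℕ) : ℝ≥0∞) / (5 ^ e * 215 ^ r : ℕ) =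
      69 * (214 / 215) ^ r := by
    push_cast
    rw [mul_assoc, ENNReal.mul_div_mul_left _ _ (by simp) (by simp), mul_comm, mul_div_assoc,
      div_eq_mul_inv, div_eq_mul_inv, mul_pow, ENNReal.inv_pow]
  simp_rw [hratio]
  have hlt : (214 / 215 : ℝ≥0∞) < 1 :=
    ENNReal.div_lt_of_lt_mul (by norm_num)
  simpa using ENNReal.Tendsto.const_mul
    (ENNReal.tendsto_pow_atTop_nhds_zero_of_lt_one hlt) (.inr (by simp : (69 : ℝ≥0∞) ≠ ⊤))

theorem uniquelyErgodic_shift_comp_iterate_recode [TopologicalSpace B] [DiscreteTopology B]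
    [MeasurableSpace B] [BorelSpace B] (e : Option Particle ≃ B) (i : ℤ) {k : ℕ} (hk : k ≠ 0) :
    UniquelyErgodic (shift i ∘ (recode e particleCA)^[k]) := by
  have : Finite B := .of_equiv _ e
  obtain ⟨d, k', hk', rfl⟩ := Nat.exists_eq_pow_mul_and_not_dvd hk 43 (by norm_num)
  refine uniquelyErgodic_shift_comp_iterate (continuous_recode_particleCA e)
    (commute_shift_recode commute_particleCA_shift e) (recode_particleCA_none e) i hk
    (fun r => by positivity)
    (tendsto_sparse_density d) fun ω hω p r => ?_
  have hcount := (isHistory_of_isFullOrbit hω.of_recode).count_ne_none_le (p := p) (t := 0) (i := i)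
    (k := k') d r (by exact_mod_cast hk')
    (by exact_mod_cast Nat.pos_of_ne_zero (right_ne_zero_of_mul hk))
  convert hcount using 3 with n
  simp [Equiv.symm_apply_eq]

end Recoding

/-! ### Encoding and survival -/

/-- All particles survive the next step and keep their order. -/
structure Lossless (X : Config) : Prop where
  stepAt_ne_none : ∀ P, X P ≠ none → stepAt X P ≠ none
  add_vel_lt : ∀ ⦃q q' s s'⦄, q < q' → stepAt X q = some s → stepAt X q' = some s' →
    q + s.label.vel.toInt < q' + s'.label.vel.toInt

lemma particleCA_eq_some_iff {X : Config}
    (hinj : ∀ ⦃q q' s s'⦄, stepAt X q = some s → stepAt X q' = some s' →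
      q + s.label.vel.toInt = q' + s'.label.vel.toInt → q = q') {y : ℤ} {s : Particle} :
    particleCA X y = some s ↔ ∃ q, stepAt X q = some s ∧ y = q + s.label.vel.toInt := by
  have harrival {q v s} : arrival X q v = some s ↔ stepAt X q = some s ∧ s.label.vel = v := by
    simp [arrival, Option.filter_eq_some_iff]
  have hnone {q q' v} (hq : stepAt X q = some s) (hne : q' ≠ q)
      (h : q' + v.toInt = q + s.label.vel.toInt) : arrival X q' v = none := by
    refine Option.eq_none_iff_forall_ne_some.2 fun s' hs' => ?_
    obtain ⟨hstep, rfl⟩ := harrival.1 hs'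
    exact hne (hinj hstep hq h)
  rw [particleCA, Option.or_eq_some_iff, Option.or_eq_some_iff]
  constructor
  · rintro ((h | ⟨-, h⟩) | ⟨-, h⟩) <;> obtain ⟨h, hv⟩ := harrival.1 h <;>
      exact ⟨_, h, by simp [hv, Velocity.toInt]⟩
  · rintro ⟨q, hq, rfl⟩
    have hself : arrival X q s.label.vel = some s := harrival.2 ⟨hq, rfl⟩
    cases hv : s.label.vel <;> rw [hv] at hself
    case right => exact .inl (.inl (by simpa [Velocity.toInt] using hself))
    case stay =>
      refine .inl (.inr ⟨hnone hq ?_ ?_, by simpa [Velocity.toInt] using hself⟩) <;>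
        simp [hv, Velocity.toInt]
    case left =>
      refine .inr ⟨?_, by simpa [Velocity.toInt] using hself⟩
      rw [hnone hq, hnone hq, Option.none_or] <;> grind [Velocity.toInt]

namespace Lossless

variable {X : Config}

lemma particleCA_eq_some_iff (hX : Lossless X) {y : ℤ} {s : Particle} :
    particleCA X y = some s ↔ ∃ q, stepAt X q = some s ∧ y = q + s.label.vel.toInt := by
  refine ParticleCA.particleCA_eq_some_iff fun q q' s s' h h' heq => ?_
  rcases lt_trichotomy q q' with hlt | rfl | hlt
  · exact absurd heq (hX.add_vel_lt hlt h h').ne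
  · rfl
  · exact absurd heq (hX.add_vel_lt hlt h' h).ne'

end Lossless

/-- The state of the particle at `P`, provided that there is one. -/
def stateAt (X : Config) (P : ℤ) : Particle := (X P).getD default

/-- The next state of the particle at `P`, provided that it survives. -/
def nextState (X : Config) (P : ℤ) : Particle := (stepAt X P).getD default

section NextState

variable {X : Config} {P : ℤ}

lemma eq_some_stateAt (hP : X P ≠ none) : X P = some (stateAt X P) := by
  obtain ⟨s, hs⟩ := Option.ne_none_iff_exists'.1 hP
  simp [stateAt, hs]

lemma ne_none_of_stepAt {s : Particle} (h : stepAt X P = some s) : X P ≠ none := fun hP => by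
  simp [stepAt, hP] at h

lemma Lossless.stepAt_eq (hX : Lossless X) (hP : X P ≠ none) :
    stepAt X P = some (nextState X P) := by
  obtain ⟨s, hs⟩ := Option.ne_none_iff_exists'.1 (hX.stepAt_ne_none P hP)
  simp [nextState, hs]

lemma Lossless.localStep_eq (hX : Lossless X) (hP : X P ≠ none) :
    localStep (X (P - 1)) (stateAt X P) (X (P + 1)) = some (nextState X P) := by
  rw [← hX.stepAt_eq hP, stepAt, eq_some_stateAt hP, Option.bind_some]

lemma Lossless.particleCA_add_vel (hX : Lossless X) (hP : X P ≠ none) :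
    particleCA X (P + (nextState X P).label.vel.toInt) = some (nextState X P) :=
  hX.particleCA_eq_some_iff.2 ⟨P, hX.stepAt_eq hP, rfl⟩

lemma Lossless.particleCA_ne_none (hX : Lossless X) (h : X ≠ fun _ => none) :
    particleCA X ≠ fun _ => none := by
  obtain ⟨P, hP⟩ := Function.ne_iff.1 h
  exact Function.ne_iff.2 ⟨_, (hX.particleCA_add_vel hP).trans_ne (Option.some_ne_none _)⟩

end NextState

/-- The datum read at phase `n` from a neighbouring block simulating `o`, with `none` if there is no
such block. -/
def presented (o : Option Particle) (n : ℕ) : Datum :=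
  if n = 6 then o.elim .nil fun s => .code s.label 0 else read (n = 4) o

lemma presented_eq_nil (o : Option Particle) {n : ℕ} (h₄ : n ≠ 4) (h₆ : n ≠ 6) :
    presented o n = .nil := by
  simp [presented, h₄, h₆, read]

lemma presents_presented (o : Option Particle) : Presents o (presented o) where
  eq_nil _ := presented_eq_nil o
  code := rfl
  port _ h := by simp [presented, read, h]

/-- The registers at phase `τ` of the block simulating the particle at `P`. -/
def cycleRegs (X : Config) (P : ℤ) (τ : ℕ) : Fin 3 → Registers :=
  (blockRun (presented (X (P - 1))) (presented (X (P + 1))) (blockRegs (stateAt X P)) τ).getD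
    (blockRegs (stateAt X P))

section CycleRegs

variable {X : Config} {P : ℤ}

lemma cycleRegs_zero (X : Config) (P : ℤ) : cycleRegs X P 0 = blockRegs (stateAt X P) := rfl

lemma blockRun_eq_cycleRegs (hX : Lossless X) (hP : X P ≠ none) {τ : ℕ} (hτ : τ ≤ 43) :
    blockRun (presented (X (P - 1))) (presented (X (P + 1))) (blockRegs (stateAt X P)) τ =
      some (cycleRegs X P τ) := by
  obtain ⟨G, hG⟩ : ∃ G, blockRun (presented (X (P - 1))) (presented (X (P + 1)))
      (blockRegs (stateAt X P)) τ = some G := by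
    refine Option.ne_none_iff_exists'.1 fun h => ?_
    have := blockRun_eq_none h hτ
    rw [blockRun_forty_three (presents_presented _) (presents_presented _), hX.localStep_eq hP]
      at this
    contradiction
  rw [cycleRegs, hG, Option.getD_some]

lemma blockStep_cycleRegs (hX : Lossless X) (hP : X P ≠ none) {τ : ℕ} (hτ : τ < 43) :
    blockStep τ (presented (X (P - 1)) τ) (presented (X (P + 1)) τ) (cycleRegs X P τ) =
      some (cycleRegs X P (τ + 1)) := by
  rw [← blockRun_eq_cycleRegs hX hP hτ, blockRun, blockRun_eq_cycleRegs hX hP hτ.le,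
    Option.bind_some]

lemma cycleRegs_forty_three (hX : Lossless X) (hP : X P ≠ none) :
    cycleRegs X P 43 = blockRegs (nextState X P) := by
  rw [← Option.some_inj, ← blockRun_eq_cycleRegs hX hP le_rfl,
    blockRun_forty_three (presents_presented _) (presents_presented _), hX.localStep_eq hP,
    Option.map_some]

lemma cycleRegs_moving (hX : Lossless X) (hP : X P ≠ none) {n : ℕ} (hn : n ≤ 12) :
    cycleRegs X P (29 + n) = movingRegs (stateAt X P).label (nextState X P).label.vel
      (nextState X P).label.vel (nextState X P).regs := by
  rw [← Option.some_inj, ← blockRun_eq_cycleRegs hX hP (by lia),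
    blockRun_moving (presents_presented _) (presents_presented _) _ hn, hX.localStep_eq hP,
    Option.map_some]

lemma blockRun_four {o o' : Option Particle} (s : Particle) :
    blockRun (presented o) (presented o') (blockRegs s) 4 =
      some ![⟨s.regs.port, .code s.label 0, .skip⟩, s.regs,
        ⟨s.regs.port, .code s.label 0, .skip⟩] := by
  simp [blockRun, blockRegs_eq, presented_eq_nil, blockStep_zero, blockStep_one,
    blockStep_of_idle (τ := 2) (by decide), blockStep_of_idle (τ := 3) (by decide)]

lemma blockRun_six {o o' : Option Particle} (s : Particle) :
    blockRun (presented o) (presented o') (blockRegs s) 6 =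
      some ![⟨.code s.label 0, .code s.label 0, presented o 4⟩, s.regs,
        ⟨.code s.label 0, .code s.label 0, presented o' 4⟩] := by
  simp [blockRun.eq_2 _ _ _ 5, blockRun.eq_2 _ _ _ 4, blockRun_four, blockStep_four,
    presented_eq_nil _ (n := 5), blockStep_five]

lemma port_cycleRegs_eq_presented {a : Fin 3} (ha : a ≠ 1) {n : ℕ} (hn : n = 4 ∨ n = 6)
    (hP : X P ≠ none) : (cycleRegs X P n a).port = presented (X P) n := by
  rw [cycleRegs, eq_some_stateAt hP]
  rcases hn with rfl | rfl
  · rw [blockRun_four]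
    fin_cases a <;> first | contradiction | rfl
  · rw [blockRun_six]
    fin_cases a <;> first | contradiction | rfl

end CycleRegs

section BlockLabel

/-- The label at phase `τ` of the particle of role `a` in a block which moves with velocity `w`. -/
def blockLabel (w : Velocity) (a : Fin 3) : ℕ → Label
  | 0 => ⟨a, 0, .stay⟩
  | τ + 1 => (blockLabel w a τ).next (nextVel (blockLabel w a τ) (.vel w) (.vel w))

variable (w : Velocity) (a : Fin 3)

@[simp] lemma role_blockLabel (τ : ℕ) : (blockLabel w a τ).role = a := by
  induction τ with
  | zero => rfl
  | succ _ ih => exact ih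

lemma phase_blockLabel (τ : ℕ) : (blockLabel w a τ).phase = Fin.ofNat 43 τ := by
  induction τ with
  | zero => rfl
  | succ τ ih =>
    rw [blockLabel, Label.next, ih, Fin.ext_iff]
    simp [Fin.val_add, -Fin.ofNat_eq_cast]

lemma val_phase_blockLabel {τ : ℕ} (hτ : τ < 43) : ((blockLabel w a τ).phase : ℕ) = τ := by
  rw [phase_blockLabel, Fin.val_ofNat, Nat.mod_eq_of_lt hτ]

lemma blockLabel_forty_three : blockLabel w a 43 = ⟨a, 0, .stay⟩ := by
  have hvel : nextVel (blockLabel w a 42) (.vel w) (.vel w) = .stay := by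
    simp only [nextVel, val_phase_blockLabel w a (τ := 42) (by decide), role_blockLabel]
    exact (by decide : ∀ a : Fin 3, schedule a 42 = .stay) a
  rw [blockLabel, Label.next, hvel, role_blockLabel, phase_blockLabel]
  rfl

lemma nextVel_congr {j : Label} {o v o' v' : Datum}
    (h : RightPhase j.phase ∨ LeftPhase j.phase →
      (if j.role = 1 then v else o) = if j.role = 1 then v' else o') :
    nextVel j o v = nextVel j o' v' := by
  unfold nextVel
  by_cases hR : RightPhase j.phase
  · rw [if_pos hR, if_pos hR, h (.inl hR)]
  by_cases hL : LeftPhase j.phase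
  · rw [if_neg hR, if_neg hR, if_pos hL, if_pos hL, h (.inr hL)]
  · rw [if_neg hR, if_neg hR, if_neg hL, if_neg hL]

end BlockLabel

section CellPos

lemma slot_strictMono (τ : ℕ) : StrictMono (slot · τ) := by
  refine Fin.strictMono_iff_lt_succ.2 fun a => ?_
  fin_cases a <;> simp [slot] <;> grind

lemma le_ten_of_slot_eq_add_four {a a' : Fin 3} {τ : ℕ} (h : slot a' τ = slot a τ + 4) :
    τ ≤ 10 := by
  unfold slot at h
  grind

variable {X : Config} {P P' : ℤ}

/-- The position at phase `τ` of the particle of role `a` in the block simulating the particle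
at `P`. -/
def cellPos (X : Config) (P : ℤ) (τ : ℕ) (a : Fin 3) : ℤ :=
  5 * P + slot a τ + blockShift (nextState X P).label.vel τ

lemma cellPos_zero (X : Config) (P : ℤ) (a : Fin 3) : cellPos X P 0 a = 5 * P + slot a 0 := by
  rw [cellPos, blockShift_eq_zero _ (by decide), add_zero]

lemma cellPos_forty_three (X : Config) (P : ℤ) (a : Fin 3) :
    cellPos X P 43 a = 5 * (P + (nextState X P).label.vel.toInt) + slot a 0 := by
  rw [cellPos, blockShift_forty_three, slot_eq_slot_zero a (by decide)]
  ring

lemma cellPos_succ (X : Config) (P : ℤ) {τ : ℕ} (hτ : τ < 43) (a : Fin 3) :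
    cellPos X P (τ + 1) a = cellPos X P τ a +
      (blockLabel (nextState X P).label.vel a (τ + 1)).vel.toInt := by
  set w := (nextState X P).label.vel with hw
  have h := slot_add_blockShift_succ (j := blockLabel w a τ) (w := w) (o := .vel w) (v := .vel w)
    fun _ => ite_self _
  rw [role_blockLabel, val_phase_blockLabel w a hτ] at h
  rw [cellPos, cellPos, ← hw, add_assoc, h, blockLabel, Label.next]
  ring

lemma add_five_le_blockShift (w w' : Velocity) {d : ℤ} (hd : 1 ≤ d)
    (h : 1 ≤ d + w'.toInt - w.toInt) (τ : ℕ) : blockShift w τ + 5 ≤ 5 * d + blockShift w' τ := by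
  cases w <;> cases w' <;> grind [blockShift, Velocity.toInt]

lemma Lossless.add_blockShift_add_five_le (hX : Lossless X) (hP : X P ≠ none) (hP' : X P' ≠ none)
    (h : P < P') (τ : ℕ) : 5 * P + blockShift (nextState X P).label.vel τ + 5 ≤
      5 * P' + blockShift (nextState X P').label.vel τ := by
  have := hX.add_vel_lt h (hX.stepAt_eq hP) (hX.stepAt_eq hP')
  have := add_five_le_blockShift (nextState X P).label.vel (nextState X P').label.vel
    (d := P' - P) (by lia) (by lia) τ
  lia

lemma Lossless.cellPos_lt_cellPos (hX : Lossless X) (hP : X P ≠ none) (hP' : X P' ≠ none)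
    (h : P < P') (τ : ℕ) (a a' : Fin 3) : cellPos X P τ a < cellPos X P' τ a' := by
  have := hX.add_blockShift_add_five_le hP hP' h τ
  have := (slot_mem_Icc a τ).2
  have := (slot_mem_Icc a' τ).1
  unfold cellPos
  lia

lemma Lossless.cellPos_lt_cellPos_iff (hX : Lossless X) (hP : X P ≠ none) (hP' : X P' ≠ none)
    {τ : ℕ} {a a' : Fin 3} :
    cellPos X P τ a < cellPos X P' τ a' ↔ P < P' ∨ P = P' ∧ a < a' := by
  rcases lt_trichotomy P P' with h | rfl | h
  · simp [h, hX.cellPos_lt_cellPos hP hP' h]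
  · simp [cellPos, (slot_strictMono τ).lt_iff_lt]
  · simp [h.not_gt, h.ne', (hX.cellPos_lt_cellPos hP' hP h τ a' a).le]

/-- Particles are adjacent either within a block, or when their blocks are neighbours and the facing
controllers are stretched out. -/
lemma Lossless.cellPos_eq_cellPos_add_iff (hX : Lossless X) (hP : X P ≠ none) (hP' : X P' ≠ none)
    {τ : ℕ} {a a' : Fin 3} {d : ℤ} (hd : |d| = 1) :
    cellPos X P' τ a' = cellPos X P τ a + d ↔
      P' = P ∧ slot a' τ = slot a τ + d ∨ P' = P + d ∧ slot a' τ + 5 * d = slot a τ + d := by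
  have hslot := slot_mem_Icc a τ
  have hslot' := slot_mem_Icc a' τ
  have hshift {P : ℤ} (h : slot a' τ = slot a τ + 4 ∨ slot a τ = slot a' τ + 4) :
      blockShift (nextState X P).label.vel τ = 0 :=
    blockShift_eq_zero _ ((h.elim le_ten_of_slot_eq_add_four le_ten_of_slot_eq_add_four).trans
      (by decide))
  rw [abs_eq zero_le_one] at hd
  unfold cellPos
  constructor
  · intro h
    rcases lt_trichotomy P P' with hlt | rfl | hlt
    · have := hX.add_blockShift_add_five_le hP hP' hlt τ
      have hfour : slot a τ = slot a' τ + 4 := by grind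
      rw [hshift (.inr hfour), hshift (.inr hfour)] at h
      grind
    · exact .inl ⟨rfl, by lia⟩
    · have := hX.add_blockShift_add_five_le hP' hP hlt τ
      have hfour : slot a' τ = slot a τ + 4 := by grind
      rw [hshift (.inl hfour), hshift (.inl hfour)] at h
      grind
  · rintro (⟨rfl, h⟩ | ⟨rfl, h⟩)
    · lia
    · have hfour : slot a' τ = slot a τ + 4 ∨ slot a τ = slot a' τ + 4 := by lia
      rw [hshift hfour, hshift hfour]
      lia

end CellPos

/-- The state at phase `τ` of the particle of role `a` in the block simulating the particle
at `P`. -/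
def cell (X : Config) (P : ℤ) (τ : ℕ) (a : Fin 3) : Particle :=
  ⟨blockLabel (nextState X P).label.vel a τ, cycleRegs X P τ a⟩

/-- `Y` consists of one block at phase `τ` for every particle of `X`. -/
def Simulates (X : Config) (τ : ℕ) (Y : Config) : Prop :=
  ∀ y s, Y y = some s ↔ ∃ P a, X P ≠ none ∧ y = cellPos X P τ a ∧ s = cell X P τ a

/-- What a cell of the block simulating the particle at `P` finds in an adjacent cell where it
expects `e`; a neighbouring block is found in direction `d`. -/
def neighbor (X : Config) (P : ℤ) (τ : ℕ) (e : Expectation) (d : ℤ) : Option Particle :=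
  match e with
  | .blank => none
  | .req a => some (cell X P τ a)
  | .opt a => (X (P + d)).map fun _ => cell X (P + d) τ a

section Neighbor

variable {X Y : Config} {P : ℤ} {τ : ℕ}

lemma check_neighbor (X : Config) (P : ℤ) (τ : ℕ) (e : Expectation) (d : ℤ) :
    e.check (Fin.ofNat 43 τ) ((neighbor X P τ e d).map Particle.label) := by
  cases e with
  | blank => rfl
  | req a => simp [neighbor, Expectation.check, cell, phase_blockLabel]
  | opt a => cases h : X (P + d) <;>
      simp [neighbor, Expectation.check, cell, phase_blockLabel, h]

lemma Simulates.apply_cellPos_add (hX : Lossless X) (hY : Simulates X τ Y) (hP : X P ≠ none)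
    {a : Fin 3} {e : Expectation} {d : ℤ} (hd : |d| = 1)
    (hreq : ∀ a', e = .req a' ↔ slot a' τ = slot a τ + d)
    (hopt : ∀ a', e = .opt a' ↔ slot a' τ + 5 * d = slot a τ + d) :
    Y (cellPos X P τ a + d) = neighbor X P τ e d := by
  have hiff (s : Particle) : Y (cellPos X P τ a + d) = some s ↔
      ∃ P' a', X P' ≠ none ∧ (P' = P ∧ e = .req a' ∨ P' = P + d ∧ e = .opt a') ∧
        s = cell X P' τ a' := by
    rw [hY]
    refine exists_congr fun P' => exists_congr fun a' => and_congr_right fun hP' =>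
      and_congr_left fun _ => ?_
    rw [eq_comm, hX.cellPos_eq_cellPos_add_iff hP hP' hd, hreq, hopt]
  ext s
  rw [hiff]
  cases e with
  | blank => simp [neighbor]
  | req a₁ => simp [neighbor, hP, eq_comm]
  | opt a₁ => simp [neighbor, Option.ne_none_iff_exists', eq_comm]

lemma expectLeft_eq_req_iff : ∀ τ < 43, ∀ a a' : Fin 3,
    expectLeft a τ = .req a' ↔ slot a' τ = slot a τ + -1 := by
  decide

lemma expectLeft_eq_opt_iff : ∀ τ < 43, ∀ a a' : Fin 3,
    expectLeft a τ = .opt a' ↔ slot a' τ + 5 * -1 = slot a τ + -1 := by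
  decide

lemma expectRight_eq_req_iff : ∀ τ < 43, ∀ a a' : Fin 3,
    expectRight a τ = .req a' ↔ slot a' τ = slot a τ + 1 := by
  decide

lemma expectRight_eq_opt_iff : ∀ τ < 43, ∀ a a' : Fin 3,
    expectRight a τ = .opt a' ↔ slot a' τ + 5 * 1 = slot a τ + 1 := by
  decide

end Neighbor

/-- The data read from the left at phase `τ` by the particles of a block with registers `G`, where
`x` is what can be read from outside of the block. -/
def leftInput (τ : ℕ) (x : Datum) (G : Fin 3 → Registers) : Fin 3 → Datum :=
  ![x, if looksLeft 1 τ then (G 0).port else .nil, if looksLeft 2 τ then (G 1).port else .nil]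

/-- The data read from the right at phase `τ` by the particles of a block with registers `G`, where
`y` is what can be read from outside of the block. -/
def rightInput (τ : ℕ) (y : Datum) (G : Fin 3 → Registers) : Fin 3 → Datum :=
  ![if looksRight 0 τ then (G 1).port else .nil, if looksRight 1 τ then (G 2).port else .nil, y]

section Inputs

variable {X : Config} {P : ℤ} {τ : ℕ}

lemma exec_of_blockStep {x y : Datum} {G G' : Fin 3 → Registers}
    (h : blockStep τ x y G = some G') (a : Fin 3) :
    (opAt a τ).exec (G a) (leftInput τ x G a) (rightInput τ y G a) = some (G' a) := by
  obtain ⟨g₀, h₀, h⟩ := Option.bind_eq_some_iff.1 h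
  obtain ⟨g₁, h₁, h⟩ := Option.bind_eq_some_iff.1 h
  obtain ⟨g₂, h₂, rfl⟩ := Option.map_eq_some_iff.1 h
  fin_cases a
  exacts [h₀, h₁, h₂]

lemma read_map_cell {a : Fin 3} (ha : a ≠ 1) (hτ : τ = 4 ∨ τ = 6) (X : Config) (P : ℤ) :
    read true ((X P).map fun _ => cell X P τ a) = presented (X P) τ := by
  by_cases hP : X P = none
  · rcases hτ with rfl | rfl <;> simp [hP, read, presented]
  · rw [← port_cycleRegs_eq_presented ha hτ hP, eq_some_stateAt hP]
    rfl

lemma looksLeft_zero : ∀ τ < 43, looksLeft 0 τ → expectLeft 0 τ = .opt 2 := by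
  decide

lemma looksRight_two : ∀ τ < 43, looksRight 2 τ → expectRight 2 τ = .opt 0 := by
  decide

lemma read_neighbor_left (hτ : τ < 43) (a : Fin 3) :
    read (looksLeft a τ) (neighbor X P τ (expectLeft a τ) (-1)) =
      leftInput τ (presented (X (P - 1)) τ) (cycleRegs X P τ) a := by
  by_cases hlook : looksLeft a τ
  · match a with
    | 0 =>
      rw [hlook, looksLeft_zero τ hτ hlook]
      exact read_map_cell (by decide) (by simpa [looksLeft] using hlook) X (P - 1)
    | 1 =>
      rw [hlook, (looksLeft_one τ hτ hlook).1]
      exact (if_pos hlook).symm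
    | 2 =>
      rw [hlook, (looksLeft_two τ hτ hlook).1]
      exact (if_pos hlook).symm
  · match a with
    | 0 =>
      have h46 : τ ≠ 4 ∧ τ ≠ 6 := by simpa [looksLeft] using hlook
      simp [read, hlook, leftInput, presented_eq_nil _ h46.1 h46.2]
    | 1 | 2 => simp [read, hlook, leftInput]

lemma read_neighbor_right (hτ : τ < 43) (a : Fin 3) :
    read (looksRight a τ) (neighbor X P τ (expectRight a τ) 1) =
      rightInput τ (presented (X (P + 1)) τ) (cycleRegs X P τ) a := by
  by_cases hlook : looksRight a τ
  · match a with
    | 0 =>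
      rw [hlook, (looksRight_zero τ hτ hlook).1]
      exact (if_pos hlook).symm
    | 1 =>
      rw [hlook, (looksRight_one τ hτ hlook).1]
      exact (if_pos hlook).symm
    | 2 =>
      rw [hlook, looksRight_two τ hτ hlook]
      exact read_map_cell (by decide) (by simpa [looksRight] using hlook) X (P + 1)
  · match a with
    | 0 | 1 => simp [read, hlook, rightInput]
    | 2 =>
      have h46 : τ ≠ 4 ∧ τ ≠ 6 := by simpa [looksRight] using hlook
      simp [read, hlook, rightInput, presented_eq_nil _ h46.1 h46.2]

end Inputs

section LocalStep

variable {X : Config} {P : ℤ} {τ : ℕ}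

lemma inputs_cycleRegs_moving (hX : Lossless X) (hP : X P ≠ none) (h31 : 31 ≤ τ) (h40 : τ ≤ 40)
    (x y : Datum) :
    leftInput τ x (cycleRegs X P τ) 1 = .vel (nextState X P).label.vel ∧
      rightInput τ y (cycleRegs X P τ) 1 = .vel (nextState X P).label.vel := by
  obtain ⟨n, rfl⟩ := Nat.exists_eq_add_of_le (show 29 ≤ τ by lia)
  simp [leftInput, rightInput, looksLeft, looksRight, cycleRegs_moving hX hP (show n ≤ 12 by lia),
    movingRegs, h31, h40]

lemma nextVel_cell (hX : Lossless X) (hP : X P ≠ none) (hτ : τ < 43) {a : Fin 3} {u : Datum}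
    (hu : 31 ≤ τ → τ ≤ 40 → a = 1 → u = .vel (nextState X P).label.vel) :
    nextVel (cell X P τ a).label (cell X P τ a).regs.port u =
      (blockLabel (nextState X P).label.vel a (τ + 1)).vel := by
  refine nextVel_congr fun hphase => ?_
  rw [cell, val_phase_blockLabel _ a hτ] at hphase
  obtain ⟨n, rfl⟩ := Nat.exists_eq_add_of_le (show 29 ≤ τ by lia)
  simp only [cell, role_blockLabel, cycleRegs_moving hX hP (show n ≤ 12 by lia)]
  have hu := hu (by lia) (by lia)
  fin_cases a <;> simp_all [movingRegs]

lemma localStep_cell (hX : Lossless X) (hP : X P ≠ none) (hτ : τ < 43) (a : Fin 3) :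
    localStep (neighbor X P τ (expectLeft a τ) (-1)) (cell X P τ a)
      (neighbor X P τ (expectRight a τ) 1) = some (cell X P (τ + 1) a) := by
  set w := (nextState X P).label.vel
  have hphase : (cell X P τ a).label.phase = Fin.ofNat 43 τ := phase_blockLabel w a τ
  have hval : ((Fin.ofNat 43 τ : Fin 43) : ℕ) = τ := Nat.mod_eq_of_lt hτ
  have hrole : (cell X P τ a).label.role = a := role_blockLabel w a τ
  have hvel {u : Datum} (hu : 31 ≤ τ → τ ≤ 40 → a = 1 → u = .vel w) := nextVel_cell hX hP hτ hu
  have hleft : nextVel (cell X P τ a).label (cell X P τ a).regs.port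
      (leftInput τ (presented (X (P - 1)) τ) (cycleRegs X P τ) a) =
        (blockLabel w a (τ + 1)).vel :=
    hvel fun h31 h40 ha => ha ▸ (inputs_cycleRegs_moving hX hP h31 h40 _ .nil).1
  have hright : nextVel (cell X P τ a).label (cell X P τ a).regs.port
      (rightInput τ (presented (X (P + 1)) τ) (cycleRegs X P τ) a) =
        (blockLabel w a (τ + 1)).vel :=
    hvel fun h31 h40 ha => ha ▸ (inputs_cycleRegs_moving hX hP h31 h40 .nil _).2
  simp only [localStep, okLeft, okRight, Particle.readLeft, Particle.readRight, hrole, hphase, hval,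
    check_neighbor, read_neighbor_left hτ, read_neighbor_right hτ, hleft, hright, and_self, if_true]
  rw [show (cell X P τ a).regs = cycleRegs X P τ a from rfl,
    exec_of_blockStep (blockStep_cycleRegs hX hP hτ), Option.map_some]
  rfl

end LocalStep

namespace Simulates

variable {X Y : Config} {τ : ℕ}

lemma stepAt_eq_some_iff (hX : Lossless X) (hY : Simulates X τ Y) (hτ : τ < 43) {q : ℤ}
    {s : Particle} :
    stepAt Y q = some s ↔ ∃ P a, X P ≠ none ∧ q = cellPos X P τ a ∧ s = cell X P (τ + 1) a := by
  have hstep {P : ℤ} (hP : X P ≠ none) (a : Fin 3) :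
      stepAt Y (cellPos X P τ a) = some (cell X P (τ + 1) a) := by
    rw [stepAt, (hY _ _).2 ⟨P, a, hP, rfl, rfl⟩, Option.bind_some, sub_eq_add_neg,
      hY.apply_cellPos_add hX hP (by decide) (expectLeft_eq_req_iff τ hτ a)
        (expectLeft_eq_opt_iff τ hτ a),
      hY.apply_cellPos_add hX hP (by decide) (expectRight_eq_req_iff τ hτ a)
        (expectRight_eq_opt_iff τ hτ a),
      localStep_cell hX hP hτ]
  constructor
  · intro h
    obtain ⟨s₀, hs₀⟩ := Option.ne_none_iff_exists'.1 (ne_none_of_stepAt h)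
    obtain ⟨P, a, hP, rfl, rfl⟩ := (hY _ _).1 hs₀
    exact ⟨P, a, hP, rfl, Option.some_inj.1 (h.symm.trans (hstep hP a))⟩
  · rintro ⟨P, a, hP, rfl, rfl⟩
    exact hstep hP a

lemma lossless (hX : Lossless X) (hY : Simulates X τ Y) (hτ : τ < 43) : Lossless Y where
  stepAt_ne_none q hq := by
    obtain ⟨s, hs⟩ := Option.ne_none_iff_exists'.1 hq
    obtain ⟨P, a, hP, rfl, -⟩ := (hY q s).1 hs
    rw [(hY.stepAt_eq_some_iff hX hτ).2 ⟨P, a, hP, rfl, rfl⟩]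
    exact Option.some_ne_none _
  add_vel_lt := by
    intro q q' s s' hlt h h'
    obtain ⟨P, a, hP, rfl, rfl⟩ := (hY.stepAt_eq_some_iff hX hτ).1 h
    obtain ⟨P', a', hP', rfl, rfl⟩ := (hY.stepAt_eq_some_iff hX hτ).1 h'
    rw [hX.cellPos_lt_cellPos_iff hP hP'] at hlt
    rw [cell, cell, ← cellPos_succ X P hτ, ← cellPos_succ X P' hτ,
      hX.cellPos_lt_cellPos_iff hP hP']
    exact hlt

lemma succ (hX : Lossless X) (hY : Simulates X τ Y) (hτ : τ < 43) :
    Simulates X (τ + 1) (particleCA Y) := by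
  intro y s
  rw [(hY.lossless hX hτ).particleCA_eq_some_iff]
  simp only [hY.stepAt_eq_some_iff hX hτ]
  constructor
  · rintro ⟨_, ⟨P, a, hP, rfl, rfl⟩, rfl⟩
    exact ⟨P, a, hP, (cellPos_succ X P hτ a).symm, rfl⟩
  · rintro ⟨P, a, hP, rfl, rfl⟩
    exact ⟨_, ⟨P, a, hP, rfl, rfl⟩, cellPos_succ X P hτ a⟩

lemma iterate_particleCA (hX : Lossless X) (hY : Simulates X 0 Y) (hτ : τ ≤ 43) :
    Simulates X τ (particleCA^[τ] Y) := by
  induction τ with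
  | zero => exact hY
  | succ τ ih =>
    rw [Function.iterate_succ_apply']
    exact (ih (by lia)).succ hX hτ

lemma particleCA_of_forty_three (hX : Lossless X) (hY : Simulates X 43 Y) :
    Simulates (particleCA X) 0 Y := by
  have hpos (P : ℤ) (a : Fin 3) : cellPos X P 43 a =
      cellPos (particleCA X) (P + (nextState X P).label.vel.toInt) 0 a := by
    rw [cellPos_forty_three, cellPos_zero]
  have hcell {P : ℤ} (hP : X P ≠ none) (a : Fin 3) : cell X P 43 a =
      cell (particleCA X) (P + (nextState X P).label.vel.toInt) 0 a := by
    rw [cell, cell, blockLabel_forty_three, cycleRegs_forty_three hX hP, cycleRegs_zero, stateAt,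
      hX.particleCA_add_vel hP, Option.getD_some, blockLabel]
  intro y s
  rw [hY]
  constructor
  · rintro ⟨P, a, hP, rfl, rfl⟩
    refine ⟨_, a, ?_, hpos P a, hcell hP a⟩
    exact (hX.particleCA_add_vel hP).trans_ne (Option.some_ne_none _)
  · rintro ⟨P', a, hP', rfl, rfl⟩
    obtain ⟨s', hs'⟩ := Option.ne_none_iff_exists'.1 hP'
    obtain ⟨P, hP, rfl⟩ := hX.particleCA_eq_some_iff.1 hs'
    have hPX := ne_none_of_stepAt hP
    obtain rfl : nextState X P = s' := Option.some_inj.1 ((hX.stepAt_eq hPX).symm.trans hP)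
    exact ⟨P, a, hPX, (hpos P a).symm, (hcell hPX a).symm⟩

lemma lossless_iterate {m : ℕ} (hX : ∀ t < m, Lossless (particleCA^[t] X))
    (hY : Simulates X 0 Y) : ∀ t < 43 * m, Lossless (particleCA^[t] Y) := by
  induction m generalizing X Y with
  | zero => simp
  | succ m ih =>
    intro t ht
    have hX₀ : Lossless X := hX 0 m.succ_pos
    rcases lt_or_ge t 43 with h | h
    · exact (hY.iterate_particleCA hX₀ h.le).lossless hX₀ h
    · obtain ⟨t, rfl⟩ := Nat.exists_eq_add_of_le' h
      rw [Function.iterate_add_apply]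
      exact ih (fun t ht => hX (t + 1) (by lia))
        ((hY.iterate_particleCA hX₀ le_rfl).particleCA_of_forty_three hX₀) t (by lia)

lemma ne_none (hY : Simulates X τ Y) (hX : X ≠ fun _ => none) : Y ≠ fun _ => none := by
  obtain ⟨P, hP⟩ := Function.ne_iff.1 hX
  exact Function.ne_iff.2
    ⟨_, ((hY _ _).2 ⟨P, 0, hP, rfl, rfl⟩).trans_ne (Option.some_ne_none _)⟩

end Simulates

/-- The configuration in which every particle of `X` is replaced by a block at phase zero. -/
def encode (X : Config) : Config := fun y =>
  (X (y / 5)).bind fun _ =>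
    if y % 5 = 1 then some (cell X (y / 5) 0 0)
    else if y % 5 = 2 then some (cell X (y / 5) 0 1)
    else if y % 5 = 3 then some (cell X (y / 5) 0 2)
    else none

lemma simulates_encode (X : Config) : Simulates X 0 (encode X) := by
  intro y s
  have hpos (P : ℤ) (a : Fin 3) : cellPos X P 0 a = 5 * P + (a + 1) := by
    rw [cellPos_zero]
    fin_cases a <;> rfl
  simp only [encode, Option.bind_eq_some_iff, hpos]
  constructor
  · rintro ⟨s₀, hs₀, h⟩
    have hP : X (y / 5) ≠ none := hs₀.trans_ne (Option.some_ne_none _)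
    split_ifs at h with h₁ h₂ h₃
    · exact ⟨y / 5, 0, hP, by simp; lia, (Option.some_inj.1 h).symm⟩
    · exact ⟨y / 5, 1, hP, by simp; lia, (Option.some_inj.1 h).symm⟩
    · exact ⟨y / 5, 2, hP, by simp; lia, (Option.some_inj.1 h).symm⟩
  · rintro ⟨P, a, hP, rfl, rfl⟩
    have := a.isLt
    have hdiv : (5 * P + ((a : ℤ) + 1)) / 5 = P := by lia
    have hmod : (5 * P + ((a : ℤ) + 1)) % 5 = a + 1 := by lia
    rw [hdiv, hmod]
    refine ⟨stateAt X P, eq_some_stateAt hP, ?_⟩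
    fin_cases a <;> rfl

/-- A configuration with a single particle, which is in a state that survives one step. -/
def seed : Config := fun p => if p = 0 then some ⟨⟨1, 4, .stay⟩, ⟨.skip, .skip, .skip⟩⟩ else none

lemma seed_ne_none : seed ≠ fun _ => none := Function.ne_iff.2 ⟨0, by decide⟩

lemma lossless_seed : Lossless seed := by
  have eq_zero {q : ℤ} (hq : seed q ≠ none) : q = 0 := by simpa [seed] using hq
  refine ⟨fun P hP => ?_, fun q q' s s' hlt h h' => ?_⟩
  · rw [eq_zero hP]
    decide
  · rw [eq_zero (ne_none_of_stepAt h), eq_zero (ne_none_of_stepAt h')] at hlt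
    exact absurd hlt (lt_irrefl 0)

lemma exists_lossless_iterate (n : ℕ) :
    ∃ x ≠ fun _ => none, ∀ t < 43 ^ n, Lossless (particleCA^[t] x) := by
  induction n with
  | zero =>
    refine ⟨seed, seed_ne_none, fun t ht => ?_⟩
    obtain rfl : t = 0 := by simpa using ht
    exact lossless_seed
  | succ n ih =>
    obtain ⟨x, hx, hlossless⟩ := ih
    refine ⟨encode x, (simulates_encode x).ne_none hx, ?_⟩
    rw [pow_succ']
    exact (simulates_encode x).lossless_iterate hlossless

theorem exists_iterate_particleCA_ne_none (n : ℕ) : ∃ x, particleCA^[n] x ≠ fun _ => none := by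
  obtain ⟨x, hx, hlossless⟩ := exists_lossless_iterate n
  refine ⟨x, ?_⟩
  suffices ∀ t ≤ 43 ^ n, particleCA^[t] x ≠ fun _ => none from
    this n (Nat.lt_pow_self (by decide)).le
  intro t
  induction t with
  | zero => exact fun _ => hx
  | succ t ih =>
    intro ht
    rw [Function.iterate_succ_apply']
    exact (hlossless t ht).particleCA_ne_none (ih (by lia))

end ParticleCA

/-- There exists a non-nilpotent cellular automaton `Φ` with a quiescent
state `B` such that for every `i ∈ ℤ` and every `k ≥ 1`, the cellular automaton
`σ^i ∘ Φ^k` (where `σ^i` is the shift by `i`, `(σ^i y)_j = y_{j+i}`) is uniquely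
ergodic. -/
theorem exists_not_nilpotent_all_shifted_powers_uniquelyErgodic :
    ∃ (m : ℕ) (B : Fin (m + 1)) (Φ : (ℤ → Fin (m + 1)) → (ℤ → Fin (m + 1))),
      Continuous Φ ∧
      (∀ x : ℤ → Fin (m + 1), Φ (fun i => x (i + 1)) = fun i => Φ x (i + 1)) ∧
      Φ (fun _ => B) = (fun _ => B) ∧
      ¬ (∃ n : ℕ, ∀ x : ℤ → Fin (m + 1), Φ^[n] x = fun _ => B) ∧
      (∀ (i : ℤ) (k : ℕ), 1 ≤ k →
        ∃! μ : Measure (ℤ → Fin (m + 1)), IsProbabilityMeasure μ ∧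
          ∀ A : Set (ℤ → Fin (m + 1)), MeasurableSet A →
            μ ((fun x : ℤ → Fin (m + 1) => fun j : ℤ => Φ^[k] x (j + i)) ⁻¹' A)
              = μ A) := by
  open ParticleCA in
  let e : Option Particle ≃ Fin (Fintype.card Particle + 1) := Fintype.equivFinOfCardEq (by simp)
  have hcont := continuous_recode_particleCA e
  refine ⟨_, e none, recode e particleCA, hcont, commute_shift_recode commute_particleCA_shift e,
    recode_particleCA_none e, ?_, fun i k hk => ?_⟩
  · rintro ⟨n, hn⟩
    obtain ⟨x, hx⟩ := exists_iterate_particleCA_ne_none n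
    refine hx (e.injective.comp_left ?_)
    exact ((semiconj_recode e particleCA).iterate_right n x).trans (hn _)
  · have hmeas := ((continuous_shift i).comp (hcont.iterate k)).measurable
    refine (existsUnique_congr fun μ => and_congr_right fun _ => ?_).1
      (uniquelyErgodic_shift_comp_iterate_recode e i (Nat.one_le_iff_ne_zero.1 hk))
    exact measurePreserving_iff_measure_preimage hmeas
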